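/- arXiv:2404.15613 — 5 statements merged into one kernel-verified Lean document; each statement's English description precedes it below -/
import Mathlib

section
/- Let X be a finite type with |X| = N ≥ 1, let δ be a real number with 0 < δ < 1, and let Z be a finite set of functions from X to X. Define K = {x ∈ X : |{g(x) : g ∈ Z}| ≤ (1−δ)·N}. Then, as real numbers, |Z| ≤ N^N · (1−δ)^{|K|}. -/
section

variable {ι R : Type*}

theorem prod_le_prod_mul_prod_of_subset [CommMonoidWithZero R] [PartialOrder R]
    [ZeroLEOneClass R] [PosMulMono R] {s K : Finset ι} (hKs : K ⊆ s) {f g c : ι → R}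
    (hf : ∀ i ∈ s, 0 ≤ f i) (hfg : ∀ i ∈ s, i ∉ K → f i ≤ g i) (hK : ∀ i ∈ K, f i ≤ c i * g i) :
    ∏ i ∈ s, f i ≤ (∏ i ∈ s, g i) * ∏ i ∈ K, c i := by
  classical
  calc
    ∏ i ∈ s, f i ≤ ∏ i ∈ s, g i * (if i ∈ K then c i else 1) := by
      refine Finset.prod_le_prod hf fun i hi => ?_
      split_ifs with hiK
      · exact (hK i hiK).trans_eq (mul_comm _ _)
      · exact (hfg i hi hiK).trans_eq (mul_one _).symm
    _ = (∏ i ∈ s, g i) * ∏ i ∈ K, c i := by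
      rw [Finset.prod_mul_distrib, Finset.prod_ite_mem, Finset.inter_eq_right.mpr hKs]

variable {α : ι → Type*} [Fintype ι] [∀ i, DecidableEq (α i)]

theorem card_le_prod_card_image_eval (Z : Finset (∀ i, α i)) :
    Z.card ≤ ∏ i, (Z.image fun g => g i).card := by
  classical
  rw [← Fintype.card_piFinset]
  refine Finset.card_le_card fun g hg => Fintype.mem_piFinset.mpr fun i => ?_
  exact Finset.mem_image_of_mem (fun g => g i) hg

theorem card_funset_le_of_bad_points_general [∀ i, Fintype (α i)]
    [CommSemiring R] [PartialOrder R] [IsOrderedRing R]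
    (Z : Finset (∀ i, α i)) (K : Finset ι) (c : ι → R)
    (hK : ∀ i ∈ K, ((Z.image fun g => g i).card : R) ≤ c i * Fintype.card (α i)) :
    (Z.card : R) ≤ (∏ i, (Fintype.card (α i) : R)) * ∏ i ∈ K, c i :=
  calc
    (Z.card : R) ≤ ∏ i, ((Z.image fun g => g i).card : R) :=
      (Nat.mono_cast (card_le_prod_card_image_eval Z)).trans_eq (Nat.cast_prod _ _)
    _ ≤ (∏ i, (Fintype.card (α i) : R)) * ∏ i ∈ K, c i :=
      prod_le_prod_mul_prod_of_subset K.subset_univ (fun _ _ => Nat.cast_nonneg _)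
        (fun _ _ _ => Nat.mono_cast (Finset.card_le_univ _)) hK

end

open Classical in
/-- if `K` is the set of "bad" points `x` where the image of the
evaluation map `g ↦ g x` on `Z` has size at most `(1-δ)·N`, then
`|Z| ≤ N^N · (1-δ)^{|K|}`. -/
theorem card_funset_le_of_bad_points {X : Type*} [Fintype X] [DecidableEq X]
    (N : ℕ) (hN : Fintype.card X = N) (hN1 : 1 ≤ N)
    (δ : ℝ) (hδ0 : 0 < δ) (hδ1 : δ < 1)
    (Z : Finset (X → X))
    (K : Finset X)
    (hK : K = Finset.univ.filter
      (fun x : X => ((Z.image fun g => g x).card : ℝ) ≤ (1 - δ) * N)) :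
    (Z.card : ℝ) ≤ (N : ℝ) ^ N * (1 - δ) ^ K.card := by
  subst hN hK
  simpa using card_funset_le_of_bad_points_general Z _ (fun _ => 1 - δ)
    fun _ hx => (Finset.mem_filter.mp hx).2
end

section
/- Let n ≥ 1, N = 2^n, and X = {0,1}^n with bitwise XOR ⊕. Let δ be a real number with 0 < δ < 1, let f : X → Bool satisfy |f⁻¹(true)| ≥ δ·N, and let Z be a nonempty finite set of functions X → X. Define K = {x ∈ X : |{g(x) : g ∈ Z}| ≤ (1−δ)·N}. Then (1) as real numbers, (1−δ)^{|K|} ≥ |Z| / N^N, and (2) for every x ∈ X \ K and every y ∈ X there exists g ∈ Z with f(g(x) ⊕ y) = true. -/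
/-!
A set `Z` of functions lies in the box `∏ x, Z(x)` of its rows, so its density is at most the
product of the densities of its rows: each bad row contributes a factor at most `1 - δ`, every other
row a factor at most `1`. A row of density above `1 - δ` is too large to be moved by a permutation
into the complement of a set of density at least `δ`, and `z ↦ z ⊕ y` is a permutation.
-/

open Finset

namespace WellMixed

theorem dens_piFinset {α : Type*} {β : α → Type*} [Fintype α] [DecidableEq α] [∀ a, Fintype (β a)]
    (s : ∀ a, Finset (β a)) : (Fintype.piFinset s).dens = ∏ a, (s a).dens := by
  simp only [dens, Fintype.card_piFinset, Fintype.card_pi, Nat.cast_prod, prod_div_distrib]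

theorem inter_nonempty_of_one_lt_dens_add_dens {β : Type*} [Fintype β] [DecidableEq β]
    {s t : Finset β} (h : 1 < s.dens + t.dens) : (s ∩ t).Nonempty := by
  contrapose! h
  rw [← dens_union_of_disjoint (disjoint_iff_inter_eq_empty.2 h)]
  exact dens_le_one

section Rows

variable {α : Type*} {β : α → Type*} [∀ a, DecidableEq (β a)]

/-- The row `Z(a)`: the set of values at `a` of the functions in `Z`. -/
def row (Z : Finset (∀ a, β a)) (a : α) : Finset (β a) := Z.image fun g => g a

theorem mem_row {Z : Finset (∀ a, β a)} {a : α} {b : β a} : b ∈ row Z a ↔ ∃ g ∈ Z, g a = b :=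
  mem_image

variable [Fintype α]

theorem subset_piFinset_row [DecidableEq α] (Z : Finset (∀ a, β a)) :
    Z ⊆ Fintype.piFinset (row Z) :=
  fun g hg => Fintype.mem_piFinset.2 fun _ => mem_row.2 ⟨g, hg, rfl⟩

variable [∀ a, Fintype (β a)]

theorem dens_le_prod_dens_row [DecidableEq α] (Z : Finset (∀ a, β a)) :
    Z.dens ≤ ∏ a, (row Z a).dens :=
  (dens_le_dens (subset_piFinset_row Z)).trans_eq (dens_piFinset _)

variable {𝕜 : Type*} [Field 𝕜] [LinearOrder 𝕜]

/-- The set of indices at which the row of `Z` has density at most `c`. For `c = 1 - δ` this is the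
set `K` of bad rows, a threshold on `|Z(a)|` becoming one on `|Z(a)| / |β a|`. -/
def badRows (Z : Finset (∀ a, β a)) (c : 𝕜) : Finset α := {a | ((row Z a).dens : 𝕜) ≤ c}

theorem mem_badRows {Z : Finset (∀ a, β a)} {c : 𝕜} {a : α} :
    a ∈ badRows Z c ↔ ((row Z a).dens : 𝕜) ≤ c := by
  simp only [badRows, mem_filter_univ]

theorem dens_le_pow_card_badRows [IsStrictOrderedRing 𝕜] [DecidableEq α]
    (Z : Finset (∀ a, β a)) (c : 𝕜) : (Z.dens : 𝕜) ≤ c ^ #(badRows Z c) :=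
  calc (Z.dens : 𝕜)
    _ ≤ ∏ a, ((row Z a).dens : 𝕜) := mod_cast dens_le_prod_dens_row Z
    _ ≤ ∏ a ∈ badRows Z c, ((row Z a).dens : 𝕜) :=
      prod_le_prod_of_subset_of_le_one (subset_univ _) (fun _ _ => NNRat.cast_nonneg _)
        fun _ _ _ => mod_cast dens_le_one
    _ ≤ ∏ _a ∈ badRows Z c, c :=
      prod_le_prod (fun _ _ => NNRat.cast_nonneg _) fun _ ha => mem_badRows.1 ha
    _ = c ^ #(badRows Z c) := prod_const c

end Rows

theorem exists_perm_apply_mem_of_notMem_badRows {α β 𝕜 : Type*} [Fintype α] [Fintype β]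
    [DecidableEq β] [Field 𝕜] [LinearOrder 𝕜] [IsStrictOrderedRing 𝕜] {δ : 𝕜} {A : Finset β}
    (hA : δ ≤ A.dens) {Z : Finset (α → β)} {x : α} (hx : x ∉ badRows Z (1 - δ)) (σ : Equiv.Perm β) :
    ∃ g ∈ Z, σ (g x) ∈ A := by
  have row_large : 1 - δ < (row Z x).dens := not_le.1 (mem_badRows.not.1 hx)
  have dens_sum : 1 < ((row Z x).map σ.toEmbedding).dens + A.dens := by
    rw [dens_map_equiv, ← NNRat.cast_lt (K := 𝕜), NNRat.cast_one, NNRat.cast_add]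
    linarith
  obtain ⟨b, hb⟩ := inter_nonempty_of_one_lt_dens_add_dens dens_sum
  obtain ⟨hb_row, hbA⟩ := mem_inter.1 hb
  obtain ⟨_, hz, rfl⟩ := mem_map.1 hb_row
  obtain ⟨g, hg, rfl⟩ := mem_row.1 hz
  exact ⟨g, hg, hbA⟩

section Cube

variable {n : ℕ}

theorem cast_dens_cube (s : Finset (Fin n → Bool)) : (s.dens : ℝ) = #s / 2 ^ n := by
  simp [nnratCast_dens]

theorem le_cast_dens_cube_iff {s : Finset (Fin n → Bool)} {c : ℝ} :
    c ≤ s.dens ↔ c * 2 ^ n ≤ #s := by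
  rw [cast_dens_cube, le_div_iff₀ (by positivity)]

theorem cast_dens_cube_functions (Z : Finset ((Fin n → Bool) → (Fin n → Bool))) :
    (Z.dens : ℝ) = #Z / ((2 : ℝ) ^ n) ^ (2 ^ n : ℕ) := by
  simp [nnratCast_dens]

theorem badRows_cube (Z : Finset ((Fin n → Bool) → (Fin n → Bool))) (c : ℝ) :
    badRows Z c = ({x | (#(Z.image fun g => g x) : ℝ) ≤ c * 2 ^ n} : Finset (Fin n → Bool)) := by
  ext x
  rw [mem_badRows, mem_filter_univ, cast_dens_cube, div_le_iff₀ (by positivity), row]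

/-- Translation `z ↦ z ⊕ y` of the cube `{0,1}^n`, as a permutation. Addition in `Bool` is `xor`. -/
def xorPerm (y : Fin n → Bool) : Equiv.Perm (Fin n → Bool) := Equiv.addRight y

theorem xorPerm_apply (y z : Fin n → Bool) : xorPerm y z = fun i => xor (z i) (y i) := rfl

end Cube

end WellMixed

open WellMixed

theorem well_mixed_all_functions_general {α β 𝕜 : Type*} [Fintype α] [DecidableEq α]
    [Fintype β] [DecidableEq β] [Field 𝕜] [LinearOrder 𝕜] [IsStrictOrderedRing 𝕜] {δ : 𝕜}
    {A : Finset β} (hA : δ ≤ A.dens) (Z : Finset (α → β)) :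
    (Z.dens : 𝕜) ≤ (1 - δ) ^ #(badRows Z (1 - δ)) ∧
      ∀ x ∉ badRows Z (1 - δ), ∀ σ : Equiv.Perm β, ∃ g ∈ Z, σ (g x) ∈ A :=
  ⟨dens_le_pow_card_badRows Z _, fun _ => exists_perm_apply_mem_of_notMem_badRows hA⟩

open Classical in
/-- Lemma 3.2: the collection of all functions `{0,1}^n → {0,1}^n`
is well-mixed for any `f` with `|f⁻¹(true)| ≥ δ·2^n`.  With
`K = {x : |Z(x)| ≤ (1-δ)·N}` we have (1) `(1-δ)^{|K|} ≥ |Z| / N^N` and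
(2) for every `x ∉ K` and every `y` there is `g ∈ Z` with `f (g x ⊕ y) = true`. -/
theorem well_mixed_all_functions (n : ℕ) (hn : 1 ≤ n)
    (δ : ℝ) (hδ0 : 0 < δ) (hδ1 : δ < 1)
    (f : (Fin n → Bool) → Bool)
    (hf : δ * 2 ^ n ≤ ((Finset.univ.filter fun x : Fin n → Bool => f x = true).card : ℝ))
    (Z : Finset ((Fin n → Bool) → (Fin n → Bool))) (hZ : Z.Nonempty)
    (K : Finset (Fin n → Bool))
    (hK : K = Finset.univ.filter
      (fun x : Fin n → Bool => ((Z.image fun g => g x).card : ℝ) ≤ (1 - δ) * 2 ^ n)) :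
    ((Z.card : ℝ) / ((2 : ℝ) ^ n) ^ (2 ^ n : ℕ) ≤ (1 - δ) ^ K.card) ∧
    (∀ x : Fin n → Bool, x ∉ K → ∀ y : Fin n → Bool,
      ∃ g ∈ Z, f (fun i => xor (g x i) (y i)) = true) := by
  rw [← cast_dens_cube_functions, hK, ← badRows_cube]
  refine (well_mixed_all_functions_general (le_cast_dens_cube_iff.2 hf) Z).imp_right ?_
  intro hits x hx y
  simpa only [xorPerm_apply, mem_filter_univ] using hits x hx (xorPerm y)
end

section
/- There exists n₀ such that for all n ≥ n₀ the following holds. Let f : {0,1}^n → {0,1} be a non-constant function with |f⁻¹(1)| ≥ 2^n / 4. Then there exists a function g : {0,1}^n → {0,1}^n such that for every real number α with 0 < α < 1 + (log₂ L(f) − 2·log₂ log₂ n)/n, there do NOT exist k ≤ 2^{α·n} Boolean functions h_1, …, h_k : {0,1}^n × {0,1}^n → {0,1}, each with L(h_i) ≤ 2^{(n + log₂ L(f) − α·n − 2·log₂ log₂ n)/2}, whose pointwise AND equals f⊞g. -/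
/-- A De Morgan formula over variables indexed by `ι`: leaves are literals
(`b = true` for `x i`, `b = false` for `¬ x i`), internal gates are binary
AND/OR gates. -/
inductive DMF (ι : Type) : Type
  | leaf (i : ι) (b : Bool) : DMF ι
  | and (φ ψ : DMF ι) : DMF ι
  | or (φ ψ : DMF ι) : DMF ι

namespace DMF

/-- Evaluation of a De Morgan formula on an assignment. -/
def eval {ι : Type} : DMF ι → (ι → Bool) → Bool
  | leaf i b, x => if b then x i else !(x i)
  | and φ ψ, x => φ.eval x && ψ.eval x
  | or φ ψ, x => φ.eval x || ψ.eval x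

/-- The size of a formula is its number of leaves. -/
def size {ι : Type} : DMF ι → ℕ
  | leaf _ _ => 1
  | and φ ψ => φ.size + ψ.size
  | or φ ψ => φ.size + ψ.size

/-- The depth of a formula: maximum number of edges on a root-to-leaf path. -/
def depth {ι : Type} : DMF ι → ℕ
  | leaf _ _ => 0
  | and φ ψ => max φ.depth ψ.depth + 1
  | or φ ψ => max φ.depth ψ.depth + 1

/-- `topAnd φ r` holds iff every gate of `φ` at distance less than `r` from the
root is an AND gate. -/
def topAnd {ι : Type} : DMF ι → ℝ → Prop
  | leaf _ _, _ => True
  | and φ ψ, r => φ.topAnd (r - 1) ∧ ψ.topAnd (r - 1)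
  | or φ ψ, r => r ≤ 0 ∧ φ.topAnd (r - 1) ∧ ψ.topAnd (r - 1)

end DMF

open Classical in
/-- Formula complexity `L(h)`: the minimum number of leaves of a De Morgan
formula computing `h`, with the convention `L(h) = 0` for constant `h`. -/
noncomputable def Lc {ι : Type} (h : (ι → Bool) → Bool) : ℕ :=
  if ∃ c, ∀ x, h x = c then 0
  else sInf {s | ∃ φ : DMF ι, φ.size = s ∧ ∀ x, φ.eval x = h x}

/-- Formula complexity of a Boolean function of two `n`-bit arguments, viewing
the pair of arguments as a single assignment to `2n` variables. -/
noncomputable def Lc2 {n : ℕ} (h : (Fin n → Bool) → (Fin n → Bool) → Bool) : ℕ :=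
  Lc (fun z : (Fin n ⊕ Fin n) → Bool => h (z ∘ Sum.inl) (z ∘ Sum.inr))

/-- The measure `μ(h) = Σ_x L(h^x)` where `h^x = h(x,·)`. -/
noncomputable def mu {n : ℕ} (h : (Fin n → Bool) → (Fin n → Bool) → Bool) : ℕ :=
  ∑ x : Fin n → Bool, Lc (fun y => h x y)

/-!
Choose `g` at random. If `φ` has `r` rows that are not constantly true, then `f ⊞ g ≤ φ` holds with
probability at most `(1 - δ) ^ r`, where `δ` is the density of `f⁻¹(1)`: a row of `φ` that vanishes
at `y` forces `f (g x ⊕ y) = 0`. Since `∑ q ^ size φ < 1` for small `q`, a union bound over all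
formulas yields a `g` such that every formula of size `s` above `f ⊞ g` has fewer than `t * s`
nontrivial rows. Hence `μ(h) < t * L(h) ^ 2` for every `h ≥ f ⊞ g` with `μ(h) ≠ 0`. On the other
hand `μ(f ⊞ g) = 2 ^ n * L(f)` and `μ` is subadditive under AND, so if `f ⊞ g` is the AND of
`h₁, …, hₖ` then `2 ^ n * L(f) < t * ∑ i, L(hᵢ) ^ 2`. The theorem is the case `t = (log₂ n) ^ 2`.
-/

open Finset Filter
open scoped symmDiff

theorem finset_inf_eq_true {I : Type*} {s : Finset I} {b : I → Bool} :
    s.inf b = true ↔ ∀ i ∈ s, b i = true :=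
  Finset.inf_eq_top_iff b s

theorem finset_sup_eq_true {I : Type*} {s : Finset I} {b : I → Bool} :
    s.sup b = true ↔ ∃ i ∈ s, b i = true := by
  have : ⊤ ≤ s.sup b ↔ ∃ i ∈ s, ⊤ ≤ b i := Finset.le_sup_iff bot_lt_top
  simp only [top_le_iff] at this
  exact this

namespace DMF

variable {ι κ : Type}

theorem eval_leaf_eq_true {i : ι} {b : Bool} {x : ι → Bool} :
    (leaf i b).eval x = true ↔ x i = b := by
  cases b <;> simp [eval]

theorem size_pos (φ : DMF ι) : 0 < φ.size := by
  induction φ with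
  | leaf => exact Nat.one_pos
  | and _ _ hφ _ => exact Nat.add_pos_left hφ _
  | or _ _ hφ _ => exact Nat.add_pos_left hφ _

theorem bot_mem_range_eval [Nonempty ι] : ⊥ ∈ Set.range (eval : DMF ι → _) := by
  inhabit ι
  exact ⟨(leaf default true).and (leaf default false), by ext x; simp [eval]⟩

theorem top_mem_range_eval [Nonempty ι] : ⊤ ∈ Set.range (eval : DMF ι → _) := by
  inhabit ι
  exact ⟨(leaf default true).or (leaf default false), by ext x; simp [eval]⟩

theorem eval_surjective [Finite ι] [Nonempty ι] : Function.Surjective (eval : DMF ι → _) := by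
  classical
  cases nonempty_fintype ι
  intro h
  have dnf : h = ({a | h a = true} : Finset (ι → Bool)).sup
      fun a => univ.inf fun j => (leaf j (a j)).eval := by
    ext x
    rw [Bool.eq_iff_iff]
    simp [Finset.sup_apply, Finset.inf_apply, finset_sup_eq_true, finset_inf_eq_true,
      eval_leaf_eq_true, ← funext_iff]
  rw [dnf]
  refine sup_induction (p := (· ∈ Set.range eval)) bot_mem_range_eval ?_ fun a _ =>
    inf_induction top_mem_range_eval ?_ fun j _ => ⟨_, rfl⟩
  · rintro _ ⟨φ, rfl⟩ _ ⟨ψ, rfl⟩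
    exact ⟨φ.or ψ, rfl⟩
  · rintro _ ⟨φ, rfl⟩ _ ⟨ψ, rfl⟩
    exact ⟨φ.and ψ, rfl⟩

/-- The decomposition of formulas according to their root: a literal, an AND gate or an OR gate. -/
def rootEquiv : (ι × Bool) ⊕ (DMF ι × DMF ι) ⊕ (DMF ι × DMF ι) ≃ DMF ι where
  toFun := Sum.elim (fun p => leaf p.1 p.2) (Sum.elim (fun p => and p.1 p.2) fun p => or p.1 p.2)
  invFun
    | leaf i b => .inl (i, b)
    | and φ ψ => .inr (.inl (φ, ψ))
    | or φ ψ => .inr (.inr (φ, ψ))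
  left_inv := by rintro (_ | _ | _) <;> rfl
  right_inv := by rintro (_ | _ | _) <;> rfl

/-- The finite set of formulas of depth less than `d`. -/
def depthLT [Fintype ι] : ℕ → Finset (DMF ι)
  | 0 => ∅
  | d + 1 => (univ.disjSum ((depthLT d ×ˢ depthLT d).disjSum (depthLT d ×ˢ depthLT d))).map
      rootEquiv.toEmbedding

theorem mem_depthLT [Fintype ι] {φ : DMF ι} {d : ℕ} : φ ∈ depthLT d ↔ φ.depth < d := by
  induction d generalizing φ with
  | zero => simp [depthLT]
  | succ d ih => cases φ <;> simp [depthLT, mem_map_equiv, rootEquiv, depth, ih]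

theorem sum_pow_size_depthLT_succ [Fintype ι] (q : ℝ) (d : ℕ) :
    ∑ φ ∈ depthLT (d + 1), q ^ (φ : DMF ι).size
      = 2 * Fintype.card ι * q + 2 * (∑ φ ∈ depthLT d, q ^ (φ : DMF ι).size) ^ 2 := by
  simp only [depthLT, sum_map, sum_disjSum, sum_product, Equiv.coe_toEmbedding, rootEquiv,
    Equiv.coe_fn_mk, Sum.elim_inl, Sum.elim_inr, size, pow_add, ← mul_sum, ← sum_mul, pow_one,
    sum_const, card_univ, Fintype.card_prod, Fintype.card_bool, nsmul_eq_mul, Nat.cast_mul]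
  push_cast
  ring

-- The recursion preserves the bound `w = 4 * |ι| * q` because `2 * |ι| * q + 2 * w ^ 2 ≤ w` amounts
-- to `16 * |ι| * q ≤ 1`.
theorem sum_pow_size_depthLT_le [Fintype ι] {q : ℝ} (hq : 0 ≤ q)
    (hιq : 16 * Fintype.card ι * q ≤ 1) (d : ℕ) :
    ∑ φ ∈ depthLT d, q ^ (φ : DMF ι).size ≤ 4 * Fintype.card ι * q := by
  induction d with
  | zero => simp only [depthLT, sum_empty]; positivity
  | succ d ih =>
    rw [sum_pow_size_depthLT_succ]
    calc _ ≤ 2 * Fintype.card ι * q + 2 * (4 * Fintype.card ι * q) ^ 2 := by gcongr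
      _ = 2 * Fintype.card ι * q + 2 * Fintype.card ι * q * (16 * Fintype.card ι * q) := by ring
      _ ≤ 2 * Fintype.card ι * q + 2 * Fintype.card ι * q * 1 := by gcongr
      _ = 4 * Fintype.card ι * q := by ring

theorem sum_pow_size_le [Fintype ι] {q : ℝ} (hq : 0 ≤ q) (hιq : 16 * Fintype.card ι * q ≤ 1)
    (S : Finset (DMF ι)) : ∑ φ ∈ S, q ^ φ.size ≤ 4 * Fintype.card ι * q := by
  refine le_trans ?_ (sum_pow_size_depthLT_le hq hιq (S.sup depth + 1))
  refine sum_le_sum_of_subset_of_nonneg (fun φ hφ => ?_) fun φ _ _ => by positivity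
  exact mem_depthLT.2 (Nat.lt_succ_of_le (le_sup hφ))

/-- The two-argument function computed by a formula on two disjoint groups of variables. -/
def eval₂ (φ : DMF (ι ⊕ κ)) : (ι → Bool) → (κ → Bool) → Bool :=
  fun x y => φ.eval (Sum.elim x y)

end DMF

section FormulaComplexity

variable {ι κ : Type}

theorem Lc_le_size (φ : DMF ι) : Lc φ.eval ≤ φ.size := by
  unfold Lc
  split_ifs
  · exact Nat.zero_le _
  · exact Nat.sInf_le ⟨φ, rfl, fun _ => rfl⟩

theorem Lc_eq_zero_of_const {h : (ι → Bool) → Bool} (hc : ∃ c, ∀ x, h x = c) : Lc h = 0 :=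
  if_pos hc

theorem Lc_bot : Lc (⊥ : (ι → Bool) → Bool) = 0 := Lc_eq_zero_of_const ⟨false, fun _ => rfl⟩

theorem Lc_top : Lc (⊤ : (ι → Bool) → Bool) = 0 := Lc_eq_zero_of_const ⟨true, fun _ => rfl⟩

theorem eq_bot_or_eq_top_of_const {h : (ι → Bool) → Bool} (hc : ∃ c, ∀ x, h x = c) :
    h = ⊥ ∨ h = ⊤ := by
  obtain ⟨_ | _, hc⟩ := hc
  exacts [.inl (funext hc), .inr (funext hc)]

theorem exists_eval_eq_size_eq_Lc [Finite ι] {h : (ι → Bool) → Bool}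
    (hc : ¬ ∃ c, ∀ x, h x = c) : ∃ φ : DMF ι, φ.eval = h ∧ φ.size = Lc h := by
  have : Nonempty ι := by
    contrapose! hc
    exact ⟨h default, fun x => congrArg h (Subsingleton.elim _ _)⟩
  obtain ⟨φ, rfl⟩ := DMF.eval_surjective h
  obtain ⟨ψ, hsize, heval⟩ :=
    Nat.sInf_mem (s := {s | ∃ ψ : DMF ι, ψ.size = s ∧ ∀ x, ψ.eval x = φ.eval x})
      ⟨_, φ, rfl, fun _ => rfl⟩
  exact ⟨ψ, funext heval, hsize.trans (if_neg hc).symm⟩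

theorem Lc_pos [Finite ι] {h : (ι → Bool) → Bool} (hc : ¬ ∃ c, ∀ x, h x = c) : 0 < Lc h := by
  obtain ⟨φ, -, hsize⟩ := exists_eval_eq_size_eq_Lc hc
  exact hsize ▸ φ.size_pos

theorem Lc_inf_le [Finite ι] (a b : (ι → Bool) → Bool) : Lc (a ⊓ b) ≤ Lc a + Lc b := by
  by_cases ha : ∃ c, ∀ x, a x = c
  · obtain rfl | rfl := eq_bot_or_eq_top_of_const ha <;> simp [Lc_bot]
  by_cases hb : ∃ c, ∀ x, b x = c
  · obtain rfl | rfl := eq_bot_or_eq_top_of_const hb <;> simp [Lc_bot]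
  obtain ⟨φ, rfl, hφ⟩ := exists_eval_eq_size_eq_Lc ha
  obtain ⟨ψ, rfl, hψ⟩ := exists_eval_eq_size_eq_Lc hb
  exact hφ ▸ hψ ▸ Lc_le_size (φ.and ψ)

theorem Lc_sup_le [Finite ι] (a b : (ι → Bool) → Bool) : Lc (a ⊔ b) ≤ Lc a + Lc b := by
  by_cases ha : ∃ c, ∀ x, a x = c
  · obtain rfl | rfl := eq_bot_or_eq_top_of_const ha <;> simp [Lc_top]
  by_cases hb : ∃ c, ∀ x, b x = c
  · obtain rfl | rfl := eq_bot_or_eq_top_of_const hb <;> simp [Lc_top]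
  obtain ⟨φ, rfl, hφ⟩ := exists_eval_eq_size_eq_Lc ha
  obtain ⟨ψ, rfl, hψ⟩ := exists_eval_eq_size_eq_Lc hb
  exact hφ ▸ hψ ▸ Lc_le_size (φ.or ψ)

theorem Lc_finset_inf_le [Finite ι] {I : Type*} (s : Finset I) (h : I → (ι → Bool) → Bool) :
    Lc (s.inf h) ≤ ∑ i ∈ s, Lc (h i) := by
  classical
  induction s using Finset.induction_on with
  | empty => simp [Lc_top]
  | insert i s hi ih =>
    rw [inf_insert, sum_insert hi]
    exact (Lc_inf_le _ _).trans (Nat.add_le_add_left ih _)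

theorem Lc_comp_le [Finite ι] [Finite κ] (h : (ι → Bool) → Bool) {σ : (κ → Bool) → ι → Bool}
    (hσ : ∀ i b, Lc ((DMF.leaf i b).eval ∘ σ) ≤ 1) : Lc (h ∘ σ) ≤ Lc h := by
  by_cases hc : ∃ c, ∀ x, h x = c
  · obtain ⟨c, hc⟩ := hc
    simp [Lc_eq_zero_of_const (h := h ∘ σ) ⟨c, fun y => hc (σ y)⟩]
  obtain ⟨φ, rfl, hsize⟩ := exists_eval_eq_size_eq_Lc hc
  rw [← hsize]
  clear hc hsize
  induction φ with
  | leaf i b => exact hσ i b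
  | and φ ψ hφ hψ => exact (Lc_inf_le _ _).trans (Nat.add_le_add hφ hψ)
  | or φ ψ hφ hψ => exact (Lc_sup_le _ _).trans (Nat.add_le_add hφ hψ)

theorem Lc_symmDiff [Finite ι] (f : (ι → Bool) → Bool) (c : ι → Bool) :
    Lc (fun y => f (c ∆ y)) = Lc f := by
  have le (f : (ι → Bool) → Bool) : Lc (fun y => f (c ∆ y)) ≤ Lc f := by
    refine Lc_comp_le f fun i b => ?_
    convert Lc_le_size (DMF.leaf i (xor (c i) b)) using 2
    · ext y
      rw [Bool.eq_iff_iff, Function.comp_apply, DMF.eval_leaf_eq_true, DMF.eval_leaf_eq_true,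
        Pi.symmDiff_apply]
      cases c i <;> cases b <;> simp
    · rfl
  refine (le f).antisymm ?_
  simpa only [symmDiff_symmDiff_cancel_left] using le fun y => f (c ∆ y)

theorem Lc_sumElim_le [Finite ι] [Finite κ] (h : (ι ⊕ κ → Bool) → Bool) (x : ι → Bool) :
    Lc (fun y => h (Sum.elim x y)) ≤ Lc h := by
  refine Lc_comp_le h fun i b => ?_
  cases i with
  | inl i =>
    have hc : ∃ c, ∀ y : κ → Bool, ((DMF.leaf (Sum.inl i) b).eval ∘ Sum.elim x) y = c :=
      ⟨(DMF.leaf i b).eval x, fun _ => rfl⟩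
    exact (Lc_eq_zero_of_const hc).trans_le zero_le_one
  | inr j => exact Lc_le_size (DMF.leaf j b)

end FormulaComplexity

section Mu

variable {n : ℕ}

theorem Lc_le_Lc2 (h : (Fin n → Bool) → (Fin n → Bool) → Bool) (x : Fin n → Bool) :
    Lc (h x) ≤ Lc2 h :=
  Lc_sumElim_le (fun z => h (z ∘ Sum.inl) (z ∘ Sum.inr)) x

theorem mu_le (h : (Fin n → Bool) → (Fin n → Bool) → Bool) :
    mu h ≤ #{x | h x ≠ ⊤} * Lc2 h := by
  rw [← smul_eq_mul, ← sum_const, sum_filter]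
  refine sum_le_sum fun x _ => ?_
  split_ifs with hx
  · exact Lc_le_Lc2 h x
  · rw [not_not.1 hx]
    exact Lc_top.le

theorem mu_finset_inf_le {I : Type*} (s : Finset I)
    (h : I → (Fin n → Bool) → (Fin n → Bool) → Bool) : mu (s.inf h) ≤ ∑ i ∈ s, mu (h i) := by
  unfold mu
  rw [sum_comm]
  refine sum_le_sum fun x _ => ?_
  change Lc (s.inf h x) ≤ ∑ i ∈ s, Lc (h i x)
  rw [Finset.inf_apply]
  exact Lc_finset_inf_le s fun i => h i x

end Mu

section XorComposition

/-- The XOR composition `f ⊞ g`; bitwise XOR is the symmetric difference `∆` of the Boolean algebra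
`κ → Bool`. The domain `X` of `g` is arbitrary. -/
def xorComp {X : Type*} {κ : Type} (f : (κ → Bool) → Bool) (g : X → κ → Bool) :
    X → (κ → Bool) → Bool :=
  fun x y => f (g x ∆ y)

theorem xor_eq_symmDiff {κ : Type} (u v : κ → Bool) : (fun j => xor (u j) (v j)) = u ∆ v := by
  ext j
  simp [Pi.symmDiff_apply]

theorem xorComp_eq_inf_iff {X I : Type*} [Fintype I] {κ : Type} {f : (κ → Bool) → Bool}
    {g : X → κ → Bool} {h : I → X → (κ → Bool) → Bool} :
    xorComp f g = univ.inf h ↔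
      ∀ x y, f (fun j => xor (g x j) (y j)) = true ↔ ∀ i, h i x y = true := by
  simp only [funext_iff]
  refine forall₂_congr fun x y => ?_
  rw [xorComp, ← xor_eq_symmDiff, Bool.eq_iff_iff, Finset.inf_apply, Finset.inf_apply,
    finset_inf_eq_true]
  simp only [mem_univ, true_imp_iff]

theorem mu_xorComp {n : ℕ} (f : (Fin n → Bool) → Bool) (g : (Fin n → Bool) → Fin n → Bool) :
    mu (xorComp f g) = 2 ^ n * Lc f := by
  simp [mu, xorComp, Lc_symmDiff]

/-- A two-argument function `F` forces trivial rows at rate `t` if every formula of size `s` that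
accepts all of `F⁻¹(1)` is constantly true on all but fewer than `t * s` of the rows `x`. -/
def ForcesTrivialRows {ι κ : Type} [Fintype ι] [DecidableEq ι] [Fintype κ] [DecidableEq κ]
    (F : (ι → Bool) → (κ → Bool) → Bool) (t : ℝ) : Prop :=
  ∀ φ : DMF (ι ⊕ κ), F ≤ φ.eval₂ → (#{x | φ.eval₂ x ≠ ⊤} : ℝ) < t * φ.size

variable {κ : Type} [Fintype κ] [DecidableEq κ] {f : (κ → Bool) → Bool} {δ : ℝ}

theorem le_one_of_mul_two_pow_le_card (hcard : δ * 2 ^ Fintype.card κ ≤ #{v | f v = true}) :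
    δ ≤ 1 := by
  refine le_of_mul_le_mul_right (hcard.trans ?_) (by positivity : (0 : ℝ) < 2 ^ Fintype.card κ)
  rw [one_mul]
  exact_mod_cast (card_le_univ _).trans_eq (by simp)

open Classical in
theorem card_symmDiff_le_of_ne_top (hcard : δ * 2 ^ Fintype.card κ ≤ #{v | f v = true})
    {r : (κ → Bool) → Bool} (hr : r ≠ ⊤) :
    (#{v | (fun y => f (v ∆ y)) ≤ r} : ℝ) ≤ 2 ^ Fintype.card κ * (1 - δ) := by
  obtain ⟨y, hy⟩ := Function.ne_iff.1 hr
  have card_le : #{v | (fun y => f (v ∆ y)) ≤ r} ≤ #{v | ¬ f v = true} := by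
    refine card_le_card_of_injOn (· ∆ y) (fun v hv => ?_) (symmDiff_left_injective y).injOn
    simp only [coe_filter, mem_univ, true_and, Set.mem_ofPred_eq] at hv ⊢
    exact fun hvy => hy (top_le_iff.1 (hvy.symm.trans_le (hv y)))
  have card_add : (#{v | f v = true} : ℝ) + #{v | ¬ f v = true} = 2 ^ Fintype.card κ := by
    exact_mod_cast (card_filter_add_card_filter_not _).trans (by simp)
  have : (#{v | (fun y => f (v ∆ y)) ≤ r} : ℝ) ≤ #{v | ¬ f v = true} := mod_cast card_le
  linarith

open Classical in
theorem card_xorComp_le {X : Type*} [Fintype X] [DecidableEq X]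
    (hcard : δ * 2 ^ Fintype.card κ ≤ #{v | f v = true}) (h : X → (κ → Bool) → Bool) :
    (#{g | xorComp f g ≤ h} : ℝ)
      ≤ (2 ^ Fintype.card κ) ^ Fintype.card X * (1 - δ) ^ #{x | h x ≠ ⊤} := by
  have h_pi : ({g | xorComp f g ≤ h} : Finset (X → κ → Bool))
      = Fintype.piFinset fun x => {v | (fun y => f (v ∆ y)) ≤ h x} := by
    ext g
    simp [xorComp, Pi.le_def]
  have row_le (x : X) : (#{v | (fun y => f (v ∆ y)) ≤ h x} : ℝ)
      ≤ 2 ^ Fintype.card κ * if h x ≠ ⊤ then 1 - δ else 1 := by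
    split_ifs with hx
    · exact card_symmDiff_le_of_ne_top hcard hx
    · rw [mul_one]
      exact_mod_cast (card_le_univ _).trans_eq (by simp)
  rw [h_pi, Fintype.card_piFinset, Nat.cast_prod]
  refine (prod_le_prod (fun _ _ => by positivity) fun x _ => row_le x).trans_eq ?_
  rw [prod_mul_distrib, prod_ite]
  simp

theorem exists_forcesTrivialRows_xorComp {ι : Type} [Fintype ι] [DecidableEq ι] {t : ℝ}
    (hδ : 0 ≤ δ) (ht : 0 ≤ t) (hδt : 16 * Fintype.card (ι ⊕ κ) * (1 - δ) ^ t ≤ 1)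
    (hcard : δ * 2 ^ Fintype.card κ ≤ #{v | f v = true}) :
    ∃ g : (ι → Bool) → κ → Bool, ForcesTrivialRows (xorComp f g) t := by
  classical
  have hδ' : 0 ≤ 1 - δ := sub_nonneg.2 (le_one_of_mul_two_pow_le_card hcard)
  unfold ForcesTrivialRows
  by_contra! hbad
  choose Φ hle hrows using hbad
  set M : ℝ := (2 ^ Fintype.card κ) ^ Fintype.card (ι → Bool)
  have hM : 0 < M := by positivity
  have card_le (φ) (hφ : φ ∈ univ.image Φ) :
      (#{g | xorComp f g ≤ φ.eval₂} : ℝ) ≤ M * ((1 - δ) ^ t) ^ φ.size := by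
    obtain ⟨g, -, rfl⟩ := mem_image.1 hφ
    refine (card_xorComp_le hcard _).trans ?_
    gcongr
    rw [← Real.rpow_natCast, ← Real.rpow_mul_natCast hδ']
    exact Real.rpow_le_rpow_of_exponent_ge' hδ' (by linarith) (by positivity) (hrows g)
  have cover : (univ : Finset ((ι → Bool) → κ → Bool))
      ⊆ (univ.image Φ).biUnion fun φ => {g | xorComp f g ≤ φ.eval₂} :=
    fun g _ => mem_biUnion.2 ⟨Φ g, mem_image_of_mem _ (mem_univ g), by simpa using hle g⟩
  have : M < M := calc
    M = #(univ : Finset ((ι → Bool) → κ → Bool)) := by simp [M]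
    _ ≤ ∑ φ ∈ univ.image Φ, (#{g | xorComp f g ≤ φ.eval₂} : ℝ) :=
      mod_cast (card_le_card cover).trans card_biUnion_le
    _ ≤ ∑ φ ∈ univ.image Φ, M * ((1 - δ) ^ t) ^ φ.size := sum_le_sum card_le
    _ ≤ M * (4 * Fintype.card (ι ⊕ κ) * (1 - δ) ^ t) := by
      rw [← mul_sum]
      exact mul_le_mul_of_nonneg_left (DMF.sum_pow_size_le (by positivity) hδt _) hM.le
    _ < M := mul_lt_of_lt_one_right hM (by linarith)
  exact this.false

end XorComposition

section LowerBound

variable {n : ℕ} {F h : (Fin n → Bool) → (Fin n → Bool) → Bool} {t : ℝ}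

theorem ForcesTrivialRows.mu_lt (hF : ForcesTrivialRows F t) (hFh : F ≤ h) (hμ : mu h ≠ 0) :
    (mu h : ℝ) < t * (Lc2 h : ℝ) ^ 2 := by
  have hLc2 : Lc2 h ≠ 0 := fun h0 => hμ (by simpa [h0] using mu_le h)
  obtain ⟨φ, heval, hsize⟩ := exists_eval_eq_size_eq_Lc fun hc => hLc2 (Lc_eq_zero_of_const hc)
  have heval₂ : φ.eval₂ = h := by
    ext x y
    simp [DMF.eval₂, heval]
  have hrows := hF φ (heval₂ ▸ hFh)
  rw [heval₂, hsize] at hrows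
  calc (mu h : ℝ) ≤ #{x | h x ≠ ⊤} * Lc2 h := mod_cast mu_le h
    _ < t * Lc2 h * Lc2 h := by
      gcongr
      exact hrows
    _ = t * (Lc2 h : ℝ) ^ 2 := by ring

theorem ForcesTrivialRows.mu_lt_sum {I : Type*} {s : Finset I}
    {h : I → (Fin n → Bool) → (Fin n → Bool) → Bool}
    (hF : ForcesTrivialRows (s.inf h) t) (ht : 0 ≤ t) (hμ : mu (s.inf h) ≠ 0) :
    (mu (s.inf h) : ℝ) < t * ∑ i ∈ s, (Lc2 (h i) : ℝ) ^ 2 := by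
  have lt (i) (hi : i ∈ s) := hF.mu_lt (inf_le hi : s.inf h ≤ h i)
  have mu_le_sum := mu_finset_inf_le s h
  obtain ⟨i, hi, hμi⟩ := exists_ne_zero_of_sum_ne_zero (by omega : ∑ i ∈ s, mu (h i) ≠ 0)
  calc (mu (s.inf h) : ℝ) ≤ ∑ i ∈ s, (mu (h i) : ℝ) := mod_cast mu_le_sum
    _ < ∑ i ∈ s, t * (Lc2 (h i) : ℝ) ^ 2 := by
      refine sum_lt_sum (fun i hi => ?_) ⟨i, hi, lt i hi hμi⟩
      by_cases h0 : mu (h i) = 0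
      · rw [h0, Nat.cast_zero]; positivity
      · exact (lt i hi h0).le
    _ = t * ∑ i ∈ s, (Lc2 (h i) : ℝ) ^ 2 := (mul_sum _ _ _).symm

end LowerBound

theorem mul_two_rpow_half_sq {L t : ℝ} (hL : 0 < L) (ht : 0 < t) (a b : ℝ) :
    t * (2 ^ a * ((2 : ℝ) ^ ((b + Real.logb 2 L - a - Real.logb 2 t) / 2)) ^ 2) = 2 ^ b * L := by
  rw [← Real.rpow_mul_natCast zero_le_two, Nat.cast_ofNat, div_mul_cancel₀ _ two_ne_zero,
    Real.rpow_sub two_pos, Real.rpow_sub two_pos, Real.rpow_add two_pos,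
    Real.rpow_logb two_pos (by norm_num) hL, Real.rpow_logb two_pos (by norm_num) ht]
  field_simp

theorem eventually_mul_rpow_logb_sq_le_one {p : ℝ} (hp₀ : 0 < p) (hp₁ : p < 1) (C : ℝ) :
    ∀ᶠ x : ℝ in atTop, C * x * p ^ Real.logb 2 x ^ 2 ≤ 1 := by
  have hpow : ∀ᶠ x : ℝ in atTop, p ^ Real.logb 2 x ≤ 1 / 4 :=
    (Real.tendsto_logb_atTop one_lt_two).eventually <|
      (tendsto_rpow_atTop_of_base_lt_one p (by linarith) hp₁).eventually_le_const (by norm_num)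
  filter_upwards [hpow, eventually_ge_atTop |C|, eventually_ge_atTop 1] with x hx hCx hx₁
  have hx₀ : 0 < x := by linarith
  have hsq : p ^ Real.logb 2 x ^ 2 ≤ (x ^ 2)⁻¹ := calc
    p ^ Real.logb 2 x ^ 2 = (p ^ Real.logb 2 x) ^ Real.logb 2 x := by
      rw [← Real.rpow_mul hp₀.le, sq]
    _ ≤ (1 / 4) ^ Real.logb 2 x :=
      Real.rpow_le_rpow (by positivity) hx (Real.logb_nonneg one_lt_two hx₁)
    _ = (((2 : ℝ) ^ Real.logb 2 x) ^ 2)⁻¹ := by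
      rw [← Real.rpow_mul_natCast zero_le_two, mul_comm, Real.rpow_natCast_mul zero_le_two,
        ← Real.inv_rpow (by positivity)]
      norm_num
    _ = (x ^ 2)⁻¹ := by rw [Real.rpow_logb two_pos (by norm_num) hx₀]
  calc C * x * p ^ Real.logb 2 x ^ 2 ≤ x * x * (x ^ 2)⁻¹ := by
        gcongr
        exact (le_abs_self C).trans hCx
    _ = 1 := by field_simp

theorem xor_composition_theorem_general {n : ℕ} {δ t : ℝ} (hδ : 0 ≤ δ) (ht : 0 < t)
    (hδt : 32 * n * (1 - δ) ^ t ≤ 1) (f : (Fin n → Bool) → Bool) (hf : ¬ ∃ c, ∀ x, f x = c)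
    (hcard : δ * 2 ^ n ≤ #{x | f x = true}) :
    ∃ g : (Fin n → Bool) → (Fin n → Bool), ∀ α : ℝ,
      ¬ ∃ (k : ℕ) (h : Fin k → (Fin n → Bool) → (Fin n → Bool) → Bool),
          (k : ℝ) ≤ 2 ^ (α * n) ∧
          (∀ i, (Lc2 (h i) : ℝ) ≤
            2 ^ ((n + Real.logb 2 (Lc f) - α * n - Real.logb 2 t) / 2)) ∧
          ∀ x y : Fin n → Bool,
            (f (fun j => xor (g x j) (y j)) = true ↔ ∀ i, h i x y = true) := by
  obtain ⟨g, hg⟩ := exists_forcesTrivialRows_xorComp (ι := Fin n) (κ := Fin n) (f := f) hδ ht.le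
    (by simpa [← two_mul, ← mul_assoc, show (16 : ℝ) * 2 = 32 by norm_num] using hδt)
    (by simpa using hcard)
  refine ⟨g, fun α => ?_⟩
  rintro ⟨k, h, hk, hLc2, hand⟩
  have hinf : xorComp f g = univ.inf h := xorComp_eq_inf_iff.2 hand
  have hL := Lc_pos hf
  set s : ℝ := 2 ^ ((n + Real.logb 2 (Lc f) - α * n - Real.logb 2 t) / 2)
  have sum_le : ∑ i, (Lc2 (h i) : ℝ) ^ 2 ≤ 2 ^ (α * n) * s ^ 2 := calc
    ∑ i, (Lc2 (h i) : ℝ) ^ 2 ≤ ∑ _i : Fin k, s ^ 2 := by gcongr; exact hLc2 _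
    _ = k * s ^ 2 := by simp
    _ ≤ 2 ^ (α * n) * s ^ 2 := by gcongr
  have := calc
    (2 : ℝ) ^ n * Lc f = mu (univ.inf h) := by
        rw [← hinf, mu_xorComp]
        push_cast
        rfl
    _ < t * ∑ i, (Lc2 (h i) : ℝ) ^ 2 :=
      (hinf ▸ hg).mu_lt_sum ht.le (by rw [← hinf, mu_xorComp]; positivity)
    _ ≤ t * (2 ^ (α * n) * s ^ 2) := by gcongr
    _ = 2 ^ n * Lc f := by
      rw [mul_two_rpow_half_sq (mod_cast hL) ht, Real.rpow_natCast]
  exact this.false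

/-- Theorem 3.3: for all large `n` and every non-constant
`f` with `|f⁻¹(1)| ≥ 2^n/4` there is `g` such that for every
`0 < α < 1 + (log₂ L(f) - 2 log₂ log₂ n)/n`, the XOR composition `f ⊞ g`
is not the pointwise AND of at most `2^{αn}` functions each of formula
complexity at most `2^{(n + log₂ L(f) - αn - 2 log₂ log₂ n)/2}`. -/
theorem xor_composition_theorem :
    ∃ n₀ : ℕ, ∀ n ≥ n₀, ∀ f : (Fin n → Bool) → Bool,
      (¬ ∃ c, ∀ x, f x = c) →
      ((2 : ℝ) ^ n / 4 ≤ ((Finset.univ.filter fun x : Fin n → Bool => f x = true).card : ℝ)) →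
      ∃ g : (Fin n → Bool) → (Fin n → Bool),
        ∀ α : ℝ, 0 < α →
          α < 1 + (Real.logb 2 (Lc f) - 2 * Real.logb 2 (Real.logb 2 n)) / n →
          ¬ ∃ (k : ℕ) (h : Fin k → (Fin n → Bool) → (Fin n → Bool) → Bool),
              (k : ℝ) ≤ 2 ^ (α * n) ∧
              (∀ i, (Lc2 (h i) : ℝ) ≤
                2 ^ ((n + Real.logb 2 (Lc f) - α * n - 2 * Real.logb 2 (Real.logb 2 n)) / 2)) ∧
              (∀ x y : Fin n → Bool,
                (f (fun j => xor (g x j) (y j)) = true ↔ ∀ i, h i x y = true)) := by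
  obtain ⟨n₀, hn₀⟩ := eventually_atTop.1 <| tendsto_natCast_atTop_atTop.eventually <|
    (eventually_mul_rpow_logb_sq_le_one (p := 3 / 4) (by norm_num) (by norm_num) 32).and
      (eventually_gt_atTop 1)
  refine ⟨n₀, fun n hn f hf hcard => ?_⟩
  obtain ⟨hbound, hn₁⟩ := hn₀ n hn
  obtain ⟨g, hg⟩ := xor_composition_theorem_general (δ := 1 / 4) (t := Real.logb 2 n ^ 2)
    (by norm_num) (pow_pos (Real.logb_pos one_lt_two hn₁) 2) (by norm_num [hbound]) f hf
    (by linarith)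
  exact ⟨g, fun α _ _ => by simpa [Real.logb_pow] using hg α⟩
end

section
/- For all real constants α and ε with 0 < α < 2 and ε > 0, for all sufficiently large n there exist functions f : {0,1}^n → {0,1} and g : {0,1}^n → {0,1}^n such that there do NOT exist k ≤ 2^{α·n} Boolean functions h_1, …, h_k : {0,1}^n × {0,1}^n → {0,1}, each with L(h_i) ≤ 2^{(1 − α/2 − ε)·n}, whose pointwise AND equals f⊞g. -/
/-!
Call `f` balanced if it takes both values equally often. A union bound over random `f` and `g`
shows that any family of fewer than `2 ^ m / 4 ^ n` functions admits a balanced `f` and a `g` such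
that every member `h` of the family lying above `f ⊞ g` has at most `2 * m ^ 2` zeros: `f` is
chosen so that it does not vanish on any translate of a slice `h⁻¹(0) ∩ ({x} × {0,1}^n)` with
`2 * m` elements or more, and then `g` so that fewer than `m` slices are nonempty. Functions of
formula complexity at most `s` form such a family with `m` about `n * s`, and `f ⊞ g`, being zero
on half of the inputs, is the AND of `k` of them only if `4 ^ n ≤ 4 * (k * m ^ 2)`.
-/

open Filter Finset Function Topology

/-! ### Union bounds -/

theorem exists_forall_notMem_of_mul_card_le {α J : Type*} [Fintype α] [Nonempty α] {N : ℕ}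
    {I : Finset J} {B : J → Finset α} (hB : ∀ j ∈ I, N * #(B j) ≤ Fintype.card α)
    (hI : #I < N) : ∃ a, ∀ j ∈ I, a ∉ B j := by
  classical
  by_contra! hcover
  have huniv : I.biUnion B = univ := eq_univ_of_forall fun a => mem_biUnion.2 (hcover a)
  have hle : N * Fintype.card α ≤ #I * Fintype.card α :=
    calc N * Fintype.card α = N * #(I.biUnion B) := by rw [huniv, card_univ]
      _ ≤ N * ∑ j ∈ I, #(B j) := Nat.mul_le_mul_left _ card_biUnion_le
      _ = ∑ j ∈ I, N * #(B j) := mul_sum ..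
      _ ≤ #I * Fintype.card α := by simpa using sum_le_card_nsmul _ _ _ hB
  exact hle.not_gt (Nat.mul_lt_mul_of_pos_right hI Fintype.card_pos)

theorem pow_card_mul_card_filter_forall_mem_le {Y V : Type*} [Fintype Y] [DecidableEq Y]
    [Fintype V] [DecidableEq V] {q : ℕ} {S : Finset Y} {P : Y → Finset V}
    (hP : ∀ y ∈ S, q * #(P y) ≤ Fintype.card V) :
    q ^ #S * #{u : Y → V | ∀ y ∈ S, u y ∈ P y} ≤ Fintype.card (Y → V) := by
  have hpi : ({u : Y → V | ∀ y ∈ S, u y ∈ P y} : Finset _) =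
      Fintype.piFinset fun y => if y ∈ S then P y else univ := by
    ext u
    simp only [mem_filter_univ, Fintype.mem_piFinset]
    refine forall_congr' fun y => ?_
    split_ifs with hy <;> simp [hy]
  calc q ^ #S * #{u : Y → V | ∀ y ∈ S, u y ∈ P y}
      = ∏ y, (if y ∈ S then q else 1) * #(if y ∈ S then P y else univ) := by
        rw [hpi, Fintype.card_piFinset, prod_mul_distrib, prod_ite]
        simp
    _ ≤ ∏ _y : Y, Fintype.card V := by
        refine prod_le_prod' fun y _ => ?_
        split_ifs with hy
        · exact hP y hy
        · simp
    _ = Fintype.card (Y → V) := by simp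

theorem exists_forall_exists_notMem {Y V J : Type*} [Finite Y] [Fintype V] [Nonempty V]
    {q m : ℕ} {I : Finset J} {S : J → Finset Y} {P : J → Y → Finset V} (hq : 0 < q)
    (hS : ∀ j ∈ I, m ≤ #(S j))
    (hP : ∀ j ∈ I, ∀ y ∈ S j, q * #(P j y) ≤ Fintype.card V) (hI : #I < q ^ m) :
    ∃ u : Y → V, ∀ j ∈ I, ∃ y ∈ S j, u y ∉ P j y := by
  classical
  cases nonempty_fintype Y
  obtain ⟨u, hu⟩ := exists_forall_notMem_of_mul_card_le
    (B := fun j => {u : Y → V | ∀ y ∈ S j, u y ∈ P j y})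
    (fun j hj => (Nat.mul_le_mul_right _ (Nat.pow_le_pow_right hq (hS j hj))).trans
      (pow_card_mul_card_filter_forall_mem_le (hP j hj))) hI
  exact ⟨u, fun j hj => by simpa using hu j hj⟩

/-! ### Balanced functions -/

/-- A Boolean function on a finite type is balanced if it takes the values `true` and `false`
equally often; only the zeros are counted, which determines the number of ones. -/
def IsBalanced {Z : Type*} [Fintype Z] (f : Z → Bool) : Prop :=
  2 * #{z | f z = false} = Fintype.card Z

namespace IsBalanced

variable {X Y Z : Type*} [Fintype X] [Fintype Y] [Fintype Z]

theorem comp_bijective {f : Z → Bool} (hf : IsBalanced f) {e : Y → Z} (he : Bijective e) :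
    IsBalanced (f ∘ e) := by
  have hcard : #{y | f (e y) = false} = #{z | f z = false} := card_bijective e he (by simp)
  simpa only [IsBalanced, comp_apply, hcard, Fintype.card_of_bijective he] using hf

theorem uncurry {F : X → Y → Bool} (hF : ∀ x, IsBalanced (F x)) :
    IsBalanced fun p : X × Y => F p.1 p.2 := by
  have hcard : #{p : X × Y | F p.1 p.2 = false} = ∑ x, #{y | F x y = false} := by
    simp only [card_filter, Fintype.sum_prod_type]
  simp only [IsBalanced] at hF
  simp [IsBalanced, hcard, mul_sum, hF]

theorem card_le_of_forall_and {κ : Type*} [Fintype κ] {f : Z → Bool} (hf : IsBalanced f)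
    {h : κ → Z → Bool} (hand : ∀ z, f z = true ↔ ∀ i, h i z = true) {M : ℕ}
    (hM : ∀ i, #{z | h i z = false} ≤ M) : Fintype.card Z ≤ 2 * (Fintype.card κ * M) := by
  classical
  have hsub : ({z | f z = false} : Finset Z) ⊆ univ.biUnion fun i => {z | h i z = false} := by
    intro z hz
    simpa [mem_filter.1 hz] using (hand z).not
  calc Fintype.card Z = 2 * #{z | f z = false} := hf.symm
    _ ≤ 2 * (Fintype.card κ * M) :=
        Nat.mul_le_mul_left _
          ((card_le_card hsub).trans (card_biUnion_le_card_mul _ _ _ fun i _ => hM i))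

end IsBalanced

theorem isBalanced_xor (b : Bool) : IsBalanced (xor b) := by
  cases b <;> rfl

theorem card_le_two_mul_card_image_fst {Y : Type*} [DecidableEq Y] (T : Finset (Y × Bool)) :
    #T ≤ 2 * #(T.image Prod.fst) :=
  calc #T ≤ #(T.image Prod.fst ×ˢ (univ : Finset Bool)) :=
        card_le_card (subset_product.trans (product_subset_product_right (subset_univ _)))
    _ = 2 * #(T.image Prod.fst) := by rw [card_product, card_univ, Fintype.card_bool, mul_comm]

theorem exists_isBalanced_forall_exists_eq_true {Z : Type*} [Fintype Z]
    (hZ : Even (Fintype.card Z)) {m : ℕ} {I : Finset (Finset Z)} (hm : ∀ T ∈ I, 2 * m ≤ #T)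
    (hI : #I < 2 ^ m) : ∃ f : Z → Bool, IsBalanced f ∧ ∀ T ∈ I, ∃ z ∈ T, f z = true := by
  classical
  obtain ⟨r, hr⟩ := hZ
  let e : Z ≃ Fin r × Bool := Fintype.equivOfCardEq (by simp; lia)
  -- `f` is `(y, b) ↦ u y ⊕ b`; if it vanishes on `T` then `T` determines `u` on its projection.
  obtain ⟨u, hu⟩ : ∃ u : Fin r → Bool, ∀ T ∈ I, ∃ y ∈ (T.map e.toEmbedding).image Prod.fst,
      u y ∉ ({c | ∀ z ∈ T, (e z).1 = y → xor c (e z).2 = false} : Finset Bool) := by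
    refine exists_forall_exists_notMem two_pos (fun T hT => ?_) (fun T _ y hy => ?_) hI
    · have hproj := card_le_two_mul_card_image_fst (T.map e.toEmbedding)
      rw [card_map] at hproj
      exact Nat.le_of_mul_le_mul_left ((hm T hT).trans hproj) two_pos
    · obtain ⟨z, hz, rfl⟩ : ∃ z ∈ T, (e z).1 = y := by
        simpa only [mem_image, Finset.mem_map, exists_exists_and_eq_and,
          Equiv.coe_toEmbedding] using hy
      have hsub : ({c | ∀ z' ∈ T, (e z').1 = (e z).1 → xor c (e z').2 = false} : Finset Bool) ⊆
          {(e z).2} := fun c hc => by simpa using (mem_filter.1 hc).2 z hz rfl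
      simpa using card_le_card hsub
  refine ⟨_, (IsBalanced.uncurry fun y => isBalanced_xor (u y)).comp_bijective e.bijective,
    fun T hT => ?_⟩
  obtain ⟨y, -, hy⟩ := hu T hT
  obtain ⟨z, hz, rfl, hne⟩ : ∃ z ∈ T, (e z).1 = y ∧ xor (u y) (e z).2 = true := by simpa using hy
  exact ⟨z, hz, hne⟩

/-! ### Functions above a composition `f (op (g x) y)` -/

section Composition

variable {X Y V Z : Type*} {op : V → Y → Z} {m : ℕ}

theorem exists_isBalanced_forall_translate [Fintype V] [Fintype Z] (hZ : Even (Fintype.card Z))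
    (hop : ∀ v, Injective (op v)) {𝒮 : Finset (Finset Y)} (h𝒮 : #𝒮 * Fintype.card V < 2 ^ m) :
    ∃ f : Z → Bool, IsBalanced f ∧
      ∀ T ∈ 𝒮, 2 * m ≤ #T → ∀ v, ∃ y ∈ T, f (op v y) = true := by
  classical
  let translates : Finset (Finset Z) := (𝒮 ×ˢ univ).image fun q => q.1.image (op q.2)
  have hcard : #{T ∈ translates | 2 * m ≤ #T} < 2 ^ m :=
    calc _ ≤ #(𝒮 ×ˢ (univ : Finset V)) := (card_filter_le _ _).trans card_image_le
      _ < 2 ^ m := by rwa [card_product, card_univ]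
  obtain ⟨f, hf, hfI⟩ :=
    exists_isBalanced_forall_exists_eq_true hZ (fun T hT => (mem_filter.1 hT).2) hcard
  refine ⟨f, hf, fun T hT hmT v => ?_⟩
  have hmem : T.image (op v) ∈ {T ∈ translates | 2 * m ≤ #T} := by
    rw [mem_filter, card_image_of_injective _ (hop v)]
    exact ⟨mem_image.2 ⟨(T, v), by simp [hT], rfl⟩, hmT⟩
  simpa using hfI _ hmem

theorem exists_forall_of_le_card_nonempty_slices [Fintype X] [Fintype Y] [Finite V]
    [Nonempty V] [Fintype Z] {f : Z → Bool} (hf : IsBalanced f)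
    (hop : ∀ y, Bijective fun v => op v y) {H : Finset (X → Y → Bool)} (hH : #H < 2 ^ m) :
    ∃ g : X → V, ∀ h ∈ H, m ≤ #{x | ∃ y, h x y = false} →
      ∃ x y, h x y = false ∧ f (op (g x) y) = true := by
  classical
  cases nonempty_fintype V
  let support (h : X → Y → Bool) : Finset X := {x | ∃ y, h x y = false}
  obtain ⟨g, hg⟩ : ∃ g : X → V, ∀ h ∈ {h ∈ H | m ≤ #(support h)}, ∃ x ∈ support h,
      g x ∉ ({v | ∀ y, h x y = false → f (op v y) = false} : Finset V) := by
    refine exists_forall_exists_notMem two_pos (fun h hh => (mem_filter.1 hh).2)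
      (fun h _ x hx => ?_) ((card_filter_le _ _).trans_lt hH)
    obtain ⟨y, hy⟩ := (mem_filter.1 hx).2
    calc 2 * #{v | ∀ y, h x y = false → f (op v y) = false}
        ≤ 2 * #{v | f (op v y) = false} :=
          Nat.mul_le_mul_left _ (card_le_card fun v => by simpa using fun hv => hv y hy)
      _ = Fintype.card V := hf.comp_bijective (hop y)
  refine ⟨g, fun h hh hm => ?_⟩
  obtain ⟨x, -, hx⟩ := hg h (mem_filter.2 ⟨hh, hm⟩)
  exact ⟨x, by simpa using hx⟩

theorem card_zeros_le_mul [Fintype X] [Fintype Y] {h : X → Y → Bool} {a b : ℕ}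
    (ha : ∀ x, #{y | h x y = false} ≤ a) (hb : #{x | ∃ y, h x y = false} ≤ b) :
    #{p : X × Y | h p.1 p.2 = false} ≤ a * b := by
  classical
  have himage : ({p : X × Y | h p.1 p.2 = false} : Finset _).image Prod.fst =
      ({x | ∃ y, h x y = false} : Finset X) := by
    ext x
    simp
  refine (card_le_mul_card_image _ a fun x _ => ?_).trans
    (himage ▸ Nat.mul_le_mul_left a hb)
  refine (card_le_card_of_injOn (t := {y | h x y = false}) Prod.snd ?_ ?_).trans (ha x)
  · rintro ⟨x', y⟩ hp
    obtain ⟨hy, rfl⟩ := mem_filter.1 hp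
    simpa using hy
  · rintro ⟨x₁, y₁⟩ h₁ ⟨x₂, y₂⟩ h₂ hy
    simp_all

theorem exists_isBalanced_forall_card_zeros_le [Fintype X] [Nonempty X] [Fintype Y] [Fintype V]
    [Nonempty V] [Fintype Z] (hZ : Even (Fintype.card Z)) (hl : ∀ v, Injective (op v))
    (hr : ∀ y, Bijective fun v => op v y) {H : Finset (X → Y → Bool)}
    (hH : #H * Fintype.card X * Fintype.card V < 2 ^ m) :
    ∃ (f : Z → Bool) (g : X → V), IsBalanced f ∧
      ∀ h ∈ H, (∀ x y, h x y = false → f (op (g x) y) = false) →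
        #{p : X × Y | h p.1 p.2 = false} ≤ 2 * m * m := by
  classical
  let slices : Finset (Finset Y) :=
    (H ×ˢ univ).image fun q => ({y | q.1 q.2 y = false} : Finset Y)
  have hslices : #slices ≤ #H * Fintype.card X := by
    simpa using card_image_le (s := H ×ˢ (univ : Finset X))
  obtain ⟨f, hf, hfT⟩ := exists_isBalanced_forall_translate hZ hl
    ((Nat.mul_le_mul_right _ hslices).trans_lt hH)
  have hHm : #H < 2 ^ m := by
    rw [mul_assoc] at hH
    exact (Nat.le_mul_of_pos_right _ (Nat.mul_pos Fintype.card_pos Fintype.card_pos)).trans_lt hH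
  obtain ⟨g, hg⟩ := exists_forall_of_le_card_nonempty_slices hf hr hHm
  refine ⟨f, g, hf, fun h hh habove => card_zeros_le_mul (fun x => ?_) ?_⟩
  · by_contra! hm
    have hmem : ({y | h x y = false} : Finset Y) ∈ slices :=
      mem_image.2 ⟨(h, x), by simp [hh], rfl⟩
    obtain ⟨y, hy, hfy⟩ := hfT _ hmem hm.le (g x)
    simp [habove x y (mem_filter.1 hy).2] at hfy
  · by_contra! hm
    obtain ⟨x, y, hxy, hfxy⟩ := hg h hh hm.le
    simp [habove x y hxy] at hfxy

theorem exists_comp_forall_and_card_le [Fintype X] [Nonempty X] [Fintype Y] [Fintype V]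
    [Nonempty V] [Fintype Z] (hZ : Even (Fintype.card Z)) (hl : ∀ v, Bijective (op v))
    (hr : ∀ y, Bijective fun v => op v y) {H : Finset (X → Y → Bool)}
    (hH : #H * Fintype.card X * Fintype.card V < 2 ^ m) :
    ∃ (f : Z → Bool) (g : X → V), ∀ (k : ℕ) (h : Fin k → X → Y → Bool), (∀ i, h i ∈ H) →
      (∀ x y, f (op (g x) y) = true ↔ ∀ i, h i x y = true) →
        Fintype.card X * Fintype.card Y ≤ 4 * (k * m ^ 2) := by
  obtain ⟨f, g, hf, hfg⟩ :=
    exists_isBalanced_forall_card_zeros_le hZ (fun v => (hl v).injective) hr hH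
  refine ⟨f, g, fun k h hmem hand => ?_⟩
  have hbalanced : IsBalanced fun p : X × Y => f (op (g p.1) p.2) :=
    .uncurry fun x => hf.comp_bijective (hl (g x))
  have habove : ∀ i x y, h i x y = false → f (op (g x) y) = false := fun i x y hi =>
    Bool.eq_false_iff.2 fun htrue => by simp [(hand x y).1 htrue i] at hi
  have hcover := hbalanced.card_le_of_forall_and (h := fun i p => h i p.1 p.2)
    (fun p => hand p.1 p.2) fun i => hfg (h i) (hmem i) (habove i)
  rw [Fintype.card_prod, Fintype.card_fin] at hcover
  linarith

end Composition

/-! ### Counting functions of small formula complexity -/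

namespace DMF

variable {ι : Type}

/-- The prefix (Polish) notation of a formula: `Sum.inl true` is an AND gate, `Sum.inl false` an
OR gate and `Sum.inr (i, b)` a literal. It serves to count formulas. -/
def toWord : DMF ι → List (Bool ⊕ ι × Bool)
  | leaf i b => [Sum.inr (i, b)]
  | and φ ψ => Sum.inl true :: (φ.toWord ++ ψ.toWord)
  | or φ ψ => Sum.inl false :: (φ.toWord ++ ψ.toWord)

theorem length_toWord (φ : DMF ι) : φ.toWord.length + 1 = 2 * φ.size := by
  induction φ <;> simp [toWord, size] <;> lia

theorem eq_of_toWord_append_eq {φ ψ : DMF ι} {l l' : List (Bool ⊕ ι × Bool)}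
    (h : φ.toWord ++ l = ψ.toWord ++ l') : φ = ψ ∧ l = l' := by
  induction φ generalizing ψ l l' with
  | leaf i b => cases ψ <;> simp_all [toWord]
  | and φ₁ φ₂ ih₁ ih₂ =>
    cases ψ with
    | and ψ₁ ψ₂ =>
      obtain ⟨rfl, h₂⟩ := ih₁ (by simpa [toWord] using h)
      obtain ⟨rfl, rfl⟩ := ih₂ h₂
      simp
    | _ => simp [toWord] at h
  | or φ₁ φ₂ ih₁ ih₂ =>
    cases ψ with
    | or ψ₁ ψ₂ =>
      obtain ⟨rfl, h₂⟩ := ih₁ (by simpa [toWord] using h)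
      obtain ⟨rfl, rfl⟩ := ih₂ h₂
      simp
    | _ => simp [toWord] at h

theorem card_le_of_forall_size_le [Fintype ι] {𝓕 : Finset (DMF ι)} {s : ℕ}
    (h𝓕 : ∀ φ ∈ 𝓕, φ.size ≤ s) : #𝓕 ≤ (2 * Fintype.card ι + 2) ^ (2 * s) := by
  classical
  let padded (φ : 𝓕) : List.Vector (Bool ⊕ ι × Bool) (2 * s) :=
    ⟨φ.1.toWord ++ List.replicate (2 * s - φ.1.toWord.length) (Sum.inl true), by
      have := h𝓕 _ φ.2
      have := length_toWord φ.1
      simp only [List.length_append, List.length_replicate]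
      lia⟩
  have hinj : Injective padded := fun φ ψ h =>
    Subtype.ext (eq_of_toWord_append_eq (congrArg Subtype.val h)).1
  calc #𝓕 = Fintype.card 𝓕 := (Fintype.card_coe 𝓕).symm
    _ ≤ Fintype.card (List.Vector (Bool ⊕ ι × Bool) (2 * s)) := Fintype.card_le_of_injective _ hinj
    _ = (2 * Fintype.card ι + 2) ^ (2 * s) := by
        rw [card_vector, Fintype.card_sum, Fintype.card_prod, Fintype.card_bool]
        ring

theorem exists_eval_eq_const [Nonempty ι] (c : Bool) :
    ∃ φ : DMF ι, φ.size = 2 ∧ φ.eval = const _ c := by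
  obtain ⟨i⟩ := ‹Nonempty ι›
  cases c
  · exact ⟨.and (.leaf i true) (.leaf i false), rfl, by ext x; simp [eval]⟩
  · exact ⟨.or (.leaf i true) (.leaf i false), rfl, by ext x; simp [eval]⟩

theorem eq_sup_inf_eval_leaf [Fintype ι] [DecidableEq ι] (h : (ι → Bool) → Bool) :
    h = ({a | h a = true} : Finset (ι → Bool)).sup fun a => univ.inf fun i =>
      (leaf i (a i)).eval := by
  refine le_antisymm (fun x => ?_) (Finset.sup_le fun a ha x => ?_)
  · cases hx : h x
    · exact Bool.false_le _
    · calc true ≤ (univ.inf fun i => (leaf i (x i)).eval) x := by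
            rw [Finset.inf_apply]
            exact Finset.le_inf fun i _ => by cases hi : x i <;> simp [eval, hi]
        _ ≤ _ := Finset.le_sup (f := fun a : ι → Bool => univ.inf fun i => (leaf i (a i)).eval)
            (mem_filter.2 ⟨mem_univ x, hx⟩) x
  · by_cases hxa : x = a
    · rw [hxa, (mem_filter.1 ha).2]
      exact Bool.le_true _
    · obtain ⟨i, hi⟩ := ne_iff.1 hxa
      calc (univ.inf fun i => (leaf i (a i)).eval) x ≤ (leaf i (a i)).eval x :=
            Finset.inf_le (f := fun i => (leaf i (a i)).eval) (mem_univ i) x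
        _ = false := by cases ha : a i <;> simp_all [eval]
        _ ≤ h x := Bool.false_le _

theorem exists_eval_eq [Finite ι] [Nonempty ι] (h : (ι → Bool) → Bool) :
    ∃ φ : DMF ι, φ.eval = h := by
  classical
  cases nonempty_fintype ι
  have hconst (c : Bool) : ∃ φ : DMF ι, φ.eval = const _ c :=
    (exists_eval_eq_const c).imp fun _ => And.right
  rw [eq_sup_inf_eval_leaf h]
  refine sup_induction (p := fun h => ∃ φ : DMF ι, φ.eval = h) (hconst false) ?_ fun a _ => ?_
  · rintro _ ⟨φ, rfl⟩ _ ⟨ψ, rfl⟩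
    exact ⟨.or φ ψ, rfl⟩
  · refine inf_induction (p := fun h => ∃ φ : DMF ι, φ.eval = h) (hconst true) ?_
      fun i _ => ⟨leaf i (a i), rfl⟩
    rintro _ ⟨φ, rfl⟩ _ ⟨ψ, rfl⟩
    exact ⟨.and φ ψ, rfl⟩

theorem exists_size_le_eval_eq [Finite ι] [Nonempty ι] (h : (ι → Bool) → Bool) :
    ∃ φ : DMF ι, φ.size ≤ Lc h + 2 ∧ φ.eval = h := by
  classical
  by_cases hconst : ∃ c, ∀ x, h x = c
  · obtain ⟨c, hc⟩ := hconst
    obtain ⟨φ, hsize, heval⟩ := exists_eval_eq_const (ι := ι) c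
    exact ⟨φ, by lia, heval.trans (funext hc).symm⟩
  · obtain ⟨φ₀, hφ₀⟩ := exists_eval_eq h
    have hne : {s | ∃ φ : DMF ι, φ.size = s ∧ ∀ x, φ.eval x = h x}.Nonempty :=
      ⟨_, φ₀, rfl, congrFun hφ₀⟩
    obtain ⟨φ, hsize, heval⟩ := Nat.sInf_mem hne
    exact ⟨φ, by rw [hsize, Lc, if_neg hconst]; lia, funext heval⟩

end DMF

theorem card_filter_Lc_le {ι : Type} [Fintype ι] [DecidableEq ι] [Nonempty ι] (s : ℕ) :
    #{h : (ι → Bool) → Bool | Lc h ≤ s} ≤ (2 * Fintype.card ι + 2) ^ (2 * (s + 2)) := by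
  classical
  choose φ hsize heval using DMF.exists_size_le_eval_eq (ι := ι)
  have hinj : Injective φ := fun h h' hφ => by rw [← heval h, hφ, heval h']
  rw [← card_image_of_injective _ hinj]
  refine DMF.card_le_of_forall_size_le fun ψ hψ => ?_
  obtain ⟨h, hh, rfl⟩ := mem_image.1 hψ
  exact (hsize h).trans (Nat.add_le_add_right (mem_filter.1 hh).2 2)

theorem card_filter_Lc2_le {n : ℕ} (hn : 0 < n) (s : ℕ) :
    #{h : (Fin n → Bool) → (Fin n → Bool) → Bool | Lc2 h ≤ s} ≤
      (4 * n + 2) ^ (2 * (s + 2)) := by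
  have : Nonempty (Fin n) := ⟨⟨0, hn⟩⟩
  have hinj : Injective fun (h : (Fin n → Bool) → (Fin n → Bool) → Bool)
      (z : Fin n ⊕ Fin n → Bool) => h (z ∘ Sum.inl) (z ∘ Sum.inr) := fun h h' heq => by
    ext x y
    simpa using congrFun heq (Sum.elim x y)
  refine (card_le_card_of_injOn (t := {h : (Fin n ⊕ Fin n → Bool) → Bool | Lc h ≤ s}) _
    (fun h hh => ?_) hinj.injOn).trans ((card_filter_Lc_le s).trans_eq ?_)
  · simpa [Lc2] using (mem_filter.1 hh).2
  · rw [Fintype.card_sum, Fintype.card_fin]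
    ring

/-! ### Asymptotics -/

theorem eventually_mul_floor_rpow_add_lt_floor {β ε : ℝ} (hβ : 0 < β) (hε : 0 < ε) :
    ∀ᶠ n : ℕ in atTop,
      (n + 2) * (2 * (⌊(2 : ℝ) ^ ((β - ε) * n)⌋₊ + 2)) + 2 * n < ⌊(2 : ℝ) ^ (β * n) / 4⌋₊ := by
  have hdecay (c : ℝ) (hc : 0 < c) :
      Tendsto (fun n : ℕ => (n : ℝ) * 2 ^ (-c * n)) atTop (𝓝 0) ∧
      Tendsto (fun n : ℕ => (2 : ℝ) ^ (-c * n)) atTop (𝓝 0) := by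
    simp only [Real.rpow_mul_natCast zero_le_two]
    have hlt : (2 : ℝ) ^ (-c) < 1 :=
      Real.rpow_lt_one_of_one_lt_of_neg one_lt_two (neg_neg_of_pos hc)
    exact ⟨tendsto_self_mul_const_pow_of_lt_one (by positivity) hlt,
      tendsto_pow_atTop_nhds_zero_of_lt_one (by positivity) hlt⟩
  have hlim := ((((hdecay ε hε).1.const_mul 2).add ((hdecay ε hε).2.const_mul 4)).add
    ((hdecay β hβ).1.const_mul 6)).add ((hdecay β hβ).2.const_mul 9)
  filter_upwards [hlim.eventually_lt_const (show _ < (1 / 4 : ℝ) by norm_num)] with n hn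
  have hsplit : (2 : ℝ) ^ ((β - ε) * n) = 2 ^ (β * n) * 2 ^ (-ε * n) := by
    rw [← Real.rpow_add two_pos]
    ring_nf
  have hinv : (2 : ℝ) ^ (β * n) * 2 ^ (-β * n) = 1 := by
    rw [← Real.rpow_add two_pos]
    simp
  have hfloor := Nat.floor_le (show (0 : ℝ) ≤ 2 ^ ((β - ε) * n) by positivity)
  rw [← Nat.succ_le_iff]
  refine Nat.le_floor ?_
  push_cast
  have hpos : (0 : ℝ) < 2 ^ (β * n) := by positivity
  have hn' := mul_lt_mul_of_pos_left hn hpos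
  calc ((n : ℝ) + 2) * (2 * (⌊(2 : ℝ) ^ ((β - ε) * n)⌋₊ + 2)) + 2 * n + 1
      ≤ (n + 2) * (2 * (2 ^ ((β - ε) * n) + 2)) + 2 * n + 1 := by gcongr
    _ = 2 ^ (β * n) * (2 * (n * 2 ^ (-ε * n)) + 4 * 2 ^ (-ε * n) + 6 * (n * 2 ^ (-β * n)) +
          9 * 2 ^ (-β * n)) := by
        rw [hsplit]
        linear_combination (-6 * n - 9 : ℝ) * hinv
    _ ≤ 2 ^ (β * n) / 4 := by linarith

theorem pow_mul_four_pow_lt_two_pow {n t m : ℕ} (h : (n + 2) * t + 2 * n < m) :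
    (4 * n + 2) ^ t * 4 ^ n < 2 ^ m := by
  have hbase : 4 * n + 2 ≤ 2 ^ (n + 2) := by
    have : n < 2 ^ n := Nat.lt_two_pow_self
    lia
  calc (4 * n + 2) ^ t * 4 ^ n ≤ (2 ^ (n + 2)) ^ t * (2 ^ 2) ^ n := by gcongr; norm_num
    _ = 2 ^ ((n + 2) * t + 2 * n) := by rw [← pow_mul, ← pow_mul, pow_add]
    _ < 2 ^ m := Nat.pow_lt_pow_right one_lt_two h

theorem four_mul_mul_sq_lt_four_pow {α : ℝ} {n k m : ℕ} (hk : (k : ℝ) ≤ 2 ^ (α * n))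
    (hm : (m : ℝ) ≤ 2 ^ ((1 - α / 2) * n) / 4) : 4 * (k * m ^ 2) < 4 ^ n := by
  have hprod : (2 : ℝ) ^ (α * n) * (2 ^ ((1 - α / 2) * n)) ^ 2 = 4 ^ n := by
    rw [show (4 : ℝ) = 2 ^ (2 : ℝ) by norm_num, ← Real.rpow_mul_natCast zero_le_two,
      ← Real.rpow_mul_natCast zero_le_two, ← Real.rpow_add two_pos]
    ring_nf
  have hlt : (4 * (k * m ^ 2) : ℝ) < 4 ^ n :=
    calc (4 * (k * m ^ 2) : ℝ) ≤ 4 * (2 ^ (α * n) * (2 ^ ((1 - α / 2) * n) / 4) ^ 2) := by gcongr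
      _ = 4 ^ n / 4 := by rw [div_pow, mul_div_assoc', hprod]; ring
      _ < 4 ^ n := div_lt_self (by positivity) (by norm_num)
  exact_mod_cast hlt

/-! ### XOR composition -/

theorem exists_xor_comp_forall_and_four_pow_le {n s m : ℕ} (hn : 0 < n)
    (hm : (4 * n + 2) ^ (2 * (s + 2)) * 4 ^ n < 2 ^ m) :
    ∃ (f : (Fin n → Bool) → Bool) (g : (Fin n → Bool) → (Fin n → Bool)),
      ∀ (k : ℕ) (h : Fin k → (Fin n → Bool) → (Fin n → Bool) → Bool), (∀ i, Lc2 (h i) ≤ s) →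
        (∀ x y, f (fun j => xor (g x j) (y j)) = true ↔ ∀ i, h i x y = true) →
          4 ^ n ≤ 4 * (k * m ^ 2) := by
  have hl (v : Fin n → Bool) : Bijective fun (y : Fin n → Bool) j => xor (v j) (y j) :=
    Involutive.bijective fun y => by simp
  have hr (y : Fin n → Bool) : Bijective fun (v : Fin n → Bool) j => xor (v j) (y j) :=
    Involutive.bijective fun v => by simp
  have hcard : Fintype.card (Fin n → Bool) = 2 ^ n := by simp
  have hfour : 2 ^ n * 2 ^ n = 4 ^ n := (mul_pow 2 2 n).symm
  obtain ⟨f, g, hfg⟩ := exists_comp_forall_and_card_le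
    (H := {h : (Fin n → Bool) → (Fin n → Bool) → Bool | Lc2 h ≤ s})
    (hcard ▸ even_two.pow_of_ne_zero hn.ne') hl hr (m := m) (by
      rw [hcard, mul_assoc, hfour]
      exact (Nat.mul_le_mul_right _ (card_filter_Lc2_le hn s)).trans_lt hm)
  rw [hcard, hfour] at hfg
  exact ⟨f, g, fun k h hL => hfg k h fun i => by simpa using hL i⟩

/-- Theorem 1.6, concrete form: for constants `0 < α < 2` and
`ε > 0`, for all large `n` there are `f, g` such that `f ⊞ g` is not the
pointwise AND of at most `2^{αn}` functions each of formula complexity at most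
`2^{(1 - α/2 - ε)n}`. -/
theorem xor_composition_concrete (α ε : ℝ) (hα0 : 0 < α) (hα2 : α < 2) (hε : 0 < ε) :
    ∃ n₀ : ℕ, ∀ n ≥ n₀,
      ∃ (f : (Fin n → Bool) → Bool) (g : (Fin n → Bool) → (Fin n → Bool)),
        ¬ ∃ (k : ℕ) (h : Fin k → (Fin n → Bool) → (Fin n → Bool) → Bool),
            (k : ℝ) ≤ 2 ^ (α * n) ∧
            (∀ i, (Lc2 (h i) : ℝ) ≤ 2 ^ ((1 - α / 2 - ε) * n)) ∧
            (∀ x y : Fin n → Bool,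
              (f (fun j => xor (g x j) (y j)) = true ↔ ∀ i, h i x y = true)) := by
  refine eventually_atTop.1 ?_
  filter_upwards [eventually_gt_atTop 0,
    eventually_mul_floor_rpow_add_lt_floor (show 0 < 1 - α / 2 by linarith) hε] with n hn hnum
  obtain ⟨f, g, hfg⟩ :=
    exists_xor_comp_forall_and_four_pow_le hn (pow_mul_four_pow_lt_two_pow hnum)
  refine ⟨f, g, ?_⟩
  rintro ⟨k, h, hk, hL, hand⟩
  have hlower := hfg k h (fun i => Nat.le_floor (hL i)) hand
  have hupper := four_mul_mul_sq_lt_four_pow hk (Nat.floor_le (by positivity))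
  exact hupper.not_ge hlower
end

section
/- For all real constants α and β with 0 < α < 2 and β < 3 − α/2, for all sufficiently large m, setting n = 2^m, there do NOT exist k ≤ n^α Boolean functions h_1, …, h_k on the input domain of Andr', each with L(h_i) ≤ n^β, whose pointwise AND equals the modified Andreev function Andr'. -/
/-- The index type for the inputs of the modified Andreev function with
parameter `m` (and `n = 2^m`): `n` bits of the truth table of
`f : {0,1}^m → {0,1}`, `n·m` bits of the truth table of
`g : {0,1}^m → {0,1}^m`, and `2m` blocks of `n` bits `x_1, …, x_{2m}`. -/
abbrev AndrIdx (m : ℕ) : Type :=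
  Fin (2 ^ m) ⊕ ((Fin (2 ^ m) × Fin m) ⊕ (Fin (m + m) × Fin (2 ^ m)))

/-- The position in a truth table (of length `2^m`) of a point `u ∈ {0,1}^m`. -/
def tabIdx {m : ℕ} (u : Fin m → Bool) : Fin (2 ^ m) :=
  finFunctionFinEquiv (fun i => finTwoEquiv.symm (u i))

/-- The parity (XOR) of the bits of a Boolean string. -/
def parity {n : ℕ} (x : Fin n → Bool) : Bool :=
  decide ((Finset.univ.filter fun j : Fin n => x j = true).card % 2 = 1)

/-- The modified Andreev function `Andr'` (Definition 4.1): the first block is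
the truth table of `f : {0,1}^m → {0,1}`, the second the truth table of
`g : {0,1}^m → {0,1}^m`, and on inputs `x_1, …, x_{2m} ∈ {0,1}^n` it outputs
`f(g(u) ⊕ v)` where `u = (⊕x_1, …, ⊕x_m)` and `v = (⊕x_{m+1}, …, ⊕x_{2m})`. -/
def Andr (m : ℕ) (z : AndrIdx m → Bool) : Bool :=
  let f : (Fin m → Bool) → Bool := fun u => z (Sum.inl (tabIdx u))
  let g : (Fin m → Bool) → (Fin m → Bool) := fun u j => z (Sum.inr (Sum.inl (tabIdx u, j)))
  let x : Fin (m + m) → (Fin (2 ^ m) → Bool) := fun i j => z (Sum.inr (Sum.inr (i, j)))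
  let u : Fin m → Bool := fun i => parity (x (Fin.castAdd m i))
  let v : Fin m → Bool := fun i => parity (x (Fin.natAdd m i))
  f (fun j => xor (g u j) (v j))

/-!
On the Boolean cube `{0,1}^ι` with Laplacian `N`, let `D_h` be the projection that multiplies by a
Boolean function `h`. If `h` is computed by a formula of size `s`, then
`‖(ad N)^k D_h‖ ≤ poly(depth) · √s ^ k`: the off-diagonal block of `(ad N)^k D_h` relative to `D_h`
controls the norm, does not change when `h` is negated, and obeys an approximate Pythagorean law
for conjunctions. This bounds the total energy of the iterated discrete derivatives of `h`, so a
random restriction leaving one live variable in each of `2m` blocks of size `n` turns a formula of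
size `n^(2-ε)` into a function of bounded degree, except with probability at most a large negative
power of `n`.

A formula of size `n^b`, after balancing, is a composition of few pieces of size about `n^(2-ε)`.
Hence under one common restriction all the `h_i` fall, up to a translation of the cube, into a class
of at most `2^(n^(1-α/2-ε))` functions that is independent of the truth tables `f` and `g`. The zero
set of `f(g(u) ⊕ v)` is then the union of `k ≤ n^α` zero sets from this class. With `f` balanced,
one of them has at least `θ²` points for `θ` of order `n^(1-α/2)`, whereas a fixed set of `θ²`
points lies in the zero set of `f(g(u) ⊕ v)` for a fraction at most `2^(-θ)` of the pairs `(f, g)`.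
-/

namespace AndreevBound

open Finset Filter
open scoped Matrix Matrix.Norms.L2Operator symmDiff

section Commutator

/-- The commutator with `N`, as an additive map `x ↦ N * x - x * N`. -/
def ad {A : Type*} [NonUnitalNonAssocRing A] (N : A) : A →+ A :=
  AddMonoidHom.mulLeft N - AddMonoidHom.mulRight N

theorem ad_apply {A : Type*} [NonUnitalNonAssocRing A] (N x : A) : ad N x = N * x - x * N := rfl

theorem ad_mul {A : Type*} [NonUnitalRing A] (N x y : A) :
    ad N (x * y) = ad N x * y + x * ad N y := by
  simp only [ad_apply]; noncomm_ring

theorem ad_one {A : Type*} [NonAssocRing A] (N : A) : ad N 1 = 0 := by simp [ad_apply]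

theorem iterate_derivation_mul {A : Type*} [NonUnitalNonAssocSemiring A] (D : A →+ A)
    (hD : ∀ x y, D (x * y) = D x * y + x * D y) (x y : A) (n : ℕ) :
    D^[n] (x * y) = ∑ p ∈ antidiagonal n, n.choose p.1 • (D^[p.1] x * D^[p.2] y) := by
  induction n with
  | zero => simp
  | succ n ih =>
    rw [sum_antidiagonal_choose_succ_nsmul (fun i j => D^[i] x * D^[j] y) n]
    simp only [Function.iterate_succ_apply', ih, map_sum, map_nsmul, hD, smul_add,
      sum_add_distrib]
    rw [add_comm]
    congr 1
    refine sum_congr rfl fun ⟨i, j⟩ hij ↦ ?_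
    rw [n.choose_symm_of_eq_add (HasAntidiagonal.mem_antidiagonal.1 hij).symm]

theorem iterate_ad_mul {A : Type*} [NonUnitalRing A] (N x y : A) (n : ℕ) :
    (ad N)^[n] (x * y) =
      ∑ p ∈ antidiagonal n, n.choose p.1 • ((ad N)^[p.1] x * (ad N)^[p.2] y) :=
  iterate_derivation_mul _ (ad_mul N) x y n

theorem iterate_ad_one {A : Type*} [NonAssocRing A] (N : A) {k : ℕ} (hk : 0 < k) :
    (ad N)^[k] 1 = 0 := by
  obtain ⟨k, rfl⟩ := Nat.exists_eq_succ_of_ne_zero hk.ne'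
  rw [Function.iterate_succ_apply, ad_one, iterate_map_zero]

theorem iterate_ad_one_sub {A : Type*} [NonAssocRing A] (N x : A) {k : ℕ} (hk : 0 < k) :
    (ad N)^[k] (1 - x) = -(ad N)^[k] x := by
  rw [iterate_map_sub, iterate_ad_one N hk, zero_sub]

theorem star_iterate_ad {A : Type*} [Ring A] [StarRing A] {N x : A} (hN : IsSelfAdjoint N)
    (hx : IsSelfAdjoint x) (k : ℕ) : star ((ad N)^[k] x) = (-1) ^ k * (ad N)^[k] x := by
  have star_ad (y : A) : star (ad N y) = -ad N (star y) := by
    simp [ad_apply, hN.star_eq]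
  induction k with
  | zero => simp [hx.star_eq]
  | succ k ih =>
    rw [Function.iterate_succ_apply', star_ad, ih, pow_succ]
    rcases neg_one_pow_eq_or A k with h | h <;> rw [h] <;> simp

theorem iterate_ad_add_of_commute {A : Type*} [Ring A] {M R x : A} (hM : Commute R M)
    (hx : Commute R x) (k : ℕ) : (ad (M + R))^[k] x = (ad M)^[k] x := by
  suffices h : (ad (M + R))^[k] x = (ad M)^[k] x ∧ Commute R ((ad M)^[k] x) from h.1
  induction k with
  | zero => exact ⟨rfl, hx⟩
  | succ k ih =>
    simp only [Function.iterate_succ_apply', ih.1]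
    refine ⟨?_, ?_⟩
    · simp only [ad_apply, add_mul, mul_add, ih.2.eq]; abel
    · exact (hM.mul_right ih.2).sub_right (ih.2.mul_right hM)

theorem norm_iterate_ad_le {A : Type*} [NonUnitalNormedRing A] (N x : A) (k : ℕ) :
    ‖(ad N)^[k] x‖ ≤ (2 * ‖N‖) ^ k * ‖x‖ := by
  induction k with
  | zero => simp
  | succ k ih =>
    rw [Function.iterate_succ_apply']
    set y := (ad N)^[k] x
    calc ‖ad N y‖ ≤ ‖N * y‖ + ‖y * N‖ := norm_sub_le _ _
      _ ≤ ‖N‖ * ‖y‖ + ‖y‖ * ‖N‖ := add_le_add (norm_mul_le _ _) (norm_mul_le _ _)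
      _ = 2 * ‖N‖ * ‖y‖ := by ring
      _ ≤ 2 * ‖N‖ * ((2 * ‖N‖) ^ k * ‖x‖) := by gcongr
      _ = (2 * ‖N‖) ^ (k + 1) * ‖x‖ := by ring

theorem norm_sum_choose_nsmul_le {A : Type*} [SeminormedAddCommGroup A] {k : ℕ} {t : ℕ × ℕ → A}
    {w : ℝ} {S : Finset (ℕ × ℕ)} (hS : S ⊆ antidiagonal k) (hw : 0 ≤ w)
    (ht : ∀ p ∈ S, ‖t p‖ ≤ w) : ‖∑ p ∈ S, k.choose p.1 • t p‖ ≤ 2 ^ k * w := by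
  have sum_choose : ∑ p ∈ antidiagonal k, (k.choose p.1 : ℝ) = 2 ^ k := by
    rw [Nat.sum_antidiagonal_eq_sum_range_succ_mk]
    exact_mod_cast Nat.sum_range_choose k
  calc ‖∑ p ∈ S, k.choose p.1 • t p‖
      ≤ ∑ p ∈ S, (k.choose p.1 : ℝ) * w :=
        norm_sum_le_of_le S fun p hp => norm_nsmul_le.trans (by gcongr; exact ht p hp)
    _ ≤ ∑ p ∈ antidiagonal k, (k.choose p.1 : ℝ) * w :=
        sum_le_sum_of_subset_of_nonneg hS fun _ _ _ => by positivity
    _ = 2 ^ k * w := by rw [← sum_mul, sum_choose]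

theorem exists_iterate_ad_projection_eq {A : Type*} [NonUnitalNormedRing A] {N P : A}
    (hP : IsIdempotentElem P) {k : ℕ} (hk : 0 < k)
    {w : ℝ} (hw : 0 ≤ w)
    (h : ∀ i j, i + j = k → 0 < i → 0 < j → ‖(ad N)^[i] P‖ * ‖(ad N)^[j] P‖ ≤ w) :
    ∃ R, ‖R‖ ≤ 2 ^ k * w ∧ (ad N)^[k] P = (ad N)^[k] P * P + P * (ad N)^[k] P + R := by
  set S := (antidiagonal k).filter fun p => 0 < p.1 ∧ 0 < p.2 with hS
  refine ⟨∑ p ∈ S, k.choose p.1 • ((ad N)^[p.1] P * (ad N)^[p.2] P), ?_, ?_⟩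
  · refine norm_sum_choose_nsmul_le (t := fun p => (ad N)^[p.1] P * (ad N)^[p.2] P)
      (filter_subset _ _) hw fun p hp => ?_
    simp only [hS, mem_filter, HasAntidiagonal.mem_antidiagonal] at hp
    exact (norm_mul_le _ _).trans (h _ _ hp.1 hp.2.1 hp.2.2)
  · have ends : (antidiagonal k).filter (fun p => ¬(0 < p.1 ∧ 0 < p.2)) = {(0, k), (k, 0)} := by
      ext ⟨a, b⟩
      simp only [mem_filter, HasAntidiagonal.mem_antidiagonal, mem_insert, mem_singleton,
        Prod.mk.injEq]
      omega
    have leibniz := iterate_ad_mul N P P k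
    rw [hP.eq, ← sum_filter_add_sum_filter_not _ (fun p : ℕ × ℕ => 0 < p.1 ∧ 0 < p.2), ends,
      sum_pair (by simp; omega)] at leibniz
    simp only [Function.iterate_zero, id_eq, Nat.choose_zero_right, one_smul,
      Nat.choose_self] at leibniz
    calc (ad N)^[k] P = _ := leibniz
      _ = _ := by rw [add_comm, add_comm (P * _)]

end Commutator

section OffDiagonal

/-- The norm of the off-diagonal block of `(ad N)^k P` relative to the projection `P`. -/
def offDiag {A : Type*} [NormedRing A] (N : A) (k : ℕ) (P : A) : ℝ :=
  ‖(1 - P) * (ad N)^[k] P * P‖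

theorem offDiag_nonneg {A : Type*} [NormedRing A] (N : A) (k : ℕ) (P : A) : 0 ≤ offDiag N k P :=
  norm_nonneg _

theorem offDiag_of_eq_zero_or_one {A : Type*} [NormedRing A] (N : A) {P : A} (hP : P = 0 ∨ P = 1)
    (k : ℕ) :
    offDiag N k P = 0 := by
  rcases hP with rfl | rfl <;> simp [offDiag]

variable {A : Type*} [NormedRing A] [StarRing A] [CStarRing A]

theorem norm_mul_projection_le {P : A} (hP : IsStarProjection P) (x : A) : ‖x * P‖ ≤ ‖x‖ :=
  (norm_mul_le _ _).trans (mul_le_of_le_one_right (norm_nonneg _) hP.norm_le)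

theorem norm_projection_mul_le {P : A} (hP : IsStarProjection P) (x : A) : ‖P * x‖ ≤ ‖x‖ :=
  (norm_mul_le _ _).trans (mul_le_of_le_one_left (norm_nonneg _) hP.norm_le)

theorem norm_sq_le_add_of_projection {P : A} (hP : IsStarProjection P) (z : A) :
    ‖z‖ ^ 2 ≤ ‖P * z‖ ^ 2 + ‖(1 - P) * z‖ ^ 2 := by
  have star_mul_self (Q : A) (hQ : IsStarProjection Q) :
      star (Q * z) * (Q * z) = star z * Q * z := by
    rw [star_mul, hQ.isSelfAdjoint.star_eq, mul_assoc, ← mul_assoc Q, hQ.isIdempotentElem.eq,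
      mul_assoc]
  have h : star z * z = star (P * z) * (P * z) + star ((1 - P) * z) * ((1 - P) * z) := by
    rw [star_mul_self P hP, star_mul_self _ hP.one_sub]; noncomm_ring
  simp only [sq, ← CStarRing.norm_star_mul_self]
  rw [h]
  exact norm_add_le _ _

theorem offDiag_le_norm (N : A) (k : ℕ) {P : A} (hP : IsStarProjection P) :
    offDiag N k P ≤ ‖(ad N)^[k] P‖ :=
  (norm_mul_projection_le hP _).trans (norm_projection_mul_le hP.one_sub _)

theorem norm_upper_block {N P : A} (hN : IsSelfAdjoint N) (hP : IsStarProjection P) (k : ℕ) :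
    ‖P * (ad N)^[k] P * (1 - P)‖ = offDiag N k P := by
  have h : star ((1 - P) * (ad N)^[k] P * P) = P * ((-1) ^ k * (ad N)^[k] P) * (1 - P) := by
    rw [star_mul, star_mul, star_iterate_ad hN hP.isSelfAdjoint, hP.isSelfAdjoint.star_eq,
      hP.one_sub.isSelfAdjoint.star_eq, ← mul_assoc]
  rw [offDiag, ← norm_star ((1 - P) * (ad N)^[k] P * P), h]
  rcases neg_one_pow_eq_or A k with h | h <;> rw [h] <;> simp

theorem offDiag_one_sub {N P : A} (hN : IsSelfAdjoint N) (hP : IsStarProjection P) {k : ℕ}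
    (hk : 0 < k) : offDiag N k (1 - P) = offDiag N k P := by
  rw [← norm_upper_block hN hP, offDiag, iterate_ad_one_sub N P hk]
  simp

/-- The hypothesis says that the diagonal blocks of `Z` are, up to sign, those of `R`. -/
theorem norm_le_of_eq_anticommutator_add {P Z R : A} (hP : IsStarProjection P)
    (hZ : Z = Z * P + P * Z + R) :
    ‖Z‖ ≤ ‖(1 - P) * Z * P‖ + ‖P * Z * (1 - P)‖ + 2 * ‖R‖ := by
  have hPP : P * P = P := hP.isIdempotentElem
  have upper_left : P * Z * P = -(P * R * P) := by
    have h : P * Z * P = P * Z * P + P * Z * P + P * R * P :=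
      calc P * Z * P = P * (Z * P + P * Z + R) * P := by rw [← hZ]
        _ = P * Z * (P * P) + P * P * Z * P + P * R * P := by noncomm_ring
        _ = _ := by rw [hPP]
    exact eq_neg_of_add_eq_zero_left (by simpa [add_assoc] using h)
  have lower_right : (1 - P) * Z * (1 - P) = (1 - P) * R * (1 - P) :=
    calc (1 - P) * Z * (1 - P) = (1 - P) * (Z * P + P * Z + R) * (1 - P) := by rw [← hZ]
      _ = (1 - P) * Z * (P * (1 - P)) + (1 - P) * P * Z * (1 - P) + (1 - P) * R * (1 - P) := by
        noncomm_ring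
      _ = _ := by rw [hP.mul_one_sub_self, hP.one_sub_mul_self]; simp
  have blocks : Z = (1 - P) * Z * P + P * Z * (1 - P) +
      (P * Z * P + (1 - P) * Z * (1 - P)) := by noncomm_ring
  have norm_upper_left : ‖P * Z * P‖ ≤ ‖R‖ := by
    rw [upper_left, norm_neg]
    exact (norm_mul_projection_le hP _).trans (norm_projection_mul_le hP _)
  have norm_lower_right : ‖(1 - P) * Z * (1 - P)‖ ≤ ‖R‖ := by
    rw [lower_right]
    exact (norm_mul_projection_le hP.one_sub _).trans (norm_projection_mul_le hP.one_sub _)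
  calc ‖Z‖ ≤ ‖(1 - P) * Z * P‖ + ‖P * Z * (1 - P)‖ +
        (‖P * Z * P‖ + ‖(1 - P) * Z * (1 - P)‖) := by
        conv_lhs => rw [blocks]
        exact (norm_add_le _ _).trans (add_le_add (norm_add_le _ _) (norm_add_le _ _))
    _ ≤ _ := by linarith

theorem norm_iterate_ad_le_offDiag {N P : A} (hN : IsSelfAdjoint N) (hP : IsStarProjection P)
    {k : ℕ} (hk : 0 < k) {w : ℝ} (hw : 0 ≤ w)
    (h : ∀ i j, i + j = k → 0 < i → 0 < j → ‖(ad N)^[i] P‖ * ‖(ad N)^[j] P‖ ≤ w) :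
    ‖(ad N)^[k] P‖ ≤ 2 * offDiag N k P + 2 * (2 ^ k * w) := by
  obtain ⟨R, hR, hZ⟩ := exists_iterate_ad_projection_eq hP.isIdempotentElem hk hw h
  have := norm_le_of_eq_anticommutator_add hP hZ
  rw [norm_upper_block hN hP] at this
  change _ ≤ offDiag N k P + _ + _ at this
  linarith

theorem norm_half_block_mul_le {N P Q : A} (hP : IsStarProjection P) (hQ : IsStarProjection Q)
    (hPQ : Commute P Q) {k : ℕ} {w : ℝ} (hw : 0 ≤ w)
    (h : ∀ i j, i + j = k → 0 < i → 0 < j → ‖(ad N)^[i] P‖ * ‖(ad N)^[j] Q‖ ≤ w) :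
    ‖(1 - P) * (ad N)^[k] (P * Q) * (P * Q)‖ ≤ offDiag N k P + 2 ^ k * w := by
  set t : ℕ × ℕ → A := fun p => (1 - P) * (ad N)^[p.1] P * (ad N)^[p.2] Q * (P * Q) with ht
  have expand : (1 - P) * (ad N)^[k] (P * Q) * (P * Q) =
      ∑ p ∈ antidiagonal k, k.choose p.1 • t p := by
    rw [iterate_ad_mul, mul_sum, sum_mul]
    simp only [ht, mul_smul_comm, smul_mul_assoc, mul_assoc]
  have main_term : t (k, 0) = (1 - P) * (ad N)^[k] P * P * Q := by
    simp only [ht, Function.iterate_zero, id_eq]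
    rw [hPQ.eq, mul_assoc _ Q, ← mul_assoc Q Q, hQ.isIdempotentElem.eq, ← hPQ.eq, mul_assoc _ P Q]
  rw [expand, ← add_sum_erase _ _ (show (k, 0) ∈ antidiagonal k by simp)]
  refine (norm_add_le _ _).trans (add_le_add ?_ ?_)
  · rw [Nat.choose_self, one_smul, main_term]
    exact norm_mul_projection_le hQ _
  · refine norm_sum_choose_nsmul_le (erase_subset _ _) hw ?_
    rintro ⟨i, j⟩ hp
    simp only [mem_erase, HasAntidiagonal.mem_antidiagonal, ne_eq, Prod.mk.injEq] at hp
    rcases Nat.eq_zero_or_pos i with rfl | hi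
    · simpa [ht, hP.one_sub_mul_self] using hw
    · refine (norm_mul_projection_le (hP.mul hQ hPQ) _).trans ?_
      rw [mul_assoc]
      exact (norm_projection_mul_le hP.one_sub _).trans
        ((norm_mul_le _ _).trans (h i j hp.2 hi (by omega)))

theorem offDiag_mul_sq_le {N P Q : A} (hP : IsStarProjection P) (hQ : IsStarProjection Q)
    (hPQ : Commute P Q) {k : ℕ} {w : ℝ} (hw : 0 ≤ w)
    (h : ∀ i j, i + j = k → 0 < i → 0 < j → ‖(ad N)^[i] P‖ * ‖(ad N)^[j] Q‖ ≤ w) :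
    offDiag N k (P * Q) ^ 2 ≤
      (offDiag N k P + 2 ^ k * w) ^ 2 + (offDiag N k Q + 2 ^ k * w) ^ 2 := by
  have hPP : P * P = P := hP.isIdempotentElem
  have hP_half := norm_half_block_mul_le hP hQ hPQ hw h
  have hQ_half := norm_half_block_mul_le (k := k) hQ hP hPQ.symm hw
    fun i j hij hi hj => by rw [mul_comm]; exact h j i (by omega) hj hi
  have complement_part : (1 - P) * ((1 - P * Q) * (ad N)^[k] (P * Q) * (P * Q)) =
      (1 - P) * (ad N)^[k] (P * Q) * (P * Q) := by
    have : (1 - P) * (1 - P * Q) = 1 - P := by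
      rw [mul_sub, ← mul_assoc, hP.one_sub_mul_self]; simp
    rw [mul_assoc (1 - P * Q), ← mul_assoc (1 - P), this, mul_assoc]
  have range_part : P * ((1 - P * Q) * (ad N)^[k] (P * Q) * (P * Q)) =
      P * ((1 - Q) * (ad N)^[k] (Q * P) * (Q * P)) := by
    have : P * (1 - P * Q) = P * (1 - Q) := by rw [mul_sub, mul_sub, ← mul_assoc, hPP]
    rw [mul_assoc (1 - P * Q), ← mul_assoc P, this, hPQ.eq, mul_assoc P, mul_assoc (1 - Q)]
  have pythagoras := norm_sq_le_add_of_projection hP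
    ((1 - P * Q) * (ad N)^[k] (P * Q) * (P * Q))
  rw [complement_part, range_part] at pythagoras
  have hQ_part := (norm_projection_mul_le hP _).trans hQ_half
  calc offDiag N k (P * Q) ^ 2 ≤ _ := pythagoras
    _ ≤ (offDiag N k Q + 2 ^ k * w) ^ 2 + (offDiag N k P + 2 ^ k * w) ^ 2 := by gcongr
    _ = _ := add_comm _ _

end OffDiagonal

section Moments

theorem pow_mul_pow_le_add_pow_sub {a b : ℝ} (ha : 0 ≤ a) (hb : 0 ≤ b) {i j : ℕ} (hi : i ≠ 0)
    (hj : j ≠ 0) : a ^ i * b ^ j ≤ (a + b) ^ (i + j) - a ^ (i + j) - b ^ (i + j) := by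
  have h : (a ^ i + b ^ i) * (a ^ j + b ^ j) ≤ (a + b) ^ i * (a + b) ^ j :=
    mul_le_mul (pow_add_pow_le ha hb hi) (pow_add_pow_le ha hb hj) (by positivity) (by positivity)
  have : 0 ≤ b ^ i * a ^ j := by positivity
  simp only [pow_add]
  linarith

theorem add_sq_le_one_add_div {x e D : ℝ} (hD : 0 < D) :
    (x + e) ^ 2 ≤ (1 + 1 / D) * x ^ 2 + (1 + D) * e ^ 2 := by
  have h : (1 + 1 / D) * x ^ 2 + (1 + D) * e ^ 2 - (x + e) ^ 2 = (x - D * e) ^ 2 / D := by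
    field_simp; ring
  have : 0 ≤ (x - D * e) ^ 2 / D := by positivity
  linarith

theorem one_add_one_div_pow_le_three {D d : ℕ} (hd : d ≤ D) : (1 + 1 / (D : ℝ)) ^ d ≤ 3 := by
  rcases Nat.eq_zero_or_pos D with rfl | hD
  · simp [Nat.le_zero.1 hd]
  calc (1 + 1 / (D : ℝ)) ^ d ≤ Real.exp (1 / D) ^ d := by
        gcongr; linarith [Real.add_one_le_exp (1 / (D : ℝ))]
    _ = Real.exp (d * (1 / D)) := by rw [← Real.exp_nat_mul]
    _ ≤ Real.exp 1 := by
        rw [mul_one_div]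
        gcongr
        exact div_le_one_of_le₀ (by exact_mod_cast hd) (by positivity)
    _ ≤ 3 := by linarith [Real.exp_one_lt_d9]

variable {A : Type*} [NormedRing A] [StarRing A] [CStarRing A]

/-- The error terms are superadditive: `√a ^ i * √b ^ j` is at most the square root of
`(a + b) ^ k - a ^ k - b ^ k`, which pays for them in the induction over a formula whose
subformulas have sizes `a` and `b`. -/
theorem offDiag_mul_sq_le_of_moments {N P Q : A} (hP : IsStarProjection P)
    (hQ : IsStarProjection Q) (hPQ : Commute P Q) {k : ℕ} {W a b : ℝ} (ha : 0 ≤ a) (hb : 0 ≤ b)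
    (hPW : ∀ j < k, 0 < j → ‖(ad N)^[j] P‖ ≤ W * √a ^ j)
    (hQW : ∀ j < k, 0 < j → ‖(ad N)^[j] Q‖ ≤ W * √b ^ j) {D : ℝ} (hD : 0 < D) (hk : k ≠ 0) :
    offDiag N k (P * Q) ^ 2 ≤ (1 + 1 / D) * (offDiag N k P ^ 2 + offDiag N k Q ^ 2) +
      2 * (1 + D) * (2 ^ k * W ^ 2) ^ 2 * ((a + b) ^ k - a ^ k - b ^ k) := by
  set G := (a + b) ^ k - a ^ k - b ^ k with hG
  have hG0 : 0 ≤ G := by linarith [pow_add_pow_le ha hb hk]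
  have mixed (i j : ℕ) (hij : i + j = k) (hi : 0 < i) (hj : 0 < j) :
      ‖(ad N)^[i] P‖ * ‖(ad N)^[j] Q‖ ≤ W ^ 2 * √G := by
    have hiP := hPW i (by omega) hi
    have hsqrt : √a ^ i * √b ^ j ≤ √G := by
      refine Real.le_sqrt_of_sq_le ?_
      rw [mul_pow, pow_right_comm, pow_right_comm √b, Real.sq_sqrt ha, Real.sq_sqrt hb, hG, ← hij]
      exact pow_mul_pow_le_add_pow_sub ha hb hi.ne' hj.ne'
    calc ‖(ad N)^[i] P‖ * ‖(ad N)^[j] Q‖ ≤ W * √a ^ i * (W * √b ^ j) :=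
          mul_le_mul hiP (hQW j (by omega) hj) (norm_nonneg _) ((norm_nonneg _).trans hiP)
      _ = W ^ 2 * (√a ^ i * √b ^ j) := by ring
      _ ≤ W ^ 2 * √G := by gcongr
  have error_sq : (2 ^ k * (W ^ 2 * √G)) ^ 2 = (2 ^ k * W ^ 2) ^ 2 * G := by
    rw [← mul_assoc, mul_pow, Real.sq_sqrt hG0]
  have key := offDiag_mul_sq_le hP hQ hPQ (by positivity) mixed
  have hP_sq := add_sq_le_one_add_div (x := offDiag N k P) (e := 2 ^ k * (W ^ 2 * √G)) hD
  have hQ_sq := add_sq_le_one_add_div (x := offDiag N k Q) (e := 2 ^ k * (W ^ 2 * √G)) hD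
  rw [error_sq] at hP_sq hQ_sq
  linarith

theorem offDiag_mul_sq_le_depth {N P Q : A} (hP : IsStarProjection P)
    (hQ : IsStarProjection Q) (hPQ : Commute P Q) {k : ℕ} (hk : k ≠ 0) {W a b : ℝ} (ha : 0 ≤ a)
    (hb : 0 ≤ b) (hPW : ∀ j < k, 0 < j → ‖(ad N)^[j] P‖ ≤ W * √a ^ j)
    (hQW : ∀ j < k, 0 < j → ‖(ad N)^[j] Q‖ ≤ W * √b ^ j) {D M : ℝ} (hD : 0 < D)
    (hM : 2 * (1 + D) * (2 ^ k * W ^ 2) ^ 2 ≤ M) {dP dQ : ℕ}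
    (hoffP : offDiag N k P ^ 2 ≤ (1 + 1 / D) ^ dP * M * a ^ k)
    (hoffQ : offDiag N k Q ^ 2 ≤ (1 + 1 / D) ^ dQ * M * b ^ k) :
    offDiag N k (P * Q) ^ 2 ≤ (1 + 1 / D) ^ (max dP dQ + 1) * M * (a + b) ^ k := by
  have hM0 : 0 ≤ M := le_trans (by positivity) hM
  set r := 1 + 1 / D
  have hr : 1 ≤ r := le_add_of_nonneg_right (by positivity)
  set d := max dP dQ
  have hG : 0 ≤ (a + b) ^ k - a ^ k - b ^ k := by linarith [pow_add_pow_le ha hb hk]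
  have hP_depth : offDiag N k P ^ 2 ≤ r ^ d * M * a ^ k :=
    hoffP.trans (by gcongr; exact le_max_left _ _)
  have hQ_depth : offDiag N k Q ^ 2 ≤ r ^ d * M * b ^ k :=
    hoffQ.trans (by gcongr; exact le_max_right _ _)
  calc offDiag N k (P * Q) ^ 2 ≤ r * (offDiag N k P ^ 2 + offDiag N k Q ^ 2) +
        2 * (1 + D) * (2 ^ k * W ^ 2) ^ 2 * ((a + b) ^ k - a ^ k - b ^ k) :=
        offDiag_mul_sq_le_of_moments hP hQ hPQ ha hb hPW hQW hD hk
    _ ≤ r * (r ^ d * M * a ^ k + r ^ d * M * b ^ k) +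
        r ^ (d + 1) * M * ((a + b) ^ k - a ^ k - b ^ k) := by
        refine add_le_add (by gcongr) (mul_le_mul_of_nonneg_right ?_ hG)
        exact hM.trans (le_mul_of_one_le_left hM0 (one_le_pow₀ hr))
    _ = r ^ (d + 1) * M * (a + b) ^ k := by ring

end Moments

section Cube

/-- The point of the cube obtained from `x` by negating coordinate `j`. -/
def flipAt {ι : Type*} [DecidableEq ι] (j : ι) (x : ι → Bool) : ι → Bool :=
  Function.update x j (!x j)

theorem flipAt_self {ι : Type*} [DecidableEq ι] (j : ι) (x : ι → Bool) :
    flipAt j x j = !x j := by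
  simp [flipAt]

theorem flipAt_of_ne {ι : Type*} [DecidableEq ι] {i j : ι} (h : i ≠ j) (x : ι → Bool) :
    flipAt j x i = x i := by
  simp [flipAt, h]

theorem flipAt_involutive {ι : Type*} [DecidableEq ι] (j : ι) :
    Function.Involutive (flipAt (ι := ι) j) := fun x => by
  simp [flipAt]

theorem flipAt_comm {ι : Type*} [DecidableEq ι] (i j : ι) (x : ι → Bool) :
    flipAt i (flipAt j x) = flipAt j (flipAt i x) := by
  rcases eq_or_ne i j with rfl | h
  · rfl
  · simp [flipAt, h, h.symm, Function.update_comm h]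

/-- The flip of coordinate `j` as a permutation of the cube. -/
def flipPerm {ι : Type*} [DecidableEq ι] (j : ι) : Equiv.Perm (ι → Bool) :=
  (flipAt_involutive j).toPerm

/-- The real-valued indicator of a Boolean function. -/
def indicator {X : Type*} (h : X → Bool) : X → ℝ := fun x => if h x then 1 else 0

/-- The diagonal matrix of a Boolean function: the projection onto the points where it is true. -/
def boolDiagonal {X : Type*} [DecidableEq X] (h : X → Bool) : Matrix X X ℝ :=
  Matrix.diagonal (indicator h)

theorem boolDiagonal_const {X : Type*} [DecidableEq X] (b : Bool) :
    boolDiagonal (fun _ : X => b) = 0 ∨ boolDiagonal (fun _ : X => b) = 1 := by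
  have h : indicator (fun _ : X => b) = fun _ => if b then 1 else 0 := rfl
  rw [boolDiagonal, h]
  cases b <;> simp

section BoolDiagonal

variable {X : Type*} [Fintype X] [DecidableEq X]

theorem isStarProjection_boolDiagonal (h : X → Bool) : IsStarProjection (boolDiagonal h) where
  isIdempotentElem := by
    simp [IsIdempotentElem, boolDiagonal, indicator, Matrix.diagonal_mul_diagonal]
  isSelfAdjoint := by
    simp [IsSelfAdjoint, boolDiagonal, Matrix.star_eq_conjTranspose]

theorem commute_boolDiagonal (h h' : X → Bool) :
    Commute (boolDiagonal h) (boolDiagonal h') :=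
  Matrix.commute_diagonal _ _

theorem boolDiagonal_nand (h h' : X → Bool) :
    boolDiagonal (fun x => !(h x && h' x)) = 1 - boolDiagonal h * boolDiagonal h' := by
  rw [boolDiagonal, boolDiagonal, boolDiagonal, Matrix.diagonal_mul_diagonal,
    ← Matrix.diagonal_one, Matrix.diagonal_sub]
  congr 1
  funext x
  cases hx : h x <;> cases hx' : h' x <;> simp [indicator, hx, hx']

theorem boolDiagonal_mulVec_one (h : X → Bool) : boolDiagonal h *ᵥ 1 = indicator h := by
  funext x; simp [boolDiagonal, Matrix.mulVec_diagonal]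

end BoolDiagonal

section Matrix

theorem mulVec_dotProduct_mulVec_of_isSelfAdjoint {X : Type*} [Fintype X] {M : Matrix X X ℝ}
    (hM : IsSelfAdjoint M) (v : X → ℝ) : M *ᵥ v ⬝ᵥ M *ᵥ v = v ⬝ᵥ (M * M) *ᵥ v := by
  have symm : Mᵀ = M := by
    rw [← Matrix.conjTranspose_eq_transpose_of_trivial]; exact hM
  rw [Matrix.dotProduct_mulVec, ← Matrix.mulVec_transpose, symm, Matrix.mulVec_mulVec,
    dotProduct_comm]

variable {X : Type*} [Fintype X] [DecidableEq X]

theorem iterate_ad_mulVec {N : Matrix X X ℝ} {v : X → ℝ} (hv : N *ᵥ v = 0) (M : Matrix X X ℝ)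
    (k : ℕ) : (ad N)^[k] M *ᵥ v = (N ^ k) *ᵥ (M *ᵥ v) := by
  induction k with
  | zero => simp
  | succ k ih =>
    rw [Function.iterate_succ_apply', ad_apply, Matrix.sub_mulVec, ← Matrix.mulVec_mulVec,
      ← Matrix.mulVec_mulVec, hv, Matrix.mulVec_zero, sub_zero, ih, pow_succ',
      ← Matrix.mulVec_mulVec]

theorem mulVec_one_dotProduct_self_le (M : Matrix X X ℝ) :
    M *ᵥ 1 ⬝ᵥ M *ᵥ 1 ≤ ‖M‖ ^ 2 * Fintype.card X := by
  have h := pow_le_pow_left₀ (norm_nonneg _) (Matrix.l2_opNorm_mulVec M (WithLp.toLp 2 1)) 2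
  rw [mul_pow, EuclideanSpace.norm_sq_eq, EuclideanSpace.norm_sq_eq] at h
  simpa [dotProduct, sq] using h

end Matrix

variable {ι : Type*} [Fintype ι] [DecidableEq ι]

/-- The matrix of the discrete derivative `f ↦ f - f ∘ flipAt j` in direction `j`. -/
noncomputable def diffMatrix (j : ι) : Matrix (ι → Bool) (ι → Bool) ℝ :=
  1 - (flipPerm j).permMatrix ℝ

theorem diffMatrix_mulVec (j : ι) (f : (ι → Bool) → ℝ) (x : ι → Bool) :
    (diffMatrix j *ᵥ f) x = f x - f (flipAt j x) := by
  simp [diffMatrix, Matrix.sub_mulVec, Matrix.permMatrix_mulVec, flipPerm]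

theorem isSelfAdjoint_diffMatrix (j : ι) : IsSelfAdjoint (diffMatrix j) := by
  have h : (flipPerm j)⁻¹ = flipPerm j := (flipAt_involutive j).toPerm_symm
  rw [IsSelfAdjoint, diffMatrix, star_sub, star_one, Matrix.star_eq_conjTranspose,
    Matrix.conjTranspose_permMatrix, h]

theorem commute_diffMatrix (i j : ι) : Commute (diffMatrix i) (diffMatrix j) := by
  have h : Commute ((flipPerm i).permMatrix ℝ) ((flipPerm j).permMatrix ℝ) := by
    rw [Commute, SemiconjBy, ← Matrix.permMatrix_mul, ← Matrix.permMatrix_mul]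
    congr 1
    exact Equiv.ext (flipAt_comm j i)
  exact (Commute.one_left _).sub_left ((Commute.one_right _).sub_right h)

theorem diffMatrix_mul_self (j : ι) : diffMatrix j * diffMatrix j = (2 : ℝ) • diffMatrix j := by
  have h : (flipPerm j).permMatrix ℝ * (flipPerm j).permMatrix ℝ = 1 := by
    rw [← Matrix.permMatrix_mul, ← Matrix.permMatrix_one]
    congr 1
    exact Equiv.ext (flipAt_involutive j)
  simp only [diffMatrix, mul_sub, sub_mul, h, two_smul, mul_one, one_mul]
  abel

theorem norm_diffMatrix_le (j : ι) : ‖diffMatrix j‖ ≤ 2 :=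
  calc ‖diffMatrix j‖ ≤ ‖(1 : Matrix (ι → Bool) (ι → Bool) ℝ)‖ + ‖(flipPerm j).permMatrix ℝ‖ :=
        norm_sub_le _ _
    _ ≤ 1 + 1 := add_le_add (IsStarProjection.one _).norm_le (Matrix.permMatrix_l2_opNorm_le _)
    _ = 2 := one_add_one_eq_two

theorem commute_diffMatrix_boolDiagonal {j : ι} {h : (ι → Bool) → Bool}
    (hj : ∀ x, h (flipAt j x) = h x) : Commute (diffMatrix j) (boolDiagonal h) := by
  refine (Commute.one_left _).sub_left ?_
  ext x y
  simp only [boolDiagonal, Matrix.mul_diagonal, Matrix.diagonal_mul, Equiv.Perm.permMatrix,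
    PEquiv.toMatrix_apply, Equiv.toPEquiv_apply, flipPerm, Function.Involutive.coe_toPerm,
    Option.mem_some_iff]
  split_ifs with hxy
  · simp [indicator, ← hxy, hj]
  · simp

/-- The Laplacian of the cube, i.e. the number operator scaled by two: it acts on the Fourier
character of a set `S` as multiplication by `2 * #S`. -/
noncomputable def laplacian (ι : Type*) [Fintype ι] [DecidableEq ι] :
    Matrix (ι → Bool) (ι → Bool) ℝ :=
  ∑ j, diffMatrix j

theorem isSelfAdjoint_laplacian : IsSelfAdjoint (laplacian ι) :=
  isSelfAdjoint_sum _ fun j _ => isSelfAdjoint_diffMatrix j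

theorem laplacian_mulVec_one : laplacian ι *ᵥ 1 = 0 := by
  funext x
  simp [laplacian, Matrix.sum_mulVec, diffMatrix_mulVec]

theorem norm_iterate_ad_laplacian_coordinate_le (i : ι) (k : ℕ) :
    ‖(ad (laplacian ι))^[k] (boolDiagonal fun x => x i)‖ ≤ 4 ^ k := by
  set R := ∑ j ∈ univ.erase i, diffMatrix j
  have split : laplacian ι = diffMatrix i + R := (add_sum_erase _ _ (mem_univ i)).symm
  have commute_diff : Commute R (diffMatrix i) :=
    Commute.sum_left _ _ _ fun j _ => commute_diffMatrix j i
  have commute_coordinate : Commute R (boolDiagonal fun x => x i) :=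
    Commute.sum_left _ _ _ fun j hj =>
      commute_diffMatrix_boolDiagonal fun x => flipAt_of_ne (ne_of_mem_erase hj).symm x
  rw [split, iterate_ad_add_of_commute commute_diff commute_coordinate]
  calc _ ≤ (2 * ‖diffMatrix i‖) ^ k * ‖boolDiagonal fun x : ι → Bool => x i‖ :=
        norm_iterate_ad_le _ _ _
    _ ≤ (2 * 2) ^ k * 1 := by
        gcongr
        exacts [norm_diffMatrix_le i, (isStarProjection_boolDiagonal _).norm_le]
    _ = 4 ^ k := by norm_num

/-- The matrix of the iterated discrete derivative in the directions listed by `l`. -/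
noncomputable def iterDiff (l : List ι) : Matrix (ι → Bool) (ι → Bool) ℝ :=
  (l.map diffMatrix).prod

theorem iterDiff_nil : iterDiff ([] : List ι) = 1 := rfl

theorem iterDiff_cons (j : ι) (l : List ι) : iterDiff (j :: l) = diffMatrix j * iterDiff l := by
  simp [iterDiff]

theorem iterDiff_cons_mulVec (j : ι) (l : List ι) (f : (ι → Bool) → ℝ) (x : ι → Bool) :
    (iterDiff (j :: l) *ᵥ f) x = (iterDiff l *ᵥ f) x - (iterDiff l *ᵥ f) (flipAt j x) := by
  rw [iterDiff_cons, ← Matrix.mulVec_mulVec, diffMatrix_mulVec]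

theorem commute_diffMatrix_iterDiff (j : ι) (l : List ι) :
    Commute (diffMatrix j) (iterDiff l) :=
  Commute.list_prod_right _ _ fun M hM => by
    obtain ⟨i, -, rfl⟩ := List.mem_map.1 hM
    exact commute_diffMatrix j i

theorem isSelfAdjoint_iterDiff (l : List ι) : IsSelfAdjoint (iterDiff l) := by
  induction l with
  | nil => exact IsSelfAdjoint.one _
  | cons j l ih =>
    rw [iterDiff_cons]
    exact ((isSelfAdjoint_diffMatrix j).commute_iff ih).1 (commute_diffMatrix_iterDiff j l)

theorem iterDiff_mul_self (l : List ι) :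
    iterDiff l * iterDiff l = (2 ^ l.length : ℝ) • iterDiff l := by
  induction l with
  | nil => simp [iterDiff_nil]
  | cons j l ih =>
    rw [iterDiff_cons, (commute_diffMatrix_iterDiff j l).symm.mul_mul_mul_comm,
      diffMatrix_mul_self, ih, smul_mul_smul_comm, List.length_cons, pow_succ']

theorem sum_iterDiff_ofFn (p : ℕ) :
    ∑ v : Fin p → ι, iterDiff (List.ofFn v) = laplacian ι ^ p := by
  induction p with
  | zero => simp [iterDiff_nil]
  | succ p ih =>
    rw [← (Fin.consEquiv fun _ : Fin (p + 1) => ι).sum_comp, Fintype.sum_prod_type, pow_succ',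
      laplacian, sum_mul, ← laplacian, ← ih]
    refine sum_congr rfl fun j _ => ?_
    rw [mul_sum]
    exact sum_congr rfl fun v _ => by simp [Fin.consEquiv, iterDiff_cons]

theorem sum_sq_iterDiff_le (q : ℕ) (h : (ι → Bool) → Bool) :
    ∑ v : Fin (2 * q) → ι, ∑ x, (iterDiff (List.ofFn v) *ᵥ indicator h) x ^ 2 ≤
      4 ^ q * ‖(ad (laplacian ι))^[q] (boolDiagonal h)‖ ^ 2 * 2 ^ Fintype.card ι := by
  set N := laplacian ι
  set f := indicator h
  have energy (v : Fin (2 * q) → ι) : ∑ x, (iterDiff (List.ofFn v) *ᵥ f) x ^ 2 =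
      4 ^ q * (f ⬝ᵥ iterDiff (List.ofFn v) *ᵥ f) := by
    have := mulVec_dotProduct_mulVec_of_isSelfAdjoint (isSelfAdjoint_iterDiff (List.ofFn v)) f
    rw [iterDiff_mul_self, List.length_ofFn, pow_mul, Matrix.smul_mulVec, dotProduct_smul,
      smul_eq_mul] at this
    norm_num at this
    simpa only [dotProduct, sq] using this
  calc _ = 4 ^ q * (f ⬝ᵥ (N ^ (2 * q)) *ᵥ f) := by
        simp only [energy, ← mul_sum, ← dotProduct_sum, ← Matrix.sum_mulVec, sum_iterDiff_ofFn, N]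
    _ = 4 ^ q * ((N ^ q) *ᵥ f ⬝ᵥ (N ^ q) *ᵥ f) := by
        rw [mulVec_dotProduct_mulVec_of_isSelfAdjoint (isSelfAdjoint_laplacian.pow q), two_mul,
          pow_add]
    _ = 4 ^ q * ((ad N)^[q] (boolDiagonal h) *ᵥ 1 ⬝ᵥ (ad N)^[q] (boolDiagonal h) *ᵥ 1) := by
        rw [iterate_ad_mulVec laplacian_mulVec_one, boolDiagonal_mulVec_one]
    _ ≤ 4 ^ q * (‖(ad N)^[q] (boolDiagonal h)‖ ^ 2 * Fintype.card (ι → Bool)) := by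
        gcongr
        exact mulVec_one_dotProduct_self_le _
    _ = _ := by simp [mul_assoc]

end Cube

section NandFormula

/-- Formulas over the complete basis of binary NAND gates, with constants as leaves. A De Morgan
formula translates into this basis without any increase in size, and a single kind of gate keeps
inductions over formulas short. -/
inductive NandFormula (ι : Type*) : Type _
  | const (b : Bool) : NandFormula ι
  | var (i : ι) : NandFormula ι
  | nand (φ ψ : NandFormula ι) : NandFormula ι

namespace NandFormula

/-- Evaluation of a NAND formula on an assignment. -/
def eval {ι : Type*} : NandFormula ι → (ι → Bool) → Bool
  | const b, _ => b
  | var i, x => x i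
  | nand φ ψ, x => !(φ.eval x && ψ.eval x)

/-- The size of a NAND formula: the number of leaves labelled by variables. Constants are free. -/
def size {ι : Type*} : NandFormula ι → ℕ
  | const _ => 0
  | var _ => 1
  | nand φ ψ => φ.size + ψ.size

/-- The depth of a NAND formula: the maximal number of gates on a root-to-leaf path. -/
def depth {ι : Type*} : NandFormula ι → ℕ
  | const _ => 0
  | var _ => 0
  | nand φ ψ => max φ.depth ψ.depth + 1

end NandFormula

/-- The bound on the first `q` commutator moments of formulas of depth at most `D`; for fixed `q`
it is a constant multiple of a power of `D`. -/
def momentConst (D : ℕ) : ℕ → ℝ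
  | 0 => 1
  | k + 1 => 32 * 16 ^ (k + 1) * D * momentConst D k ^ 4

theorem one_le_momentConst {D : ℕ} (hD : 0 < D) (q : ℕ) : 1 ≤ momentConst D q := by
  induction q with
  | zero => exact le_rfl
  | succ q ih =>
    refine one_le_mul_of_one_le_of_one_le (one_le_mul_of_one_le_of_one_le
      (one_le_mul_of_one_le_of_one_le (by norm_num) (one_le_pow₀ (by norm_num))) ?_)
      (one_le_pow₀ ih)
    exact_mod_cast hD

theorem momentConst_le_succ {D : ℕ} (hD : 0 < D) (q : ℕ) :
    momentConst D q ≤ momentConst D (q + 1) := by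
  have hD' : (1 : ℝ) ≤ D := by exact_mod_cast hD
  have h := one_le_momentConst hD q
  calc momentConst D q ≤ momentConst D q ^ 4 := le_self_pow₀ h (by norm_num)
    _ ≤ 32 * 16 ^ (q + 1) * D * momentConst D q ^ 4 := by
        refine le_mul_of_one_le_left (by positivity) ?_
        exact one_le_mul_of_one_le_of_one_le
          (one_le_mul_of_one_le_of_one_le (by norm_num) (one_le_pow₀ (by norm_num))) hD'

theorem exists_momentConst_eq_mul_pow (q : ℕ) :
    ∃ e : ℕ, ∀ D, momentConst D q = momentConst 1 q * D ^ e := by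
  induction q with
  | zero => exact ⟨0, fun D => by simp [momentConst]⟩
  | succ q ih =>
    obtain ⟨e, he⟩ := ih
    refine ⟨4 * e + 1, fun D => ?_⟩
    simp only [momentConst, he D]
    push_cast
    ring

theorem two_mul_add_le_of_sq_le {k D : ℕ} (hD : 0 < D) {W x r : ℝ} (hW : 1 ≤ W) (hr : 0 ≤ r)
    (hx : x ^ 2 ≤ 3 * (2 * (1 + D) * (2 ^ k * W ^ 2) ^ 2 + 16 ^ k) * r ^ 2) :
    2 * x + 2 * (2 ^ k * (W ^ 2 * r)) ≤ 32 * 16 ^ k * D * W ^ 4 * r := by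
  have hD' : (1 : ℝ) ≤ D := by exact_mod_cast hD
  have two_pow_sq : ((2 : ℝ) ^ k) ^ 2 = 4 ^ k := by rw [pow_right_comm]; norm_num
  have hW4 : 1 ≤ W ^ 4 := one_le_pow₀ hW
  set X := 16 ^ k * D * W ^ 4 with hX
  have hX1 : 1 ≤ X := one_le_mul_of_one_le_of_one_le
    (one_le_mul_of_one_le_of_one_le (one_le_pow₀ (by norm_num)) hD') hW4
  have off_const : 2 * (1 + D) * (2 ^ k * W ^ 2) ^ 2 + 16 ^ k ≤ 5 * X :=
    calc 2 * (1 + (D : ℝ)) * (2 ^ k * W ^ 2) ^ 2 + 16 ^ k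
        = 2 * (1 + D) * (4 ^ k * W ^ 4) + 16 ^ k * 1 * 1 := by rw [mul_pow, two_pow_sq]; ring
      _ ≤ 2 * (D + D) * (16 ^ k * W ^ 4) + 16 ^ k * D * W ^ 4 := by gcongr; norm_num
      _ = 5 * X := by ring
  have mixed_const : 2 ^ k * W ^ 2 ≤ X :=
    calc 2 ^ k * W ^ 2 = 2 ^ k * 1 * W ^ 2 := by ring
      _ ≤ X := by rw [hX]; gcongr <;> norm_num
  have hx_le : x ≤ 15 * X * r := by
    refine le_of_sq_le_sq (hx.trans ?_) (by positivity)
    calc 3 * (2 * (1 + D) * (2 ^ k * W ^ 2) ^ 2 + 16 ^ k) * r ^ 2 ≤ 3 * (5 * X) * r ^ 2 := by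
          gcongr
      _ = 15 * X * 1 * r ^ 2 := by ring
      _ ≤ 15 * X * (15 * X) * r ^ 2 := by gcongr; linarith
      _ = (15 * X * r) ^ 2 := by ring
  calc 2 * x + 2 * (2 ^ k * (W ^ 2 * r)) = 2 * x + 2 * (2 ^ k * W ^ 2) * r := by ring
    _ ≤ 2 * (15 * X * r) + 2 * X * r := by gcongr
    _ = 32 * 16 ^ k * D * W ^ 4 * r := by rw [hX]; ring

variable {ι : Type*} [Fintype ι] [DecidableEq ι]

theorem offDiag_laplacian_coordinate_le (i : ι) (k : ℕ) :
    offDiag (laplacian ι) k (boolDiagonal fun x => x i) ≤ 4 ^ k :=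
  (offDiag_le_norm _ k (isStarProjection_boolDiagonal _)).trans
    (norm_iterate_ad_laplacian_coordinate_le i k)

theorem offDiag_laplacian_formula_sq_le {k D : ℕ} (hk : k ≠ 0) (hD : 0 < D) {W M : ℝ}
    (hM : 2 * (1 + D) * (2 ^ k * W ^ 2) ^ 2 + 16 ^ k ≤ M)
    (hW : ∀ φ : NandFormula ι, φ.depth ≤ D → ∀ j < k,
      ‖(ad (laplacian ι))^[j] (boolDiagonal φ.eval)‖ ≤ W * √φ.size ^ j)
    (φ : NandFormula ι) (hφ : φ.depth ≤ D) :
    offDiag (laplacian ι) k (boolDiagonal φ.eval) ^ 2 ≤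
      (1 + 1 / D) ^ φ.depth * M * (φ.size : ℝ) ^ k := by
  have hMk : 16 ^ k ≤ M := le_trans (le_add_of_nonneg_left (by positivity)) hM
  have hMW : 2 * (1 + D) * (2 ^ k * W ^ 2) ^ 2 ≤ M :=
    le_trans (le_add_of_nonneg_right (by positivity)) hM
  induction φ with
  | const b =>
    have h : offDiag (laplacian ι) k (boolDiagonal fun _ => b) = 0 :=
      offDiag_of_eq_zero_or_one _ (boolDiagonal_const b) k
    calc offDiag (laplacian ι) k (boolDiagonal fun _ => b) ^ 2 = 0 := by rw [h, sq, zero_mul]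
      _ ≤ _ := by have : 0 ≤ M := le_trans (by positivity) hMk; positivity
  | var i =>
    calc offDiag (laplacian ι) k (boolDiagonal fun x => x i) ^ 2 ≤ (4 ^ k) ^ 2 :=
          pow_le_pow_left₀ (offDiag_nonneg _ _ _) (offDiag_laplacian_coordinate_le i k) 2
      _ = 16 ^ k := by rw [pow_right_comm]; norm_num
      _ ≤ _ := by simpa [NandFormula.depth, NandFormula.size] using hMk
  | nand φ ψ ihφ ihψ =>
    obtain ⟨hφD, hψD⟩ : φ.depth ≤ D ∧ ψ.depth ≤ D := by
      rw [NandFormula.depth] at hφ; omega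
    have hφP := isStarProjection_boolDiagonal φ.eval
    have hψP := isStarProjection_boolDiagonal ψ.eval
    have hcomm := commute_boolDiagonal φ.eval ψ.eval
    have h : boolDiagonal (NandFormula.nand φ ψ).eval =
        1 - boolDiagonal φ.eval * boolDiagonal ψ.eval := boolDiagonal_nand _ _
    rw [h, offDiag_one_sub isSelfAdjoint_laplacian (hφP.mul hψP hcomm) (Nat.pos_of_ne_zero hk),
      NandFormula.size, Nat.cast_add, NandFormula.depth]
    exact offDiag_mul_sq_le_depth hφP hψP hcomm hk (by positivity) (by positivity)
      (fun j hj _ => hW φ hφD j hj) (fun j hj _ => hW ψ hψD j hj) (by exact_mod_cast hD) hMW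
      (ihφ hφD) (ihψ hψD)

theorem norm_iterate_ad_laplacian_formula_le {D : ℕ} (hD : 0 < D) (q : ℕ) {φ : NandFormula ι}
    (hφ : φ.depth ≤ D) {k : ℕ} (hk : k ≤ q) :
    ‖(ad (laplacian ι))^[k] (boolDiagonal φ.eval)‖ ≤ momentConst D q * √φ.size ^ k := by
  induction q generalizing φ k with
  | zero =>
    obtain rfl := Nat.le_zero.1 hk
    simpa [momentConst] using (isStarProjection_boolDiagonal φ.eval).norm_le
  | succ q ih =>
    rcases Nat.lt_or_ge q k with hqk | hqk
    · obtain rfl : k = q + 1 := by omega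
      set W := momentConst D q
      have hW1 : 1 ≤ W := one_le_momentConst hD q
      have hq : 0 < q + 1 := q.succ_pos
      have hoff := offDiag_laplacian_formula_sq_le hq.ne' hD le_rfl
        (fun φ hφ j hj => ih hφ (Nat.lt_succ_iff.1 hj)) φ hφ
      have hnorm := norm_iterate_ad_le_offDiag (w := W ^ 2 * √φ.size ^ (q + 1))
        isSelfAdjoint_laplacian (isStarProjection_boolDiagonal φ.eval) hq (by positivity)
        fun i j hij hi hj => calc
          _ ≤ W * √φ.size ^ i * (W * √φ.size ^ j) :=
            mul_le_mul (ih hφ (by omega)) (ih hφ (by omega)) (norm_nonneg _) (by positivity)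
          _ = W ^ 2 * √φ.size ^ (q + 1) := by rw [← hij]; ring
      refine hnorm.trans (two_mul_add_le_of_sq_le hD hW1 (by positivity) (hoff.trans ?_))
      rw [pow_right_comm, Real.sq_sqrt (Nat.cast_nonneg _)]
      gcongr
      exact one_add_one_div_pow_le_three hφ
    · exact (ih hφ hqk).trans (by gcongr; exact momentConst_le_succ hD q)

end NandFormula

namespace NandFormula

variable {ι : Type*}

/-- `φ` is equivalent to a formula of depth at most `d` whose size is at most the size of `φ` to
the power `1 + δ`. -/
def Balanceable (δ : ℝ) (d : ℕ) (φ : NandFormula ι) : Prop :=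
  ∃ φ' : NandFormula ι, (∀ x, φ'.eval x = φ.eval x) ∧ (φ'.size : ℝ) ≤ φ.size ^ (1 + δ) ∧
    φ'.depth ≤ d

theorem exists_eval_eq_of_size_eq_zero (φ : NandFormula ι) (h : φ.size = 0) :
    ∃ b, ∀ x, φ.eval x = b := by
  induction φ with
  | const b => exact ⟨b, fun _ => rfl⟩
  | var i => exact absurd h one_ne_zero
  | nand φ ψ ihφ ihψ =>
    rw [size] at h
    obtain ⟨b, hb⟩ := ihφ (by omega)
    obtain ⟨c, hc⟩ := ihψ (by omega)
    exact ⟨!(b && c), fun x => by simp [eval, hb, hc]⟩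

theorem balanceable_of_size_eq_zero (δ : ℝ) (d : ℕ) {φ : NandFormula ι} (h : φ.size = 0) :
    Balanceable δ d φ := by
  obtain ⟨b, hb⟩ := exists_eval_eq_of_size_eq_zero φ h
  exact ⟨const b, fun x => (hb x).symm, by simp only [size, Nat.cast_zero]; positivity,
    Nat.zero_le d⟩

/-- A formula is monotone or antitone in each occurrence of a subformula `ψ`. Orienting the split by
the sign `s` makes `φ₀ ≤ φ₁`, so that recombining `φ₀`, `φ₁` and `ψ` needs only one copy of `ψ`. -/
theorem exists_monotone_split {τ : ℝ} (hτ : 0 < τ) (φ : NandFormula ι) (h : τ ≤ φ.size) :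
    ∃ (s : Bool) (ψ φ₁ φ₀ : NandFormula ι), φ₁.size + ψ.size ≤ φ.size ∧
      φ₀.size + ψ.size ≤ φ.size ∧ τ ≤ ψ.size ∧ (∀ a b, ψ = nand a b → a.size < τ ∧ b.size < τ) ∧
      ∀ x, (φ₀.eval x → φ₁.eval x) ∧
        φ.eval x = bif xor s (ψ.eval x) then φ₁.eval x else φ₀.eval x := by
  induction φ with
  | const b => exact absurd h (by simpa [size] using hτ)
  | var i =>
    exact ⟨false, var i, const true, const false, by simp [size], by simp [size], h, nofun,
      fun x => by simp [eval]⟩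
  | nand a b iha ihb =>
    by_cases ha : τ ≤ a.size
    · obtain ⟨s, ψ, a₁, a₀, h₁, h₀, hψ, hψ', heval⟩ := iha ha
      refine ⟨!s, ψ, nand a₀ b, nand a₁ b, by grind [size], by grind [size], hψ, hψ', fun x => ?_⟩
      obtain ⟨hle, heq⟩ := heval x
      grind [eval]
    by_cases hb : τ ≤ b.size
    · obtain ⟨s, ψ, b₁, b₀, h₁, h₀, hψ, hψ', heval⟩ := ihb hb
      refine ⟨!s, ψ, nand a b₀, nand a b₁, by grind [size], by grind [size], hψ, hψ', fun x => ?_⟩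
      obtain ⟨hle, heq⟩ := heval x
      grind [eval]
    · refine ⟨false, nand a b, const true, const false, by simp [size], by simp [size], h, ?_,
        fun x => by simp [eval]⟩
      rintro _ _ ⟨⟩
      exact ⟨not_le.1 ha, not_le.1 hb⟩

theorem exists_recombine (s : Bool) (ψ φ₁ φ₀ : NandFormula ι) {d : ℕ} (hψ : ψ.depth ≤ d + 1)
    (h₁ : φ₁.depth ≤ d) (h₀ : φ₀.depth ≤ d) :
    ∃ φ : NandFormula ι, φ.size = φ₁.size + φ₀.size + ψ.size ∧ φ.depth ≤ d + 4 ∧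
      ∀ x, (φ₀.eval x → φ₁.eval x) →
        φ.eval x = bif xor s (ψ.eval x) then φ₁.eval x else φ₀.eval x := by
  refine ⟨nand (nand φ₁ (bif s then nand ψ (const true) else ψ)) (nand φ₀ (const true)), ?_, ?_,
    fun x hx => ?_⟩
  · cases s <;> simp only [cond_true, cond_false, size] <;> omega
  · cases s <;> simp only [cond_true, cond_false, depth] <;> omega
  · cases s <;> grind [eval]

theorem rpow_one_add_sum_le {δ κ s r₁ r₀ s₁ s₂ : ℝ} (hδ : 0 ≤ δ) (hκ0 : 0 ≤ κ) (hκ : κ ^ δ ≤ 1 / 2)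
    (h₁ : 0 ≤ r₁) (h₀ : 0 ≤ r₀) (hs₁ : 0 ≤ s₁) (hs₂ : 0 ≤ s₂) (hr₁ : r₁ ≤ κ * s)
    (hr₀ : r₀ ≤ κ * s) (hsum₁ : r₁ + (s₁ + s₂) ≤ s) (hsum₀ : r₀ + (s₁ + s₂) ≤ s) :
    r₁ ^ (1 + δ) + r₀ ^ (1 + δ) + (s₁ ^ (1 + δ) + s₂ ^ (1 + δ)) ≤ s ^ (1 + δ) := by
  have hs : 0 ≤ s := by linarith
  have rpow_succ {c : ℝ} (hc : 0 ≤ c) : c ^ (1 + δ) = c * c ^ δ :=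
    Real.rpow_one_add' hc (by linarith)
  have small {r : ℝ} (h : 0 ≤ r) (hr : r ≤ κ * s) : r * r ^ δ ≤ r * (1 / 2 * s ^ δ) := by
    have : r ^ δ ≤ κ ^ δ * s ^ δ := by
      rw [← Real.mul_rpow hκ0 hs]
      exact Real.rpow_le_rpow h hr hδ
    gcongr
    exact this.trans (by gcongr)
  have large {r : ℝ} (h : 0 ≤ r) (hr : r ≤ s) : r * r ^ δ ≤ r * s ^ δ := by gcongr
  rw [rpow_succ h₁, rpow_succ h₀, rpow_succ hs₁, rpow_succ hs₂, rpow_succ hs]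
  have hsδ : 0 ≤ s ^ δ := by positivity
  nlinarith [small h₁ hr₁, small h₀ hr₀, large hs₁ (by linarith), large hs₂ (by linarith)]

theorem exists_balanced_gate {δ τ : ℝ} (hδ : 0 ≤ δ) {d : ℕ}
    (hτ : ∀ a : NandFormula ι, a.size < τ → Balanceable δ d a) {ψ : NandFormula ι}
    (hψ : 0 < ψ.size) (hchildren : ∀ a b, ψ = nand a b → a.size < τ ∧ b.size < τ) :
    ∃ (ψ' : NandFormula ι) (s₁ s₂ : ℕ), s₁ + s₂ = ψ.size ∧ (∀ x, ψ'.eval x = ψ.eval x) ∧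
      (ψ'.size : ℝ) ≤ s₁ ^ (1 + δ) + s₂ ^ (1 + δ) ∧ ψ'.depth ≤ d + 1 := by
  cases ψ with
  | const b => exact absurd hψ (lt_irrefl 0)
  | var i =>
    exact ⟨var i, 1, 0, rfl, fun _ => rfl,
      by simp [size, Real.zero_rpow (by linarith : 1 + δ ≠ 0)], Nat.zero_le _⟩
  | nand a b =>
    obtain ⟨ha, hb⟩ := hchildren a b rfl
    obtain ⟨a', ha_eval, ha_size, ha_depth⟩ := hτ a ha
    obtain ⟨b', hb_eval, hb_size, hb_depth⟩ := hτ b hb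
    refine ⟨nand a' b', a.size, b.size, rfl, fun x => by simp [eval, ha_eval, hb_eval], ?_, ?_⟩
    · rw [size, Nat.cast_add]
      exact add_le_add ha_size hb_size
    · rw [depth]; omega

/-- The step of Spira's balancing argument. The unbalanced splitting ratio `κ` keeps the size
increase below a power `1 + δ`. -/
theorem balanceable_of_forall_le {δ κ : ℝ} (hδ : 0 ≤ δ) (hκ0 : 0 < κ) (hκ : κ ≤ 1 / 2)
    (hκδ : κ ^ δ ≤ 1 / 2) {d : ℕ} {φ : NandFormula ι} (hφ : 0 < φ.size)
    (h : ∀ a : NandFormula ι, a.size ≤ (1 - κ) * φ.size → Balanceable δ d a) :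
    Balanceable δ (d + 4) φ := by
  have hsize : (1 : ℝ) ≤ φ.size := by exact_mod_cast hφ
  have hτ : 0 < (1 - κ) * φ.size := by nlinarith
  obtain ⟨s, ψ, φ₁, φ₀, h₁, h₀, hψ, hchildren, hsplit⟩ :=
    exists_monotone_split hτ φ (by nlinarith)
  have h₁' : (φ₁.size : ℝ) + ψ.size ≤ φ.size := by exact_mod_cast h₁
  have h₀' : (φ₀.size : ℝ) + ψ.size ≤ φ.size := by exact_mod_cast h₀
  obtain ⟨φ₁', h₁_eval, h₁_size, h₁_depth⟩ := h φ₁ (by nlinarith)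
  obtain ⟨φ₀', h₀_eval, h₀_size, h₀_depth⟩ := h φ₀ (by nlinarith)
  obtain ⟨ψ', s₁, s₂, hs, hψ_eval, hψ_size, hψ_depth⟩ := exists_balanced_gate hδ
    (fun a ha => h a ha.le) (by exact_mod_cast hτ.trans_le hψ) hchildren
  obtain ⟨φ', hφ_size, hφ_depth, hφ_eval⟩ :=
    exists_recombine s ψ' φ₁' φ₀' hψ_depth h₁_depth h₀_depth
  refine ⟨φ', fun x => ?_, ?_, hφ_depth⟩
  · rw [hφ_eval x (by simpa only [h₁_eval, h₀_eval] using (hsplit x).1), hψ_eval, h₁_eval,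
      h₀_eval, ← (hsplit x).2]
  · have hs' : (s₁ : ℝ) + s₂ = ψ.size := by exact_mod_cast hs
    have := rpow_one_add_sum_le hδ hκ0.le hκδ φ₁.size.cast_nonneg φ₀.size.cast_nonneg
      s₁.cast_nonneg s₂.cast_nonneg (by linarith) (by linarith) (hs' ▸ h₁') (hs' ▸ h₀')
    rw [hφ_size, Nat.cast_add, Nat.cast_add]
    linarith

theorem balanceable_of_pow_mul_size_lt_one {δ κ : ℝ} (hδ : 0 ≤ δ) (hκ0 : 0 < κ) (hκ : κ ≤ 1 / 2)
    (hκδ : κ ^ δ ≤ 1 / 2) {j : ℕ} {φ : NandFormula ι} (hφ : (1 - κ) ^ j * φ.size < 1) :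
    Balanceable δ (4 * j) φ := by
  induction j generalizing φ with
  | zero =>
    refine balanceable_of_size_eq_zero δ _ (Nat.lt_one_iff.1 ?_)
    exact_mod_cast (by simpa using hφ : (φ.size : ℝ) < 1)
  | succ j ih =>
    rcases Nat.eq_zero_or_pos φ.size with hzero | hpos
    · exact balanceable_of_size_eq_zero δ _ hzero
    refine balanceable_of_forall_le hδ hκ0 hκ hκδ hpos fun a ha => ih ?_
    have : 0 ≤ (1 - κ) ^ j := pow_nonneg (by linarith) j
    calc (1 - κ) ^ j * a.size ≤ (1 - κ) ^ j * ((1 - κ) * φ.size) := by gcongr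
      _ < 1 := by rwa [← mul_assoc, ← pow_succ]

theorem exists_pos_rpow_le_half {δ : ℝ} (hδ : 0 < δ) :
    ∃ κ : ℝ, 0 < κ ∧ κ ≤ 1 / 2 ∧ κ ^ δ ≤ 1 / 2 := by
  refine ⟨min (1 / 2) ((1 / 2) ^ (1 / δ)), by positivity, min_le_left _ _, ?_⟩
  calc min (1 / 2) ((1 / 2 : ℝ) ^ (1 / δ)) ^ δ ≤ ((1 / 2 : ℝ) ^ (1 / δ)) ^ δ :=
        Real.rpow_le_rpow (by positivity) (min_le_right _ _) hδ.le
    _ = 1 / 2 := by rw [← Real.rpow_mul (by norm_num), one_div_mul_cancel hδ.ne', Real.rpow_one]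

theorem exists_forall_balanceable {δ : ℝ} (hδ : 0 < δ) (b : ℕ) :
    ∃ c : ℕ, 0 < c ∧ ∀ m > 0, ∀ (ι : Type*) (φ : NandFormula ι), φ.size ≤ (2 ^ m) ^ b →
      Balanceable δ (c * m) φ := by
  obtain ⟨κ, hκ0, hκ, hκδ⟩ := exists_pos_rpow_le_half hδ
  obtain ⟨c, hc⟩ := exists_pow_lt_of_lt_one (y := 1 - κ) (by positivity : (0 : ℝ) < 1 / 2 ^ b)
    (by linarith)
  rw [lt_div_iff₀ (by positivity)] at hc
  refine ⟨4 * c + 1, Nat.succ_pos _, fun m hm ι φ hφ => ?_⟩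
  have hbase : 0 ≤ 1 - κ := by linarith
  have hsmall : (1 - κ) ^ (c * m) * φ.size < 1 :=
    calc (1 - κ) ^ (c * m) * φ.size ≤ (1 - κ) ^ (c * m) * ((2 : ℝ) ^ m) ^ b := by
          gcongr; exact_mod_cast hφ
      _ = ((1 - κ) ^ c * 2 ^ b) ^ m := by
          rw [pow_mul, pow_right_comm (2 : ℝ), mul_pow, pow_right_comm]
      _ < 1 := pow_lt_one₀ (by positivity) hc hm.ne'
  obtain ⟨φ', heval, hsize, hdepth⟩ := balanceable_of_pow_mul_size_lt_one hδ.le hκ0 hκ hκδ hsmall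
  exact ⟨φ', heval, hsize, hdepth.trans (by nlinarith)⟩

end NandFormula

section Postfix

/-- One step of a stack machine for the binary operation `op`: push an operand, or replace the top
two entries by their combination. Operators have no effect on stacks with fewer than two entries,
so that a word can be padded with them. -/
def postfixStep {V : Type*} (op : V → V → V) : List V → Option V → List V
  | stack, some v => v :: stack
  | y :: x :: stack, none => op x y :: stack
  | stack, none => stack

theorem foldl_postfixStep_replicate {V : Type*} (op : V → V → V) (v : V) (r : ℕ) :
    (List.replicate r none).foldl (postfixStep op) [v] = [v] := by
  induction r with
  | zero => rfl
  | succ _ ih => exact ih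

variable {V : Type*} [Inhabited V] [DecidableEq V]

/-- The values of postfix words of length `l` in the operation `op` with operands from `P`. -/
def postfixValues (op : V → V → V) (P : Finset V) (l : ℕ) : Finset V :=
  (Fintype.piFinset fun _ : Fin l => P.insertNone).image fun w =>
    ((List.ofFn w).foldl (postfixStep op) []).headI

theorem card_postfixValues_le (op : V → V → V) (P : Finset V) (l : ℕ) :
    #(postfixValues op P l) ≤ (#P + 1) ^ l :=
  card_image_le.trans (by simp)

theorem mem_postfixValues {op : V → V → V} {P : Finset V} {l : ℕ}
    {w : List (Option V)} {v : V} (hl : w.length ≤ l) (hP : ∀ p, some p ∈ w → p ∈ P)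
    (hw : w.foldl (postfixStep op) [] = [v]) : v ∈ postfixValues op P l := by
  obtain ⟨r, rfl⟩ := Nat.exists_eq_add_of_le hl
  have hlen : (w ++ List.replicate r none).length = w.length + r := by simp
  refine mem_image.2 ⟨fun i => (w ++ List.replicate r none).get (i.cast hlen.symm), ?_, ?_⟩
  · refine Fintype.mem_piFinset.2 fun i => mem_insertNone.2 fun p hp => hP p ?_
    have := List.get_mem (w ++ List.replicate r none) (i.cast hlen.symm)
    rw [Option.mem_def.1 hp] at this
    simpa using this
  · have := List.ofFn_congr hlen (w ++ List.replicate r none).get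
    rw [List.ofFn_get] at this
    rw [← this, List.foldl_append, hw, foldl_postfixStep_replicate, List.headI_cons]

namespace NandFormula

variable {ι : Type*}

open Classical in
/-- The postfix word of a formula whose operands are subformulas of size at most `t` (or leaves). -/
noncomputable def toPostfix (t : ℝ) : NandFormula ι → List (Option (NandFormula ι))
  | const b => [some (const b)]
  | var i => [some (var i)]
  | nand φ ψ =>
    if ((nand φ ψ).size : ℝ) ≤ t then [some (nand φ ψ)]
    else φ.toPostfix t ++ ψ.toPostfix t ++ [none]

theorem size_le_and_depth_le_of_mem_toPostfix {t : ℝ} (ht : 1 ≤ t) {φ χ : NandFormula ι}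
    (h : some χ ∈ φ.toPostfix t) : χ.size ≤ t ∧ χ.depth ≤ φ.depth := by
  induction φ with
  | const b =>
    obtain rfl : χ = const b := by simpa [toPostfix] using h
    exact ⟨by simp only [size, Nat.cast_zero]; linarith, le_rfl⟩
  | var i =>
    obtain rfl : χ = var i := by simpa [toPostfix] using h
    exact ⟨by simpa only [size, Nat.cast_one] using ht, le_rfl⟩
  | nand φ ψ ihφ ihψ =>
    rw [toPostfix] at h
    split_ifs at h with hsize
    · obtain rfl : χ = nand φ ψ := by simpa using h
      exact ⟨hsize, le_rfl⟩
    · rw [depth]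
      obtain h | h : some χ ∈ φ.toPostfix t ∨ some χ ∈ ψ.toPostfix t := by simpa using h
      · exact ⟨(ihφ h).1, by have := (ihφ h).2; omega⟩
      · exact ⟨(ihψ h).1, by have := (ihψ h).2; omega⟩

theorem length_toPostfix_le {t : ℝ} (ht : 0 < t) (φ : NandFormula ι) :
    ((φ.toPostfix t).length : ℝ) ≤ 1 + 4 * φ.depth * (φ.size / t) := by
  induction φ with
  | const b => simp [toPostfix, depth]
  | var i => simp [toPostfix, depth]
  | nand φ ψ ihφ ihψ =>
    rw [toPostfix]
    split_ifs with hsize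
    · simp only [List.length_singleton, Nat.cast_one, le_add_iff_nonneg_right]
      positivity
    · simp only [List.length_append, List.length_singleton, depth, size, Nat.cast_add, Nat.cast_max,
        Nat.cast_one] at hsize ⊢
      set d := max (φ.depth : ℝ) ψ.depth
      have hφ : φ.depth * (φ.size / t) ≤ d * (φ.size / t) := by gcongr; exact le_max_left _ _
      have hψ : ψ.depth * (ψ.size / t) ≤ d * (ψ.size / t) := by gcongr; exact le_max_right _ _
      have hlarge : 1 < (φ.size + ψ.size) / t := (one_lt_div ht).2 (not_le.1 hsize)
      calc ((φ.toPostfix t).length : ℝ) + (ψ.toPostfix t).length + 1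
          ≤ 1 + 4 * (d * (φ.size / t)) + (1 + 4 * (d * (ψ.size / t))) + 1 := by linarith
        _ ≤ 1 + 4 * (d * (φ.size / t)) + 4 * (d * (ψ.size / t)) +
            4 * ((φ.size + ψ.size) / t) := by linarith
        _ = 1 + 4 * (d + 1) * ((φ.size + ψ.size) / t) := by ring

theorem foldl_toPostfix {V : Type*} {op : V → V → V} {val : NandFormula ι → V}
    (hval : ∀ φ ψ, val (nand φ ψ) = op (val φ) (val ψ)) (t : ℝ) (φ : NandFormula ι)
    (stack : List V) :
    ((φ.toPostfix t).map (Option.map val)).foldl (postfixStep op) stack = val φ :: stack := by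
  induction φ generalizing stack with
  | const b => rfl
  | var i => rfl
  | nand φ ψ ihφ ihψ =>
    rw [toPostfix]
    split_ifs
    · rfl
    · simp [ihφ, ihψ, postfixStep, hval]

theorem mem_postfixValues_of_toPostfix {op : V → V → V}
    {val : NandFormula ι → V} (hval : ∀ φ ψ, val (nand φ ψ) = op (val φ) (val ψ)) {P : Finset V}
    {t : ℝ} {l : ℕ} {φ : NandFormula ι} (hl : (φ.toPostfix t).length ≤ l)
    (hP : ∀ χ, some χ ∈ φ.toPostfix t → val χ ∈ P) : val φ ∈ postfixValues op P l := by
  refine mem_postfixValues (by simpa using hl) (fun p hp => ?_) (foldl_toPostfix hval t φ [])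
  obtain ⟨o, ho, hop⟩ := List.mem_map.1 hp
  obtain ⟨χ, rfl, rfl⟩ := Option.map_eq_some_iff.1 hop
  exact hP χ ho

end NandFormula

end Postfix

section LowDegree

theorem flipAt_lt {κ : Type*} [DecidableEq κ] {j : κ} {y : κ → Bool} (h : y j = true) :
    flipAt j y < y := by
  refine lt_of_le_of_ne (fun i => ?_) fun heq => by simpa [flipAt_self] using congrFun heq j
  rcases eq_or_ne i j with rfl | hi
  · exact h ▸ Bool.le_true _
  · rw [flipAt_of_ne hi]

theorem forall_mem_flipAt {κ : Type*} [DecidableEq κ] {j : κ} {l : List κ} {y : κ → Bool}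
    (hj : j ∉ l) (hy : ∀ i ∈ l, y i = true) : ∀ i ∈ l, flipAt j y i = true := fun i hi => by
  rw [flipAt_of_ne (ne_of_mem_of_not_mem hi hj), hy i hi]

variable {κ : Type*} [Fintype κ] [DecidableEq κ]

theorem iterDiff_mulVec_eq_zero {l : List κ} (hl : l.Nodup) {g : (κ → Bool) → ℝ} {y : κ → Bool}
    (hy : ∀ j ∈ l, y j = true) (hg : ∀ z ≤ y, g z = 0) : (iterDiff l *ᵥ g) y = 0 := by
  induction l generalizing y with
  | nil => simpa [iterDiff_nil] using hg y le_rfl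
  | cons j l ih =>
    obtain ⟨hj, hl⟩ := List.nodup_cons.1 hl
    obtain ⟨hyj, hyl⟩ := List.forall_mem_cons.1 hy
    rw [iterDiff_cons_mulVec, ih hl hyl hg,
      ih hl (forall_mem_flipAt hj hyl) fun z hz => hg z (hz.trans (flipAt_lt hyj).le), sub_zero]

theorem iterDiff_mulVec_eq_self {l : List κ} (hl : l.Nodup) {g : (κ → Bool) → ℝ} {y : κ → Bool}
    (hy : ∀ j ∈ l, y j = true) (hg : ∀ z < y, g z = 0) : (iterDiff l *ᵥ g) y = g y := by
  induction l with
  | nil => simp [iterDiff_nil]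
  | cons j l ih =>
    obtain ⟨hj, hl⟩ := List.nodup_cons.1 hl
    obtain ⟨hyj, hyl⟩ := List.forall_mem_cons.1 hy
    rw [iterDiff_cons_mulVec, ih hl hyl, iterDiff_mulVec_eq_zero hl (forall_mem_flipAt hj hyl)
      fun z hz => hg z (hz.trans_lt (flipAt_lt hyj)), sub_zero]

/-- The Boolean function `P` has degree less than `d` as a real multilinear polynomial: its `d`-fold
discrete derivatives in distinct directions vanish. -/
def DegreeLT (d : ℕ) (P : (κ → Bool) → Bool) : Prop :=
  ∀ R : Fin d → κ, Function.Injective R → iterDiff (List.ofFn R) *ᵥ indicator P = 0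

theorem eq_zero_of_iterDiff_eq_zero {d : ℕ} {g : (κ → Bool) → ℝ}
    (hg : ∀ R : Fin d → κ, Function.Injective R → iterDiff (List.ofFn R) *ᵥ g = 0)
    (hlow : ∀ y : κ → Bool, #{r | y r} < d → g y = 0) : g = 0 := by
  funext y
  induction y using WellFoundedLT.induction with
  | _ y ih =>
    rcases lt_or_ge #{r | y r} d with hd | hd
    · exact hlow y hd
    obtain ⟨R⟩ := Function.Embedding.nonempty_of_card_le (α := Fin d) (β := {r // y r})
      (by simpa [Fintype.card_subtype] using hd)
    have hR : Function.Injective fun i => (R i : κ) := Subtype.val_injective.comp R.injective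
    have hy : ∀ j ∈ List.ofFn fun i => (R i : κ), y j = true := fun j hj => by
      obtain ⟨i, rfl⟩ := List.mem_ofFn.1 hj
      exact (R i).2
    rw [← iterDiff_mulVec_eq_self (List.nodup_ofFn.2 hR) hy ih, hg _ hR, Pi.zero_apply]

/-- The indicator of the set of entries of `τ`. -/
def pointOfTuple {d : ℕ} (τ : Fin d → Option κ) (r : κ) : Bool := decide (∃ i, τ i = some r)

theorem exists_pointOfTuple_eq {d : ℕ} {y : κ → Bool} (hy : #{r | y r} ≤ d) :
    ∃ τ : Fin d → Option κ, pointOfTuple τ = y := by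
  set S : Finset κ := {r | y r}
  refine ⟨fun i => S.toList[(i : ℕ)]?, funext fun r => ?_⟩
  rw [pointOfTuple, Bool.eq_iff_iff, decide_eq_true_iff]
  have hr : y r = true ↔ r ∈ S.toList := by simp [S]
  rw [hr, List.mem_iff_getElem?]
  constructor
  · rintro ⟨i, hi⟩
    exact ⟨i, hi⟩
  · rintro ⟨i, hi⟩
    obtain ⟨hlt, -⟩ := List.getElem?_eq_some_iff.1 hi
    exact ⟨⟨i, by rw [length_toList] at hlt; omega⟩, hi⟩

theorem DegreeLT.eq_of_pointOfTuple {d : ℕ} {P Q : (κ → Bool) → Bool} (hP : DegreeLT d P)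
    (hQ : DegreeLT d Q) (h : ∀ τ : Fin d → Option κ, P (pointOfTuple τ) = Q (pointOfTuple τ)) :
    P = Q := by
  have hzero : indicator P - indicator Q = 0 := by
    refine eq_zero_of_iterDiff_eq_zero (d := d) (fun R hR => ?_) fun y hy => ?_
    · rw [Matrix.mulVec_sub, hP R hR, hQ R hR, sub_zero]
    · obtain ⟨τ, rfl⟩ := exists_pointOfTuple_eq hy.le
      simp [indicator, h τ]
  funext y
  have hy : indicator P y = indicator Q y := congrFun (sub_eq_zero.1 hzero) y
  cases hPy : P y <;> cases hQy : Q y <;> simp [indicator, hPy, hQy] at hy ⊢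

open Classical in
theorem card_degreeLT_le (d : ℕ) :
    #{P : (κ → Bool) → Bool | DegreeLT d P} ≤ 2 ^ (Fintype.card κ + 1) ^ d :=
  calc #{P : (κ → Bool) → Bool | DegreeLT d P} ≤ #(univ : Finset ((Fin d → Option κ) → Bool)) :=
        card_le_card_of_injOn (fun P τ => P (pointOfTuple τ)) (fun _ _ => mem_univ _)
          fun P hP Q hQ h => DegreeLT.eq_of_pointOfTuple (by simpa using hP) (by simpa using hQ)
            (congrFun h)
    _ = _ := by simp

end LowDegree

section Restriction

theorem card_pow_mul_sum_comp {κ γ : Type*} [Fintype κ] [DecidableEq κ] [Fintype γ] {d : ℕ}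
    {R : Fin d → κ} (hR : Function.Injective R) (G : (Fin d → γ) → ℝ) :
    (Fintype.card γ : ℝ) ^ d * ∑ J : κ → γ, G (J ∘ R) =
      (Fintype.card γ : ℝ) ^ Fintype.card κ * ∑ c, G c := by
  let T (p : (κ → γ) × (Fin d → γ)) : (κ → γ) × (Fin d → γ) := (Function.extend R p.2 p.1, p.1 ∘ R)
  have hT : Function.Involutive T := fun ⟨J, c⟩ => by
    refine Prod.ext (funext fun r => ?_) (funext fun i => hR.extend_apply _ _ i)
    by_cases hr : ∃ i, R i = r
    · obtain ⟨i, rfl⟩ := hr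
      simp [T, hR.extend_apply]
    · simp [T, Function.extend_apply' _ _ _ hr]
  have hsum := Equiv.sum_comp hT.toPerm fun p => G p.2
  simpa [T, Fintype.sum_prod_type, ← mul_sum] using hsum

theorem card_pow_mul_sum_injective_le {κ γ : Type*} [Fintype κ] [DecidableEq κ] [Fintype γ] {d : ℕ}
    {G : (Fin d → κ × γ) → ℝ} (hG : ∀ v, 0 ≤ G v) :
    (Fintype.card γ : ℝ) ^ d *
        ∑ R : Fin d → κ with Function.Injective R, ∑ J : κ → γ, G (fun i => (R i, J (R i))) ≤
      (Fintype.card γ : ℝ) ^ Fintype.card κ * ∑ v, G v := by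
  have hsplit : ∑ v, G v = ∑ R : Fin d → κ, ∑ c : Fin d → γ, G fun i => (R i, c i) := by
    rw [← (Equiv.arrowProdEquivProdArrow _ _ _).symm.sum_comp, Fintype.sum_prod_type]
    rfl
  rw [hsplit, mul_sum, mul_sum]
  calc ∑ R : Fin d → κ with Function.Injective R,
        (Fintype.card γ : ℝ) ^ d * ∑ J : κ → γ, G (fun i => (R i, J (R i)))
      = ∑ R : Fin d → κ with Function.Injective R,
          (Fintype.card γ : ℝ) ^ Fintype.card κ * ∑ c : Fin d → γ, G fun i => (R i, c i) :=
        sum_congr rfl fun R hR =>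
          card_pow_mul_sum_comp (mem_filter.1 hR).2 fun c => G fun i => (R i, c i)
    _ ≤ _ := sum_le_sum_of_subset_of_nonneg (subset_univ _) fun R _ _ =>
        mul_nonneg (by positivity) (sum_nonneg fun c _ => hG _)

variable {κ γ : Type*} [DecidableEq γ]

/-- The point of the cube obtained from `x` by adding `y r` to the coordinate `(r, J r)` for every
row `r`. As a function of `y`, it parametrizes a restriction that leaves one live variable in each
row: the one selected by `J`. -/
def restrictPoint (J : κ → γ) (x : κ × γ → Bool) (y : κ → Bool) : κ × γ → Bool :=
  fun p => xor (x p) (decide (p.2 = J p.1) && y p.1)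

theorem restrictPoint_involutive (J : κ → γ) (y : κ → Bool) :
    Function.Involutive fun x => restrictPoint J x y := fun x => by
  funext p
  simp [restrictPoint]

variable [DecidableEq κ]

theorem flipAt_restrictPoint (J : κ → γ) (x : κ × γ → Bool) (y : κ → Bool) (r : κ) :
    flipAt (r, J r) (restrictPoint J x y) = restrictPoint J x (flipAt r y) := by
  funext ⟨i, c⟩
  by_cases h : (i, c) = (r, J r)
  · obtain ⟨rfl, rfl⟩ := Prod.mk.inj h
    simp [restrictPoint, flipAt_self]
  rw [flipAt_of_ne h]
  rcases eq_or_ne i r with rfl | hi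
  · have hc : c ≠ J i := fun hc => h (by rw [hc])
    simp [restrictPoint, hc]
  · simp [restrictPoint, flipAt_of_ne hi]

variable [Fintype κ]

theorem exists_int_iterDiff_indicator (P : (κ → Bool) → Bool) (l : List κ) (y : κ → Bool) :
    ∃ z : ℤ, (iterDiff l *ᵥ indicator P) y = z := by
  induction l generalizing y with
  | nil => exact ⟨if P y then 1 else 0, by simp [iterDiff_nil, indicator]⟩
  | cons r l ih =>
    obtain ⟨a, ha⟩ := ih y
    obtain ⟨b, hb⟩ := ih (flipAt r y)
    exact ⟨a - b, by rw [iterDiff_cons_mulVec, ha, hb, Int.cast_sub]⟩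

/-- The squared norm of the iterated discrete derivative of `h` in the directions `v`, with respect
to the counting measure on the cube. -/
noncomputable def derivEnergy {d : ℕ} (h : (κ → Bool) → Bool) (v : Fin d → κ) : ℝ :=
  ∑ x, (iterDiff (List.ofFn v) *ᵥ indicator h) x ^ 2

theorem derivEnergy_nonneg {d : ℕ} (h : (κ → Bool) → Bool) (v : Fin d → κ) :
    0 ≤ derivEnergy h v :=
  sum_nonneg fun _ _ => sq_nonneg _

theorem one_le_sum_derivEnergy {d : ℕ} {P : (κ → Bool) → Bool} (hP : ¬ DegreeLT d P) :
    1 ≤ ∑ R : Fin d → κ with Function.Injective R, derivEnergy P R := by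
  simp only [DegreeLT, not_forall] at hP
  obtain ⟨R, hR, hne⟩ := hP
  obtain ⟨y, hy⟩ := Function.ne_iff.1 hne
  obtain ⟨z, hz⟩ := exists_int_iterDiff_indicator P (List.ofFn R) y
  have hz0 : z ≠ 0 := fun h => hy (by rw [hz, h, Int.cast_zero, Pi.zero_apply])
  calc (1 : ℝ) ≤ (iterDiff (List.ofFn R) *ᵥ indicator P) y ^ 2 := by
        rw [hz]; exact_mod_cast Int.add_one_le_of_lt (sq_pos_of_ne_zero hz0)
    _ ≤ derivEnergy P R :=
        single_le_sum (f := fun y => (iterDiff (List.ofFn R) *ᵥ indicator P) y ^ 2)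
          (fun _ _ => sq_nonneg _) (mem_univ y)
    _ ≤ _ := single_le_sum (fun R _ => derivEnergy_nonneg P R) (by simpa using hR)

variable [Fintype γ]

theorem iterDiff_mulVec_restrictPoint (J : κ → γ) (x : κ × γ → Bool) (g : (κ × γ → Bool) → ℝ)
    (l : List κ) (y : κ → Bool) :
    (iterDiff l *ᵥ fun y => g (restrictPoint J x y)) y =
      (iterDiff (l.map fun r => (r, J r)) *ᵥ g) (restrictPoint J x y) := by
  induction l generalizing y with
  | nil => simp [iterDiff_nil]
  | cons r l ih =>
    rw [iterDiff_cons_mulVec, List.map_cons, iterDiff_cons_mulVec, ih, ih, flipAt_restrictPoint]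

theorem sum_derivEnergy_restrictPoint (ψ : (κ × γ → Bool) → Bool) (J : κ → γ) {d : ℕ}
    (R : Fin d → κ) :
    ∑ x, derivEnergy (fun y => ψ (restrictPoint J x y)) R =
      2 ^ Fintype.card κ * derivEnergy ψ (fun i => (R i, J (R i))) := by
  have hrow (y : κ → Bool) :
      ∑ x, (iterDiff (List.ofFn R) *ᵥ indicator fun y => ψ (restrictPoint J x y)) y ^ 2 =
        derivEnergy ψ (fun i => (R i, J (R i))) := by
    refine (sum_congr rfl fun x _ => congrArg (· ^ 2) ?_).trans <|
      Equiv.sum_comp (restrictPoint_involutive J y).toPerm fun x =>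
        (iterDiff (List.ofFn fun i => (R i, J (R i))) *ᵥ indicator ψ) x ^ 2
    have hderiv := iterDiff_mulVec_restrictPoint J x (indicator ψ) (List.ofFn R) y
    rwa [List.map_ofFn] at hderiv
  simp only [derivEnergy] at hrow ⊢
  rw [sum_comm, sum_congr rfl fun y _ => hrow y]
  simp

open Classical in
theorem card_pow_mul_card_not_degreeLT_le (q : ℕ) (ψ : (κ × γ → Bool) → Bool) :
    (Fintype.card γ : ℝ) ^ (2 * q) *
        #{p : (κ → γ) × (κ × γ → Bool) |
          ¬ DegreeLT (2 * q) fun y => ψ (restrictPoint p.1 p.2 y)} ≤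
      2 ^ Fintype.card κ * 4 ^ q * ‖(ad (laplacian (κ × γ)))^[q] (boolDiagonal ψ)‖ ^ 2 *
        Fintype.card ((κ → γ) × (κ × γ → Bool)) := by
  set B := ‖(ad (laplacian (κ × γ)))^[q] (boolDiagonal ψ)‖
  set E := ∑ R : Fin (2 * q) → κ with Function.Injective R,
    ∑ J : κ → γ, derivEnergy ψ (fun i => (R i, J (R i)))
  have hbad : (#{p : (κ → γ) × (κ × γ → Bool) |
      ¬ DegreeLT (2 * q) fun y => ψ (restrictPoint p.1 p.2 y)} : ℝ) ≤ 2 ^ Fintype.card κ * E :=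
    calc _ ≤ ∑ p : (κ → γ) × (κ × γ → Bool), ∑ R : Fin (2 * q) → κ with Function.Injective R,
          derivEnergy (fun y => ψ (restrictPoint p.1 p.2 y)) R := by
          rw [card_filter, Nat.cast_sum]
          refine sum_le_sum fun p _ => ?_
          split_ifs with h
          · rw [Nat.cast_zero]
            exact sum_nonneg fun R _ => derivEnergy_nonneg _ R
          · rw [Nat.cast_one]
            exact one_le_sum_derivEnergy h
      _ = 2 ^ Fintype.card κ * E := by
          rw [sum_comm, mul_sum]
          refine sum_congr rfl fun R _ => ?_
          rw [Fintype.sum_prod_type, mul_sum]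
          exact sum_congr rfl fun J _ => sum_derivEnergy_restrictPoint ψ J R
  calc _ ≤ (Fintype.card γ : ℝ) ^ (2 * q) * (2 ^ Fintype.card κ * E) := by gcongr
    _ = 2 ^ Fintype.card κ * ((Fintype.card γ : ℝ) ^ (2 * q) * E) := by ring
    _ ≤ 2 ^ Fintype.card κ * ((Fintype.card γ : ℝ) ^ Fintype.card κ * ∑ v, derivEnergy ψ v) := by
        gcongr 2 ^ Fintype.card κ * ?_
        exact card_pow_mul_sum_injective_le (derivEnergy_nonneg ψ)
    _ ≤ 2 ^ Fintype.card κ * ((Fintype.card γ : ℝ) ^ Fintype.card κ *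
          (4 ^ q * B ^ 2 * 2 ^ Fintype.card (κ × γ))) := by
        gcongr
        exact sum_sq_iterDiff_le q ψ
    _ = _ := by simp; ring

theorem exists_forall_degreeLT_restrictPoint [Nonempty γ] {q : ℕ}
    {S : Finset ((κ × γ → Bool) → Bool)} {B : ℝ}
    (hB : ∀ ψ ∈ S, ‖(ad (laplacian (κ × γ)))^[q] (boolDiagonal ψ)‖ ≤ B)
    (hcard : #S * (2 ^ Fintype.card κ * 4 ^ q * B ^ 2) < (Fintype.card γ : ℝ) ^ (2 * q)) :
    ∃ (J : κ → γ) (x : κ × γ → Bool), ∀ ψ ∈ S,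
      DegreeLT (2 * q) fun y => ψ (restrictPoint J x y) := by
  classical
  by_contra! hbad
  set T := (Fintype.card ((κ → γ) × (κ × γ → Bool)) : ℝ)
  have hT : 0 < T := Nat.cast_pos.2 Fintype.card_pos
  have hcover : T ≤ ∑ ψ ∈ S, (#{p : (κ → γ) × (κ × γ → Bool) |
      ¬ DegreeLT (2 * q) fun y => ψ (restrictPoint p.1 p.2 y)} : ℝ) := by
    rw [← Nat.cast_sum, Nat.cast_le]
    refine le_trans (card_le_card fun p _ => ?_) card_biUnion_le
    obtain ⟨ψ, hψ, hp⟩ := hbad p.1 p.2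
    exact mem_biUnion.2 ⟨ψ, hψ, mem_filter.2 ⟨mem_univ _, hp⟩⟩
  refine hcard.not_ge (le_of_mul_le_mul_right ?_ hT)
  calc (Fintype.card γ : ℝ) ^ (2 * q) * T
      ≤ _ := mul_le_mul_of_nonneg_left hcover (by positivity)
    _ ≤ ∑ ψ ∈ S, 2 ^ Fintype.card κ * 4 ^ q * B ^ 2 * T := by
        rw [mul_sum]
        refine sum_le_sum fun ψ hψ => (card_pow_mul_card_not_degreeLT_le q ψ).trans ?_
        gcongr
        exact hB ψ hψ
    _ = #S * (2 ^ Fintype.card κ * 4 ^ q * B ^ 2) * T := by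
        rw [sum_const, nsmul_eq_mul, ← mul_assoc]

end Restriction

section Counting

theorem two_pow_card_mul_card_filter_le {A B : Type*} [Fintype A] [Fintype B] [DecidableEq A]
    [DecidableEq B] {S : Finset A} {Q : A → Finset B} (hQ : ∀ a ∈ S, 2 * #(Q a) ≤ Fintype.card B) :
    2 ^ #S * #{f : A → B | ∀ a ∈ S, f a ∈ Q a} ≤ Fintype.card (A → B) := by
  have hpi : ({f : A → B | ∀ a ∈ S, f a ∈ Q a} : Finset (A → B)) =
      Fintype.piFinset fun a => if a ∈ S then Q a else univ := by
    ext f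
    simp only [mem_filter_univ, Fintype.mem_piFinset]
    refine forall_congr' fun a => ?_
    split_ifs with ha <;> simp [ha]
  have htwo : 2 ^ #S = ∏ a : A, if a ∈ S then 2 else 1 := by
    rw [prod_ite_mem, univ_inter, prod_const]
  rw [hpi, Fintype.card_piFinset, htwo, ← prod_mul_distrib, Fintype.card_pi]
  refine prod_le_prod' fun a _ => ?_
  split_ifs with ha
  · exact hQ a ha
  · simp

theorem mul_card_filter_prod_le_of_left {A B : Type*} [Fintype A] [Fintype B] {P : A → B → Prop}
    [∀ a b, Decidable (P a b)] {c : ℕ} (h : ∀ a, c * #{b | P a b} ≤ Fintype.card B) :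
    c * #{p : A × B | P p.1 p.2} ≤ Fintype.card (A × B) := by
  have hsum : #{p : A × B | P p.1 p.2} = ∑ a, #{b | P a b} := by
    simp only [card_filter, Fintype.sum_prod_type]
  calc c * #{p : A × B | P p.1 p.2} ≤ ∑ _a : A, Fintype.card B := by
        rw [hsum, mul_sum]; exact sum_le_sum fun a _ => h a
    _ = Fintype.card (A × B) := by simp

theorem mul_card_filter_prod_le_of_right {A B : Type*} [Fintype A] [Fintype B] {P : A → B → Prop}
    [∀ a b, Decidable (P a b)] {c : ℕ} (h : ∀ b, c * #{a | P a b} ≤ Fintype.card A) :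
    c * #{p : A × B | P p.1 p.2} ≤ Fintype.card (A × B) := by
  rw [card_equiv (t := {p : B × A | P p.2 p.1}) (Equiv.prodComm A B) fun p => by simp,
    Fintype.card_congr (Equiv.prodComm A B)]
  exact mul_card_filter_prod_le_of_left (P := fun b a => P a b) h

theorem le_card_row_or_le_card_image_fst {U V : Type*} [DecidableEq U] [DecidableEq V] [Fintype V]
    {θ : ℕ} {Z : Finset (U × V)} (hZ : θ * θ ≤ #Z) :
    (∃ u, θ ≤ #{v | (u, v) ∈ Z}) ∨ θ ≤ #(Z.image Prod.fst) := by
  refine or_iff_not_imp_left.2 fun hrow => ?_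
  push Not at hrow
  rcases θ.eq_zero_or_pos with rfl | hθ
  · exact Nat.zero_le _
  refine Nat.le_of_mul_le_mul_left (hZ.trans (card_le_mul_card_image Z θ fun u _ => ?_)) hθ
  refine le_trans (card_le_card_of_injOn Prod.snd (fun z hz => ?_) fun z hz z' hz' h => ?_)
    (hrow u).le
  · obtain ⟨hzZ, rfl⟩ := mem_filter.1 (mem_coe.1 hz)
    exact mem_coe.2 (mem_filter.2 ⟨mem_univ _, hzZ⟩)
  · exact Prod.ext ((mem_filter.1 hz).2.trans (mem_filter.1 hz').2.symm) h

theorem exists_le_card_of_subset_biUnion {X : Type*} [DecidableEq X] {k t : ℕ} {T : Finset X}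
    (hT : T.Nonempty) (hk : k * t ≤ #T) {Zs : Fin k → Finset X} (hsub : T ⊆ univ.biUnion Zs) :
    ∃ j, t ≤ #(Zs j) := by
  obtain ⟨x, hx⟩ := hT
  obtain ⟨j, hj, -⟩ := mem_biUnion.1 (hsub hx)
  have hsum : ∑ _j : Fin k, t ≤ ∑ j, #(Zs j) := by
    simpa using hk.trans ((card_le_card hsub).trans card_biUnion_le)
  obtain ⟨j, -, hj⟩ := exists_le_of_sum_le ⟨j, hj⟩ hsum
  exact ⟨j, hj⟩

variable {κ : Type*} [DecidableEq κ]

/-- The function that agrees with `f` on the half-cube `w i = false`, and takes opposite values at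
points that differ only in coordinate `i`. If `f` is a uniformly random function, then this is a
random function that is false at exactly half of the points of the cube. -/
def balance (i : κ) (f : (κ → Bool) → Bool) (w : κ → Bool) : Bool :=
  xor (w i) (f (Function.update w i false))

theorem balance_flipAt (i : κ) (f : (κ → Bool) → Bool) (w : κ → Bool) :
    balance i f (flipAt i w) = !balance i f w := by
  simp [balance, flipAt]

theorem balance_eq_false_iff {i : κ} {f : (κ → Bool) → Bool} {w : κ → Bool} :
    balance i f w = false ↔ f (Function.update w i false) = w i := by
  rw [balance, bne_eq_false_iff_eq, eq_comm]

variable [Fintype κ]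

theorem two_mul_card_balance_eq_false (i : κ) (f : (κ → Bool) → Bool) :
    2 * #{w | balance i f w = false} = 2 ^ Fintype.card κ := by
  have hflip : #{w | balance i f w = false} = #{w | ¬ balance i f w = false} :=
    card_equiv (flipPerm i) fun w => by simp [flipPerm, balance_flipAt]
  have hadd := card_filter_add_card_filter_not (s := univ) fun w => balance i f w = false
  rw [← hflip, ← two_mul] at hadd
  simpa using hadd

theorem two_mul_card_balance_symmDiff_eq_false (i : κ) (f : (κ → Bool) → Bool) (a : κ → Bool) :
    2 * #{v | balance i f (a ∆ v) = false} = 2 ^ Fintype.card κ := by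
  rw [← two_mul_card_balance_eq_false i f]
  congr 1
  exact card_equiv (symmDiff_right_involutive a).toPerm fun v => by simp

theorem two_mul_card_zeros_eq {U : Type*} [Fintype U] (i : κ) (f : (κ → Bool) → Bool)
    (g : U → κ → Bool) :
    2 * #{z : U × (κ → Bool) | balance i f (g z.1 ∆ z.2) = false} =
      Fintype.card U * 2 ^ Fintype.card κ := by
  rw [card_filter, Fintype.sum_prod_type, mul_sum]
  simp only [← card_filter, two_mul_card_balance_symmDiff_eq_false]
  simp

theorem two_pow_card_mul_card_balance_row_le (i : κ) (a : κ → Bool) (V : Finset (κ → Bool)) :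
    2 ^ #V * #{f : (κ → Bool) → Bool | ∀ v ∈ V, balance i f (a ∆ v) = false} ≤
      Fintype.card ((κ → Bool) → Bool) := by
  rcases Finset.eq_empty_or_nonempty
    {f : (κ → Bool) → Bool | ∀ v ∈ V, balance i f (a ∆ v) = false} with hempty | ⟨f₀, hf₀⟩
  · simp [hempty]
  simp only [mem_filter_univ, balance_eq_false_iff] at hf₀ ⊢
  have hinj : Set.InjOn (fun v => Function.update (a ∆ v) i false) V := fun v hv v' hv' h => by
    have hi : (a ∆ v) i = (a ∆ v') i := by
      rw [← hf₀ v hv, ← hf₀ v' hv']; exact congrArg f₀ h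
    refine symmDiff_right_injective a (funext fun j => ?_)
    rcases eq_or_ne j i with rfl | hj
    · exact hi
    · simpa [hj] using congrFun h j
  rw [← card_image_of_injOn hinj]
  refine le_trans ?_ <| two_pow_card_mul_card_filter_le (Q := fun w => {f₀ w})
    (S := V.image fun v => Function.update (a ∆ v) i false) fun _ _ => by simp
  gcongr 2 ^ _ * #?_
  refine monotone_filter_right _ fun f _ hf w hw => ?_
  obtain ⟨v, hv, rfl⟩ := mem_image.1 hw
  rw [mem_singleton]
  exact (hf v hv).trans (hf₀ v hv).symm

theorem two_pow_card_mul_card_balance_column_le {U : Type*} [Fintype U] [DecidableEq U] (i : κ)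
    (f : (κ → Bool) → Bool) (Z : Finset (U × (κ → Bool))) :
    2 ^ #(Z.image Prod.fst) *
        #{g : U → κ → Bool | ∀ z ∈ Z, balance i f (g z.1 ∆ z.2) = false} ≤
      Fintype.card (U → κ → Bool) := by
  have hpoint (u : U) : ∃ v, u ∈ Z.image Prod.fst → (u, v) ∈ Z := by
    by_cases hu : u ∈ Z.image Prod.fst
    · obtain ⟨z, hz, rfl⟩ := mem_image.1 hu
      exact ⟨z.2, fun _ => hz⟩
    · exact ⟨⊥, fun h => absurd h hu⟩
  choose v hv using hpoint
  have hhalf (u : U) :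
      2 * #{a | balance i f (a ∆ v u) = false} ≤ Fintype.card (κ → Bool) := by
    simp only [symmDiff_comm _ (v u), two_mul_card_balance_symmDiff_eq_false]
    simp
  refine le_trans ?_ (two_pow_card_mul_card_filter_le (S := Z.image Prod.fst) fun u _ => hhalf u)
  gcongr 2 ^ _ * #?_
  exact monotone_filter_right _ fun g _ hg u hu => mem_filter.2 ⟨mem_univ _, hg _ (hv u hu)⟩

/-- A set of `θ ^ 2` points has `θ` points in one row, where the randomness of `f` is used, or it
meets `θ` rows, where the independent values of `g` are used. -/
theorem two_pow_mul_card_balance_le {U : Type*} [Fintype U] [DecidableEq U] (i : κ) {θ : ℕ}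
    {Z : Finset (U × (κ → Bool))} (hZ : θ * θ ≤ #Z) :
    2 ^ θ * #{p : ((κ → Bool) → Bool) × (U → κ → Bool) |
        ∀ z ∈ Z, balance i p.1 (p.2 z.1 ∆ z.2) = false} ≤
      Fintype.card (((κ → Bool) → Bool) × (U → κ → Bool)) := by
  rcases le_card_row_or_le_card_image_fst hZ with ⟨u, hu⟩ | hcol
  · refine mul_card_filter_prod_le_of_right
      (P := fun f (g : U → κ → Bool) => ∀ z ∈ Z, balance i f (g z.1 ∆ z.2) = false)
      fun g => le_trans ?_ (two_pow_card_mul_card_balance_row_le i (g u) {v | (u, v) ∈ Z})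
    exact Nat.mul_le_mul (Nat.pow_le_pow_right two_pos hu) <| card_le_card <|
      monotone_filter_right _ fun f _ hf v hv => hf (u, v) (mem_filter.1 hv).2
  · refine mul_card_filter_prod_le_of_left
      (P := fun f (g : U → κ → Bool) => ∀ z ∈ Z, balance i f (g z.1 ∆ z.2) = false)
      fun f => le_trans ?_ (two_pow_card_mul_card_balance_column_le i f Z)
    gcongr
    norm_num

theorem two_pow_le_card_of_forall_exists_cover {U : Type*} [Fintype U] [Nonempty U] (i : κ)
    {θ k : ℕ} (hk : 2 * (k * (θ * θ)) ≤ Fintype.card U * 2 ^ Fintype.card κ)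
    {𝒵 : Finset (Finset (U × (κ → Bool)))}
    (h : ∀ (f : (κ → Bool) → Bool) (g : U → κ → Bool), ∃ Zs : Fin k → Finset (U × (κ → Bool)),
      (∀ j, Zs j ∈ 𝒵) ∧ ∀ z, balance i f (g z.1 ∆ z.2) = false ↔ ∃ j, z ∈ Zs j) :
    2 ^ θ ≤ #𝒵 := by
  classical
  set Ω := ((κ → Bool) → Bool) × (U → κ → Bool)
  let event (Z : Finset (U × (κ → Bool))) : Finset Ω :=
    {p | ∀ z ∈ Z, balance i p.1 (p.2 z.1 ∆ z.2) = false}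
  have hcover : univ ⊆ (𝒵.filter fun Z => θ * θ ≤ #Z).biUnion event := fun ⟨f, g⟩ _ => by
    obtain ⟨Zs, hmem, hzero⟩ := h f g
    have hcard := two_mul_card_zeros_eq i f g
    have hpos : 0 < Fintype.card U * 2 ^ Fintype.card κ := by positivity
    obtain ⟨j, hj⟩ := exists_le_card_of_subset_biUnion (Zs := Zs) (t := θ * θ)
      (T := {z | balance i f (g z.1 ∆ z.2) = false}) (card_pos.1 (by omega)) (by omega)
      fun z hz => by simpa using (hzero z).1 (by simpa using hz)
    exact mem_biUnion.2 ⟨Zs j, mem_filter.2 ⟨hmem j, hj⟩,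
      mem_filter.2 ⟨mem_univ _, fun z hz => (hzero z).2 ⟨j, hz⟩⟩⟩
  refine Nat.le_of_mul_le_mul_right ?_ (Fintype.card_pos (α := Ω))
  calc 2 ^ θ * Fintype.card Ω ≤ 2 ^ θ * ∑ Z ∈ 𝒵 with θ * θ ≤ #Z, #(event Z) :=
        Nat.mul_le_mul_left _ ((card_le_card hcover).trans card_biUnion_le)
    _ ≤ ∑ Z ∈ 𝒵 with θ * θ ≤ #Z, Fintype.card Ω := by
        rw [mul_sum]
        exact sum_le_sum fun Z hZ => two_pow_mul_card_balance_le i (mem_filter.1 hZ).2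
    _ ≤ #𝒵 * Fintype.card Ω := by
        rw [sum_const, smul_eq_mul]
        exact Nat.mul_le_mul_right _ (card_filter_le _ _)

end Counting

section DeMorgan

theorem exists_dmf_eval_eq_of_dependsOn {ι : Type} [Nonempty ι] (S : Finset ι) :
    ∀ h : (ι → Bool) → Bool, DependsOn h S → ∃ φ : DMF ι, φ.eval = h := by
  classical
  induction S using Finset.induction_on with
  | empty =>
    intro h hh
    obtain ⟨i⟩ := ‹Nonempty ι›
    have hconst (x : ι → Bool) : h x = h fun _ => false := hh (by simp)
    cases hc : h fun _ => false
    · exact ⟨.and (.leaf i true) (.leaf i false), funext fun x => by simp [DMF.eval, hconst x, hc]⟩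
    · exact ⟨.or (.leaf i true) (.leaf i false), funext fun x => by simp [DMF.eval, hconst x, hc]⟩
  | insert i S _ ih =>
    intro h hh
    have hupdate (b : Bool) : DependsOn (fun x => h (Function.update x i b)) S :=
      fun x y hxy => hh fun j hj => by
        rcases eq_or_ne j i with rfl | hji
        · simp
        · simpa [hji] using hxy j (by simpa [hji] using hj)
    obtain ⟨φ₁, hφ₁⟩ := ih _ (hupdate true)
    obtain ⟨φ₀, hφ₀⟩ := ih _ (hupdate false)
    refine ⟨.or (.and (.leaf i true) φ₁) (.and (.leaf i false) φ₀), funext fun x => ?_⟩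
    have hx : h (Function.update x i (x i)) = h x := by rw [Function.update_eq_self]
    cases hxi : x i <;> rw [hxi] at hx <;> simp [DMF.eval, hφ₁, hφ₀, hxi, hx]

theorem exists_dmf_eval_eq {ι : Type} [Finite ι] [Nonempty ι] (h : (ι → Bool) → Bool) :
    ∃ φ : DMF ι, φ.eval = h := by
  cases nonempty_fintype ι
  exact exists_dmf_eval_eq_of_dependsOn univ h (by simpa using dependsOn_univ h)

namespace NandFormula

variable {ι : Type} {κ : Type*} (σ : ι → NandFormula κ)

/-- The NAND formula obtained from a De Morgan formula by substituting `σ i` for the variable `i`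
and expressing every connective in terms of NAND. -/
def ofDMF : DMF ι → NandFormula κ
  | .leaf i b => if b then σ i else nand (σ i) (const true)
  | .and φ ψ => nand (nand (ofDMF φ) (ofDMF ψ)) (const true)
  | .or φ ψ => nand (nand (ofDMF φ) (const true)) (nand (ofDMF ψ) (const true))

theorem eval_ofDMF (φ : DMF ι) (x : κ → Bool) :
    (ofDMF σ φ).eval x = φ.eval fun i => (σ i).eval x := by
  induction φ with
  | leaf i b => cases b <;> simp [ofDMF, eval, DMF.eval]
  | and φ ψ ihφ ihψ => simp [ofDMF, eval, DMF.eval, ihφ, ihψ]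
  | or φ ψ ihφ ihψ => simp [ofDMF, eval, DMF.eval, ihφ, ihψ]

variable {σ}

theorem size_ofDMF_le (hσ : ∀ i, (σ i).size ≤ 1) (φ : DMF ι) : (ofDMF σ φ).size ≤ φ.size := by
  induction φ with
  | leaf i b => cases b <;> simpa [ofDMF, size, DMF.size] using hσ i
  | and φ ψ ihφ ihψ => simpa [ofDMF, size, DMF.size] using add_le_add ihφ ihψ
  | or φ ψ ihφ ihψ => simpa [ofDMF, size, DMF.size] using add_le_add ihφ ihψ

theorem exists_size_le_Lc [Finite ι] (hσ : ∀ i, (σ i).size ≤ 1) (h : (ι → Bool) → Bool) :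
    ∃ φ : NandFormula κ, (∀ x, φ.eval x = h fun i => (σ i).eval x) ∧ φ.size ≤ Lc h := by
  rw [Lc]
  split_ifs with hconst
  · obtain ⟨c, hc⟩ := hconst
    exact ⟨const c, fun x => (hc _).symm, le_rfl⟩
  · have hι : Nonempty ι := by
      by_contra hι
      rw [not_nonempty_iff] at hι
      exact hconst ⟨h default, fun x => by rw [Subsingleton.elim x default]⟩
    obtain ⟨φ, hφ⟩ := exists_dmf_eval_eq h
    obtain ⟨ψ, hsize, heval⟩ := Nat.sInf_mem (⟨φ.size, φ, rfl, congrFun hφ⟩ :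
      {s | ∃ φ : DMF ι, φ.size = s ∧ ∀ x, φ.eval x = h x}.Nonempty)
    exact ⟨ofDMF σ ψ, fun x => by rw [eval_ofDMF, heval], (size_ofDMF_le hσ ψ).trans hsize.le⟩

end NandFormula

end DeMorgan

section Pieces

variable {κ : Type*} [Fintype κ] [DecidableEq κ]

open Classical in
/-- The Boolean functions computed by postfix words of length `l` in the NAND operation, with
functions of degree less than `d` as operands. -/
noncomputable def nandCombinations (κ : Type*) [Fintype κ] [DecidableEq κ] (d l : ℕ) :
    Finset ((κ → Bool) → Bool) :=
  postfixValues (fun P Q y => !(P y && Q y)) {P | DegreeLT d P} l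

theorem card_nandCombinations_le (d l : ℕ) :
    #(nandCombinations κ d l) ≤ (2 ^ (Fintype.card κ + 1) ^ d + 1) ^ l :=
  (card_postfixValues_le _ _ l).trans
    (Nat.pow_le_pow_left (Nat.add_le_add_right (card_degreeLT_le d) 1) l)

theorem exists_restrictPoint_mem_nandCombinations {γ : Type*} [Fintype γ] [DecidableEq γ]
    [Nonempty γ] {D q k l : ℕ} {t : ℝ} (hD : 0 < D) (ht : 1 ≤ t)
    {φ : Fin k → NandFormula (κ × γ)} (hdepth : ∀ i, (φ i).depth ≤ D)
    (hlength : ∀ i, ((φ i).toPostfix t).length ≤ l)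
    (hcard : (k * l : ℝ) * (2 ^ Fintype.card κ * 4 ^ q * (momentConst D q * √t ^ q) ^ 2) <
      (Fintype.card γ : ℝ) ^ (2 * q)) :
    ∃ (J : κ → γ) (x : κ × γ → Bool), ∀ i,
      (fun y => (φ i).eval (restrictPoint J x y)) ∈ nandCombinations κ (2 * q) l := by
  classical
  let operands (i : Fin k) : List (NandFormula (κ × γ)) := ((φ i).toPostfix t).reduceOption
  let S := univ.biUnion fun i => ((operands i).map NandFormula.eval).toFinset
  have hS : (#S : ℝ) ≤ k * l := by
    have h : #S ≤ #(univ : Finset (Fin k)) * l := card_biUnion_le_card_mul _ _ _ fun i _ =>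
      (List.toFinset_card_le _).trans <| by
        simpa using (List.reduceOption_length_le _).trans (hlength i)
    rw [card_fin] at h
    exact_mod_cast h
  have hmoment : ∀ ψ ∈ S,
      ‖(ad (laplacian (κ × γ)))^[q] (boolDiagonal ψ)‖ ≤ momentConst D q * √t ^ q := fun ψ hψ => by
    obtain ⟨i, -, hi⟩ := mem_biUnion.1 hψ
    obtain ⟨χ, hχ, rfl⟩ := List.mem_map.1 (List.mem_toFinset.1 hi)
    obtain ⟨hsize, hχdepth⟩ := NandFormula.size_le_and_depth_le_of_mem_toPostfix ht
      (List.reduceOption_mem_iff.1 hχ)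
    refine (norm_iterate_ad_laplacian_formula_le hD q (hχdepth.trans (hdepth i)) le_rfl).trans ?_
    have := zero_le_one.trans (one_le_momentConst hD q)
    gcongr
  obtain ⟨J, x, hJx⟩ := exists_forall_degreeLT_restrictPoint hmoment
    (lt_of_le_of_lt (by gcongr) hcard)
  refine ⟨J, x, fun i => NandFormula.mem_postfixValues_of_toPostfix
    (val := fun φ y => φ.eval (restrictPoint J x y)) (fun _ _ => rfl) (hlength i)
    fun χ hχ => mem_filter.2 ⟨mem_univ _, hJx _ (mem_biUnion.2 ⟨i, mem_univ _, ?_⟩)⟩⟩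
  exact List.mem_toFinset.2 (List.mem_map_of_mem (List.reduceOption_mem_iff.2 hχ))

end Pieces

section Andreev

theorem parity_flipAt {n : ℕ} (j : Fin n) (x : Fin n → Bool) :
    parity (flipAt j x) = !parity x := by
  have hcount (y : Fin n → Bool) :
      #{i | y i} = (if y j then 1 else 0) + ∑ i ∈ univ.erase j, if y i then 1 else 0 := by
    rw [card_filter, ← add_sum_erase _ _ (mem_univ j)]
  have hrest : (∑ i ∈ univ.erase j, if flipAt j x i then 1 else 0) =
      ∑ i ∈ univ.erase j, if x i then 1 else 0 :=
    sum_congr rfl fun i hi => by rw [flipAt_of_ne (ne_of_mem_erase hi)]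
  rw [parity, parity, hcount, hcount x, hrest, flipAt_self, ← decide_not]
  cases x j <;> simp only [decide_eq_decide] <;> grind

theorem parity_restrictPoint {κ : Type*} {n : ℕ} (J : κ → Fin n) (x : κ × Fin n → Bool)
    (y : κ → Bool) (r : κ) :
    parity (fun j => restrictPoint J x y (r, j)) = xor (parity fun j => x (r, j)) (y r) := by
  cases hy : y r
  · simp [restrictPoint, hy]
  · have hflip : (fun j => restrictPoint J x y (r, j)) = flipAt (J r) fun j => x (r, j) := by
      funext j
      rcases eq_or_ne j (J r) with rfl | hj
      · simp [restrictPoint, hy, flipAt_self]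
      · simp [restrictPoint, flipAt_of_ne hj, hj]
    rw [hflip, parity_flipAt, Bool.xor_true]

theorem tabIdx_injective {m : ℕ} : Function.Injective (tabIdx (m := m)) := fun _ _ h =>
  funext fun i => finTwoEquiv.symm.injective (congrFun (finFunctionFinEquiv.injective h) i)

variable {m : ℕ}

/-- The substitution that fixes the two truth tables in the input of the Andreev function to those
of `f` and `g`. -/
noncomputable def tableSubst (f : (Fin m → Bool) → Bool) (g : (Fin m → Bool) → Fin m → Bool) :
    AndrIdx m → NandFormula (Fin (m + m) × Fin (2 ^ m))
  | .inl a => .const (f (Function.invFun tabIdx a))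
  | .inr (.inl (a, j)) => .const (g (Function.invFun tabIdx a) j)
  | .inr (.inr p) => .var p

theorem size_tableSubst_le (f : (Fin m → Bool) → Bool) (g : (Fin m → Bool) → Fin m → Bool)
    (a : AndrIdx m) : (tableSubst f g a).size ≤ 1 := by
  rcases a with a | ⟨a, j⟩ | p <;> simp [tableSubst, NandFormula.size]

theorem andr_tableSubst (f : (Fin m → Bool) → Bool) (g : (Fin m → Bool) → Fin m → Bool)
    {x : Fin (m + m) × Fin (2 ^ m) → Bool} {u v : Fin m → Bool}
    (hx : ∀ r, parity (fun j => x (r, j)) = Fin.append u v r) :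
    Andr m (fun a => (tableSubst f g a).eval x) = f (g u ∆ v) := by
  have hinv (w : Fin m → Bool) : Function.invFun tabIdx (tabIdx w) = w :=
    Function.leftInverse_invFun tabIdx_injective w
  simp only [Andr, tableSubst, NandFormula.eval, hinv, hx, Fin.append_left, Fin.append_right]
  exact congrArg f (funext fun j => (Bool.symmDiff_eq_xor _ _).symm)

/-- The zero set of the translate of `C` by `w`, as a set of pairs of points of the `m`-cube. -/
def shiftedZeros (C : (Fin (m + m) → Bool) → Bool) (w : Fin (m + m) → Bool) :
    Finset ((Fin m → Bool) × (Fin m → Bool)) :=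
  {p | C (Fin.append p.1 p.2 ∆ w) = false}

theorem exists_shiftedZeros_cover {k : ℕ} {h : Fin k → (AndrIdx m → Bool) → Bool}
    (hAnd : ∀ z, Andr m z = true ↔ ∀ i, h i z = true) {f : (Fin m → Bool) → Bool}
    {g : (Fin m → Bool) → Fin m → Bool} {φ : Fin k → NandFormula (Fin (m + m) × Fin (2 ^ m))}
    (hφ : ∀ i x, (φ i).eval x = h i fun a => (tableSubst f g a).eval x)
    (J : Fin (m + m) → Fin (2 ^ m)) (x : Fin (m + m) × Fin (2 ^ m) → Bool)
    (z : (Fin m → Bool) × (Fin m → Bool)) :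
    f (g z.1 ∆ z.2) = false ↔ ∃ i, z ∈ shiftedZeros (fun y => (φ i).eval (restrictPoint J x y))
      fun r => parity fun j => x (r, j) := by
  set w : Fin (m + m) → Bool := fun r => parity fun j => x (r, j)
  have hparity (r : Fin (m + m)) :
      parity (fun j => restrictPoint J x (Fin.append z.1 z.2 ∆ w) (r, j)) =
        Fin.append z.1 z.2 r := by
    rw [parity_restrictPoint, Pi.symmDiff_apply, Bool.symmDiff_eq_xor, Bool.xor_comm,
      Bool.xor_assoc, Bool.xor_self, Bool.xor_false]
  have hfalse := not_congr (hAnd fun a =>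
    (tableSubst f g a).eval (restrictPoint J x (Fin.append z.1 z.2 ∆ w)))
  rw [andr_tableSubst f g hparity] at hfalse
  simpa [← hφ, shiftedZeros] using hfalse

theorem two_pow_le_of_andr_eq_and (hm : 0 < m) {D q k l θ : ℕ} {t : ℝ} (hD : 0 < D) (ht : 1 ≤ t)
    {h : Fin k → (AndrIdx m → Bool) → Bool} (hAnd : ∀ z, Andr m z = true ↔ ∀ i, h i z = true)
    (hformula : ∀ f g i, ∃ φ : NandFormula (Fin (m + m) × Fin (2 ^ m)),
      (∀ x, φ.eval x = h i fun a => (tableSubst f g a).eval x) ∧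
        φ.depth ≤ D ∧ (φ.toPostfix t).length ≤ l)
    (hcard : (k * l : ℝ) * (2 ^ (m + m) * 4 ^ q * (momentConst D q * √t ^ q) ^ 2) <
      (2 ^ m : ℝ) ^ (2 * q))
    (hθ : 2 * (k * (θ * θ)) ≤ 2 ^ m * 2 ^ m) :
    2 ^ θ ≤ (2 ^ (m + m + 1) ^ (2 * q) + 1) ^ l * 2 ^ (m + m) := by
  classical
  let 𝒵 := (nandCombinations (Fin (m + m)) (2 * q) l ×ˢ univ).image fun p => shiftedZeros p.1 p.2
  have h𝒵 : #𝒵 ≤ (2 ^ (m + m + 1) ^ (2 * q) + 1) ^ l * 2 ^ (m + m) := by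
    refine card_image_le.trans ?_
    rw [card_product]
    simpa using Nat.mul_le_mul_right (2 ^ (m + m))
      (card_nandCombinations_le (κ := Fin (m + m)) (2 * q) l)
  refine (two_pow_le_card_of_forall_exists_cover (⟨0, hm⟩ : Fin m) (k := k) (by simpa using hθ)
    fun f g => ?_).trans h𝒵
  choose φ hφ hdepth hlength using hformula (balance ⟨0, hm⟩ f) g
  obtain ⟨J, x, hJx⟩ :=
    exists_restrictPoint_mem_nandCombinations hD ht hdepth hlength (by simpa using hcard)
  exact ⟨_, fun i => mem_image.2 ⟨(_, _), mem_product.2 ⟨hJx i, mem_univ _⟩, rfl⟩,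
    exists_shiftedZeros_cover hAnd hφ J x⟩

end Andreev

section Growth

open Polynomial

theorem eventually_eval_lt_two_pow_rpow (P : ℝ[X]) {ε : ℝ} (hε : 0 < ε) :
    ∀ᶠ m : ℕ in atTop, P.eval (m : ℝ) < ((2 : ℝ) ^ m) ^ ε := by
  have hlog : 0 < ε * Real.log 2 := mul_pos hε (Real.log_pos one_lt_two)
  have hlim := ((P.comp (C (ε * Real.log 2)⁻¹ * X)).tendsto_div_exp_atTop.comp
    (tendsto_natCast_atTop_atTop.const_mul_atTop hlog)).eventually (gt_mem_nhds zero_lt_one)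
  filter_upwards [hlim] with m hm
  rw [Function.comp_apply, div_lt_one (Real.exp_pos _)] at hm
  rw [Real.rpow_def_of_pos (by positivity), Real.log_pow]
  rw [eval_comp, eval_mul, eval_C, eval_X, inv_mul_cancel_left₀ hlog.ne'] at hm
  rwa [mul_comm _ ε, ← mul_assoc, mul_right_comm]

theorem eventually_mul_momentConst_sq_lt_two_pow (c q : ℕ) :
    ∀ᶠ m : ℕ in atTop,
      (1 + 4 * (c * m : ℕ)) * 4 ^ q * momentConst (c * m) q ^ 2 < (2 : ℝ) ^ m := by
  obtain ⟨e, he⟩ := exists_momentConst_eq_mul_pow q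
  filter_upwards [eventually_eval_lt_two_pow_rpow (ε := 1)
    ((1 + 4 * (C (c : ℝ) * X)) * 4 ^ q * (C (momentConst 1 q) * (C (c : ℝ) * X) ^ e) ^ 2)
    one_pos] with m hm
  rw [he]
  simpa only [eval_mul, eval_add, eval_pow, eval_one, eval_ofNat, eval_C, eval_X,
    Nat.cast_mul, Real.rpow_one] using hm

theorem eventually_two_mul_le_two_pow_rpow (c q : ℕ) {ε : ℝ} (hε : 0 < ε) :
    ∀ᶠ m : ℕ in atTop,
      2 * ((((m + m + 1) ^ (2 * q) : ℕ) + 1) * (1 + 4 * (c * m : ℕ)) + (m + m : ℕ) + 1) ≤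
        ((2 : ℝ) ^ m) ^ ε := by
  filter_upwards [eventually_eval_lt_two_pow_rpow
    (2 * (((X + X + 1) ^ (2 * q) + 1) * (1 + 4 * (C (c : ℝ) * X)) + (X + X) + 1)) hε] with m hm
  simpa using hm.le

end Growth

section Estimates

variable {N : ℝ}

theorem exists_length_toPostfix_le_floor {ι : Type} [Finite ι] {κ : Type*}
    {σ : ι → NandFormula κ} (hσ : ∀ i, (σ i).size ≤ 1) {h : (ι → Bool) → Bool} {b δ τ e : ℝ} {D : ℕ}
    (hN : 1 ≤ N) (hδ : 0 ≤ δ) (hL : Lc h ≤ N ^ b)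
    (hbal : ∀ φ : NandFormula κ, φ.size ≤ Lc h → φ.Balanceable δ D) (he : b * (1 + δ) ≤ e + τ) :
    ∃ φ : NandFormula κ, (∀ x, φ.eval x = h fun i => (σ i).eval x) ∧ φ.depth ≤ D ∧
      (φ.toPostfix (N ^ τ)).length ≤ ⌊1 + 4 * D * N ^ e⌋₊ := by
  have hN0 : 0 < N := one_pos.trans_le hN
  obtain ⟨φ, hφ, hφsize⟩ := NandFormula.exists_size_le_Lc hσ h
  obtain ⟨ψ, hψ, hψsize, hψdepth⟩ := hbal φ hφsize
  refine ⟨ψ, fun x => (hψ x).trans (hφ x), hψdepth, Nat.le_floor ?_⟩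
  have hsize : (ψ.size : ℝ) / N ^ τ ≤ N ^ e := by
    rw [div_le_iff₀ (by positivity), ← Real.rpow_add hN0]
    calc (ψ.size : ℝ) ≤ (φ.size : ℝ) ^ (1 + δ) := hψsize
      _ ≤ (N ^ b) ^ (1 + δ) := by
          have : (φ.size : ℝ) ≤ N ^ b := le_trans (by exact_mod_cast hφsize) hL
          gcongr
      _ = N ^ (b * (1 + δ)) := (Real.rpow_mul hN0.le _ _).symm
      _ ≤ N ^ (e + τ) := Real.rpow_le_rpow_of_exponent_le hN he
  refine (NandFormula.length_toPostfix_le (by positivity) ψ).trans ?_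
  gcongr

theorem mul_moment_lt_pow {α e τ c M k l : ℝ} {q : ℕ} (hN : 1 ≤ N) (hc : 0 ≤ c) (hl0 : 0 ≤ l)
    (hk : k ≤ N ^ α) (hl : l ≤ c * N ^ e) (hαe : α + e ≤ 2) (hτ : q * τ + 5 ≤ 2 * q)
    (hM : c * 4 ^ q * M ^ 2 < N) :
    k * l * (N * N * 4 ^ q * (M * √(N ^ τ) ^ q) ^ 2) < N ^ (2 * q) := by
  have hN0 : 0 < N := one_pos.trans_le hN
  have hkl : k * l ≤ c * N ^ 2 :=
    calc k * l ≤ N ^ α * (c * N ^ e) := by gcongr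
      _ = c * N ^ (α + e) := by rw [Real.rpow_add hN0]; ring
      _ ≤ c * N ^ (2 : ℝ) := by gcongr
      _ = c * N ^ 2 := by rw [Real.rpow_two]
  have hsqrt : (√(N ^ τ) ^ q) ^ 2 = N ^ (q * τ) := by
    rw [← pow_mul, mul_comm q 2, pow_mul, Real.sq_sqrt (by positivity), ← Real.rpow_mul_natCast
      hN0.le, mul_comm]
  calc k * l * (N * N * 4 ^ q * (M * √(N ^ τ) ^ q) ^ 2)
      = k * l * (N ^ 2 * 4 ^ q * M ^ 2 * N ^ (q * τ)) := by rw [mul_pow M, hsqrt]; ring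
    _ ≤ c * N ^ 2 * (N ^ 2 * 4 ^ q * M ^ 2 * N ^ (q * τ)) := by gcongr
    _ = c * 4 ^ q * M ^ 2 * (N ^ 4 * N ^ (q * τ)) := by ring
    _ < N * (N ^ 4 * N ^ (q * τ)) := by gcongr
    _ = N ^ (q * τ + (5 : ℕ)) := by rw [Real.rpow_add_natCast hN0.ne']; ring
    _ ≤ N ^ ((2 * q : ℕ) : ℝ) := Real.rpow_le_rpow_of_exponent_le hN (by exact_mod_cast hτ)
    _ = N ^ (2 * q) := Real.rpow_natCast _ _

theorem two_pow_add_one_pow_mul_lt {A B l θ : ℕ} {c x y : ℝ} (hx : 1 ≤ x) (hl : l ≤ c * x)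
    (hθ : x * y / 2 < θ + 1) (hy : 2 * ((A + 1) * c + B + 1) ≤ y) :
    (2 ^ A + 1) ^ l * 2 ^ B < 2 ^ θ := by
  have hexp : (A + 1) * l + B < θ := by
    have h : ((A + 1) * l + B + 1 : ℝ) < θ + 1 :=
      calc ((A + 1) * l + B + 1 : ℝ) ≤ (A + 1) * (c * x) + (B + 1) * x := by
            rw [add_assoc]; gcongr; exact le_mul_of_one_le_right (by positivity) hx
        _ = x * (2 * ((A + 1) * c + B + 1)) / 2 := by ring
        _ ≤ x * y / 2 := by gcongr
        _ < θ + 1 := hθ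
    exact_mod_cast lt_of_add_lt_add_right h
  calc (2 ^ A + 1) ^ l * 2 ^ B ≤ (2 ^ (A + 1)) ^ l * 2 ^ B := by
        gcongr
        rw [pow_succ, mul_two]
        gcongr
        exact Nat.one_le_two_pow
    _ = 2 ^ ((A + 1) * l + B) := by rw [pow_add 2 (_ * l), pow_mul]
    _ < 2 ^ θ := Nat.pow_lt_pow_right one_lt_two hexp

theorem two_mul_mul_floor_sq_le {α k : ℝ} (hN : 0 < N) (hk : k ≤ N ^ α) :
    2 * (k * (⌊N ^ (1 - α / 2) / 2⌋₊ * ⌊N ^ (1 - α / 2) / 2⌋₊)) ≤ N * N := by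
  have hfloor : (⌊N ^ (1 - α / 2) / 2⌋₊ : ℝ) ≤ N ^ (1 - α / 2) / 2 :=
    Nat.floor_le (by positivity)
  calc 2 * (k * (⌊N ^ (1 - α / 2) / 2⌋₊ * ⌊N ^ (1 - α / 2) / 2⌋₊))
      ≤ 2 * (N ^ α * ((N ^ (1 - α / 2) / 2) * (N ^ (1 - α / 2) / 2))) := by gcongr
    _ = N ^ (α + (1 - α / 2) + (1 - α / 2)) / 2 := by
        rw [Real.rpow_add hN, Real.rpow_add hN]; ring
    _ = N * N / 2 := by rw [show α + (1 - α / 2) + (1 - α / 2) = 2 by ring, Real.rpow_two, sq]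
    _ ≤ N * N := half_le_self (by positivity)

end Estimates

theorem not_andr_eq_and {m D q k : ℕ} (hm : 0 < m) (hD : 0 < D) {α b γ : ℝ}
    (hα : 0 ≤ α) (hγ : 0 < γ) (hb : 2 ≤ b) (hb3 : b ≤ 3) (hbγ : b + γ = 3 - α / 2) (hq : 20 ≤ q * γ)
    (hbal : ∀ φ : NandFormula (Fin (m + m) × Fin (2 ^ m)), φ.size ≤ (2 ^ m) ^ 3 →
      φ.Balanceable (γ / 12) D)
    (hmoment : (1 + 4 * D) * 4 ^ q * momentConst D q ^ 2 < (2 : ℝ) ^ m)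
    (hcount : 2 * ((((m + m + 1) ^ (2 * q) : ℕ) + 1) * (1 + 4 * D) + (m + m : ℕ) + 1) ≤
      ((2 : ℝ) ^ m) ^ (γ / 2))
    {h : Fin k → (AndrIdx m → Bool) → Bool} (hk : k ≤ ((2 : ℝ) ^ m) ^ α)
    (hL : ∀ i, Lc (h i) ≤ ((2 : ℝ) ^ m) ^ b) :
    ¬ ∀ z, Andr m z = true ↔ ∀ i, h i z = true := fun hAnd => by
  set N : ℝ := 2 ^ m with hNdef
  have hN : 1 ≤ N := one_le_pow₀ one_le_two
  have hN0 : 0 < N := one_pos.trans_le hN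
  set e := 1 - α / 2 - γ / 2 with he
  have hNe : 1 ≤ N ^ e := Real.one_le_rpow hN (by linarith)
  have hl : (⌊1 + 4 * D * N ^ e⌋₊ : ℝ) ≤ (1 + 4 * D) * N ^ e :=
    (Nat.floor_le (by positivity)).trans (by linarith)
  have hLc (i : Fin k) : Lc (h i) ≤ (2 ^ m) ^ 3 := by
    have hcube := (hL i).trans (Real.rpow_le_rpow_of_exponent_le hN hb3)
    rw [hNdef] at hcube
    exact_mod_cast hcube
  refine (two_pow_add_one_pow_mul_lt hNe hl ?_ hcount).not_ge
    (two_pow_le_of_andr_eq_and (t := N ^ (2 - γ / 4)) (q := q) (θ := ⌊N ^ (1 - α / 2) / 2⌋₊) hm hD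
      (Real.one_le_rpow hN (by linarith)) hAnd (fun f g i => ?_) ?_ ?_)
  · rw [← Real.rpow_add hN0, he, sub_add_cancel]
    exact Nat.lt_floor_add_one _
  · exact exists_length_toPostfix_le_floor (size_tableSubst_le f g) hN (by positivity) (hL i)
      (fun φ hφ => hbal φ (hφ.trans (hLc i))) (by nlinarith)
  · rw [pow_add, ← hNdef]
    exact mul_moment_lt_pow hN (by positivity) (by positivity) hk hl (by linarith) (by linarith)
      hmoment
  · have hfloor := two_mul_mul_floor_sq_le hN0 hk
    rw [hNdef] at hfloor ⊢
    exact_mod_cast hfloor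

end AndreevBound

/-- Theorem 4.2, first part: for constants `0 < α < 2` and
`β < 3 - α/2`, for all large `m` (with `n = 2^m`), the modified Andreev
function is not the pointwise AND of at most `n^α` functions each of formula
complexity at most `n^β`. -/
theorem andreev_not_and_of_formulas (α β : ℝ) (hα0 : 0 < α) (hα2 : α < 2)
    (hβ : β < 3 - α / 2) :
    ∃ m₀ : ℕ, ∀ m ≥ m₀,
      ¬ ∃ (k : ℕ) (h : Fin k → (AndrIdx m → Bool) → Bool),
          (k : ℝ) ≤ ((2 : ℝ) ^ m) ^ α ∧
          (∀ i, (Lc (h i) : ℝ) ≤ ((2 : ℝ) ^ m) ^ β) ∧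
          (∀ z : AndrIdx m → Bool, (Andr m z = true ↔ ∀ i, h i z = true)) := by
  obtain ⟨b, hβb, hb, hbα⟩ : ∃ b, β ≤ b ∧ 2 ≤ b ∧ b < 3 - α / 2 :=
    ⟨max β 2, le_max_left _ _, le_max_right _ _, max_lt hβ (by linarith)⟩
  obtain ⟨γ, hγ, hbγ⟩ : ∃ γ, 0 < γ ∧ b + γ = 3 - α / 2 :=
    ⟨3 - α / 2 - b, sub_pos.2 hbα, add_sub_cancel _ _⟩
  obtain ⟨q, hq⟩ := exists_nat_ge (20 / γ)
  rw [div_le_iff₀ hγ] at hq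
  obtain ⟨c, hc, hbal⟩ :=
    AndreevBound.NandFormula.exists_forall_balanceable (δ := γ / 12) (by positivity) 3
  obtain ⟨m₀, hm₀⟩ := Filter.eventually_atTop.1 <|
    (AndreevBound.eventually_mul_momentConst_sq_lt_two_pow c q).and <|
      (AndreevBound.eventually_two_mul_le_two_pow_rpow c q (half_pos hγ)).and <|
        Filter.eventually_gt_atTop 0
  refine ⟨m₀, fun m hm ⟨k, h, hk, hL, hAnd⟩ => ?_⟩
  obtain ⟨hmoment, hcount, hm0⟩ := hm₀ m hm
  exact AndreevBound.not_andr_eq_and hm0 (Nat.mul_pos hc hm0) hα0.le hγ hb (by linarith) hbγ hq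
    (hbal m hm0 _) hmoment hcount hk
    (fun i => (hL i).trans (Real.rpow_le_rpow_of_exponent_le (one_le_pow₀ one_le_two) hβb)) hAnd
end
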